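/- arXiv:2206.08351 — 2 statements merged into one kernel-verified Lean document; each statement's English description precedes it below -/
import Mathlib

section
/- There exists a constant C such that for every real X ≥ 2, the sum over squarefree integers 1 < d ≤ X of (|Cl_{ℚ(√d)}[3]|² + |Cl_{ℚ(√−d)}[3]|²) is at most C · X^{23/18}. -/
open NumberField IntermediateField
open scoped Classical

/-- The order of the `ℓ`-torsion subgroup of the class group of a number field `K`. -/
noncomputable def clTor (K : Type*) [Field K] (ℓ : ℕ) : ℕ :=
  Nat.card {c : ClassGroup (𝓞 K) // c ^ ℓ = 1}

/-- The imaginary quadratic field `ℚ(√-d)`, realized inside `ℂ` as `ℚ(i·√d)`. -/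
noncomputable def Qneg (d : ℕ) : IntermediateField ℚ ℂ :=
  ℚ⟮(Complex.I * (Real.sqrt d : ℂ) : ℂ)⟯

/-- The real quadratic field `ℚ(√d)`, realized inside `ℂ`. -/
noncomputable def Qpos (d : ℕ) : IntermediateField ℚ ℂ :=
  ℚ⟮((Real.sqrt d : ℝ) : ℂ)⟯


open mixedEmbedding InfinitePlace in
lemma mink_skew (K : Type*) [Field K] [NumberField K] (h2 : Module.finrank ℚ K = 2)
    (B : ℝ) (hB0 : 0 < B) (hB : 4 * Real.sqrt |(discr K : ℝ)| < B ^ 2)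
    (I : (nonZeroDivisors (Ideal (𝓞 K)))) (β : K)
    (hβ : |(Algebra.norm ℚ β : ℝ)| = (Ideal.absNorm (I : Ideal (𝓞 K)) : ℝ) ^ 3) :
    ∃ θ ∈ (I : Ideal (𝓞 K)), θ ≠ 0 ∧ ∀ w : InfinitePlace K,
      w (θ : K) < (w β) ^ ((1:ℝ)/3) * B := by
  let f : InfinitePlace K → NNReal := fun w =>
    ⟨(w β) ^ ((1:ℝ)/3) * B, by have := apply_nonneg w β; positivity⟩
  have hNpos : 0 < (Ideal.absNorm (I : Ideal (𝓞 K)) : ℝ) := by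
    have : Ideal.absNorm (I : Ideal (𝓞 K)) ≠ 0 := by
      rw [Ne, Ideal.absNorm_eq_zero_iff]; exact nonZeroDivisors.coe_ne_zero I
    positivity
  have hprod : (∏ w, ((f w : ℝ)) ^ (mult w)) = (Ideal.absNorm (I : Ideal (𝓞 K)) : ℝ) * B ^ 2 := by
    have h1 : ∀ w : InfinitePlace K, (f w : ℝ) ^ (mult w) =
        ((w β) ^ (mult w)) ^ ((1:ℝ)/3) * B ^ (mult w) := by
      intro w
      change ((w β) ^ ((1:ℝ)/3) * B) ^ (mult w) = _
      rw [mul_pow, ← Real.rpow_natCast, ← Real.rpow_natCast (w β), ← Real.rpow_mul (apply_nonneg w β),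
        ← Real.rpow_mul (apply_nonneg w β), mul_comm ((1:ℝ)/3)]
    rw [Finset.prod_congr rfl (fun w _ => h1 w), Finset.prod_mul_distrib, Finset.prod_pow_eq_pow_sum,
      sum_mult_eq, h2, Real.finsetProd_rpow _ _ (fun w _ => by have := apply_nonneg w β; positivity),
      prod_eq_abs_norm]
    push_cast
    rw [hβ, ← Real.rpow_natCast, ← Real.rpow_mul hNpos.le]
    norm_num
  have hlt : minkowskiBound K (FractionalIdeal.mk0 K I) < MeasureTheory.volume (convexBodyLT K f) := by
    rw [convexBodyLT_volume, minkowskiBound, volume_fundamentalDomain_fractionalIdealLatticeBasis,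
      volume_fundamentalDomain_latticeBasis, FractionalIdeal.coe_mk0, FractionalIdeal.coeIdeal_absNorm,
      mixedEmbedding.finrank, h2]
    have hf : (1 : ENNReal) ≤ (convexBodyLTFactor K : ENNReal) := by
      exact_mod_cast one_le_convexBodyLTFactor K
    have hr2 : (2⁻¹ : ENNReal) ^ nrComplexPlaces K ≤ 1 := pow_le_one₀ (by simp) (by simp)
    have key : ENNReal.ofReal (((Ideal.absNorm (I : Ideal (𝓞 K)) : ℚ)) : ℝ) * (NNReal.sqrt ‖discr K‖₊ : ENNReal) * 2 ^ 2
        < (∏ w, f w ^ mult w : NNReal) := by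
      have e1 : (NNReal.sqrt ‖discr K‖₊ : ENNReal) = ENNReal.ofReal (Real.sqrt |(discr K : ℝ)|) := by
        rw [ENNReal.ofReal, ENNReal.coe_inj]
        rw [← Int.norm_eq_abs, ]
        apply NNReal.eq
        rw [Real.coe_toNNReal _ (Real.sqrt_nonneg _)]
        simp
      have e2 : ((∏ w, f w ^ mult w : NNReal) : ENNReal)
          = ENNReal.ofReal ((Ideal.absNorm (I : Ideal (𝓞 K)) : ℝ) * B ^ 2) := by
        rw [← hprod, ENNReal.ofReal, ENNReal.coe_inj]
        apply NNReal.eq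
        rw [Real.coe_toNNReal _ (Finset.prod_nonneg fun w _ => by positivity)]
        push_cast; rfl
      rw [e1, e2, ← ENNReal.ofReal_mul (by positivity)]
      have : (2:ENNReal)^2 = ENNReal.ofReal 4 := by
        norm_num
      rw [this, ← ENNReal.ofReal_mul (by positivity), ENNReal.ofReal_lt_ofReal_iff (by positivity)]
      push_cast
      nlinarith
    calc _ ≤ ENNReal.ofReal (((Ideal.absNorm (I : Ideal (𝓞 K)) : ℚ)) : ℝ) * (1 * (NNReal.sqrt ‖discr K‖₊ : ENNReal)) * 2 ^ 2 := by
          gcongr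
      _ < (∏ w, f w ^ mult w : NNReal) := by rw [one_mul]; exact key
      _ ≤ _ := le_mul_of_one_le_left (by simp) hf
  obtain ⟨a, ha, ha0, hw⟩ := exists_ne_zero_mem_ideal_lt K _ hlt
  rw [FractionalIdeal.coe_mk0, FractionalIdeal.mem_coeIdeal] at ha
  obtain ⟨x, hx, rfl⟩ := ha
  refine ⟨x, hx, ?_, hw⟩
  rintro rfl; simp at ha0

open InfinitePlace in
lemma exists_small_cube (K : Type*) [Field K] [NumberField K] (h2 : Module.finrank ℚ K = 2)
    (B : ℝ) (hB0 : 0 < B) (hB : 4 * Real.sqrt |(discr K : ℝ)| < B ^ 2)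
    (c : ClassGroup (𝓞 K)) (hc : c ^ 3 = 1) :
    ∃ (b : nonZeroDivisors (Ideal (𝓞 K))) (γ : 𝓞 K), ClassGroup.mk0 b = c ∧
      (b : Ideal (𝓞 K)) ^ 3 = Ideal.span {γ} ∧ (∀ w : InfinitePlace K, w (γ : K) ≤ B ^ 3) ∧
      (Ideal.absNorm (b : Ideal (𝓞 K)) : ℝ) ≤ B ^ 2 := by
  obtain ⟨a, ha⟩ := ClassGroup.mk0_surjective (c⁻¹)
  have ha3 : ClassGroup.mk0 (a ^ 3) = 1 := by rw [map_pow, ha, inv_pow, hc, inv_one]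
  obtain ⟨p, hp⟩ : ∃ p : nonZeroDivisors (Ideal (𝓞 K)), p = a ^ 3 := ⟨_, rfl⟩
  rw [← hp] at ha3
  obtain ⟨β, hβ⟩ := (ClassGroup.mk0_eq_one_iff p.2).1 ha3
  have hβ' : (a : Ideal (𝓞 K)) ^ 3 = Ideal.span {β} := by
    rw [← SubmonoidClass.coe_pow, ← hp]; exact hβ
  have hane : (a : Ideal (𝓞 K)) ≠ 0 := nonZeroDivisors.coe_ne_zero a
  have hβ0 : β ≠ 0 := by
    rintro rfl
    have : (a : Ideal (𝓞 K)) ^ 3 = 0 := by rw [hβ']; simp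
    exact pow_ne_zero 3 hane this
  have hnorm : |(Algebra.norm ℚ (β : K) : ℝ)| = (Ideal.absNorm (a : Ideal (𝓞 K)) : ℝ) ^ 3 := by
    have := congrArg Ideal.absNorm hβ'
    rw [map_pow, Ideal.absNorm_span_singleton] at this
    rw [← Algebra.coe_norm_int]
    have h3 : ((Ideal.absNorm (a : Ideal (𝓞 K)) ^ 3 : ℕ) : ℝ) = ((Algebra.norm ℤ β).natAbs : ℕ) := by
      exact_mod_cast this
    push_cast at h3
    rw [h3]
    simp
  obtain ⟨θ, hθ, hθ0, hw⟩ := mink_skew K h2 B hB0 hB a (β : K) hnorm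
  obtain ⟨b, hb⟩ := (Ideal.dvd_span_singleton).2 hθ
  have hb0 : b ≠ 0 := by
    rintro rfl
    rw [mul_zero] at hb
    exact hθ0 (by simpa using hb)
  have hcube : Ideal.span {β} * b ^ 3 = Ideal.span {θ ^ 3} := by
    rw [← hβ', ← mul_pow, ← hb, Ideal.span_singleton_pow]
  have hdvd : β ∣ θ ^ 3 := by
    rw [← Ideal.mem_span_singleton, ← Ideal.dvd_span_singleton, ← hcube]
    exact dvd_mul_right _ _
  obtain ⟨γ, hγ⟩ := hdvd
  have hbg : b ^ 3 = Ideal.span {γ} := by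
    have hne : (Ideal.span {β} : Ideal (𝓞 K)) ≠ 0 := by simpa using hβ0
    apply mul_left_cancel₀ hne
    rw [hcube, hγ, Ideal.span_singleton_mul_span_singleton]
  refine ⟨⟨b, mem_nonZeroDivisors_of_ne_zero hb0⟩, γ, ?_, hbg, ?_, ?_⟩
  · have hθ' : ClassGroup.mk0 (a * ⟨b, mem_nonZeroDivisors_of_ne_zero hb0⟩) = 1 := by
      obtain ⟨q, hq⟩ : ∃ q : nonZeroDivisors (Ideal (𝓞 K)),
          q = a * ⟨b, mem_nonZeroDivisors_of_ne_zero hb0⟩ := ⟨_, rfl⟩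
      rw [← hq]
      refine (ClassGroup.mk0_eq_one_iff q.2).2 ⟨θ, ?_⟩
      rw [hq]
      exact hb.symm
    rw [map_mul, ha] at hθ'
    exact (inv_mul_eq_one.1 hθ').symm
  · intro w
    have hβw : 0 < w (β : K) := by
      rw [InfinitePlace.pos_iff]; simpa using hβ0
    have h1 : w (θ : K) ^ 3 ≤ w (β : K) * B ^ 3 := by
      calc w (θ : K) ^ 3 ≤ ((w (β : K)) ^ ((1:ℝ)/3) * B) ^ 3 := by
            gcongr; exact (hw w).le
        _ = w (β : K) * B ^ 3 := by
            rw [mul_pow, ← Real.rpow_natCast, ← Real.rpow_mul hβw.le]; norm_num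
    have h2 : w (θ : K) ^ 3 = w (β : K) * w (γ : K) := by
      rw [← map_pow, ← map_mul]
      congr 1
      exact_mod_cast congrArg (algebraMap (𝓞 K) K) hγ
    rw [h2] at h1
    exact le_of_mul_le_mul_left h1 hβw
  · have h1 : (Ideal.absNorm (a : Ideal (𝓞 K)) : ℝ) * (Ideal.absNorm b : ℝ) = ∏ w : InfinitePlace K, w (θ : K) ^ mult w := by
      rw [prod_eq_abs_norm, ← Algebra.coe_norm_int]
      have := congrArg Ideal.absNorm hb
      rw [map_mul, Ideal.absNorm_span_singleton] at this
      have h3 : (((Algebra.norm ℤ θ).natAbs : ℕ) : ℝ) = ((Ideal.absNorm (a : Ideal (𝓞 K)) * Ideal.absNorm b : ℕ) : ℝ) := by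
        exact_mod_cast this
      push_cast at h3
      rw [← h3]; simp
    have hNpos : 0 < (Ideal.absNorm (a : Ideal (𝓞 K)) : ℝ) := by
      have : Ideal.absNorm (a : Ideal (𝓞 K)) ≠ 0 := by
        rw [Ne, Ideal.absNorm_eq_zero_iff]; exact hane
      positivity
    have h4 : ∏ w : InfinitePlace K, w (θ : K) ^ mult w ≤ (Ideal.absNorm (a : Ideal (𝓞 K)) : ℝ) * B ^ 2 := by
      have h1 : ∀ w : InfinitePlace K, ((w (β : K)) ^ ((1:ℝ)/3) * B) ^ (mult w) =
          ((w (β : K)) ^ (mult w)) ^ ((1:ℝ)/3) * B ^ (mult w) := by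
        intro w
        rw [mul_pow, ← Real.rpow_natCast, ← Real.rpow_natCast (w (β:K)), ← Real.rpow_mul (apply_nonneg w _),
          ← Real.rpow_mul (apply_nonneg w _), mul_comm ((1:ℝ)/3)]
      calc _ ≤ ∏ w : InfinitePlace K, ((w (β : K)) ^ ((1:ℝ)/3) * B) ^ (mult w) := by
            apply Finset.prod_le_prod
            · intro w _; have := apply_nonneg w (θ : K); positivity
            · intro w _; have := apply_nonneg w (θ : K); gcongr; exact (hw w).le
        _ = _ := by
            rw [Finset.prod_congr rfl (fun w _ => h1 w), Finset.prod_mul_distrib, Finset.prod_pow_eq_pow_sum,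
              sum_mult_eq, h2, Real.finsetProd_rpow _ _ (fun w _ => by have := apply_nonneg w (β : K); positivity),
              prod_eq_abs_norm]
            push_cast
            rw [hnorm, ← Real.rpow_natCast, ← Real.rpow_mul hNpos.le]
            norm_num
    rw [← h1] at h4
    exact le_of_mul_le_mul_left h4 hNpos

lemma quad_minpoly (e : ℤ) (hns : ∀ q : ℚ, q ^ 2 ≠ e) (s : ℂ) (hs : s ^ 2 = e) :
    minpoly ℚ s = Polynomial.X ^ 2 - Polynomial.C (e : ℚ) := by
  have hirr : Irreducible (Polynomial.X ^ 2 - Polynomial.C (e : ℚ)) := by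
    rw [X_pow_sub_C_irreducible_iff_of_prime Nat.prime_two]
    exact hns
  symm
  apply minpoly.eq_of_irreducible_of_monic hirr
  · simp [hs]
  · exact Polynomial.monic_X_pow_sub_C _ (by norm_num)

lemma quad_integral {R : Type*} [CommRing R] (e : ℤ) (s : R) (hs : s ^ 2 = e) : IsIntegral ℤ s := by
  refine ⟨Polynomial.X ^ 2 - Polynomial.C e, Polynomial.monic_X_pow_sub_C _ (by norm_num), ?_⟩
  rw [Polynomial.eval₂_sub, Polynomial.eval₂_C, Polynomial.eval₂_X_pow, hs]
  simp

lemma quad_integralQ (e : ℤ) (s : ℂ) (hs : s ^ 2 = e) : IsIntegral ℚ s :=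
  (quad_integral e s hs).tower_top

lemma quad_numberField (e : ℤ) (s : ℂ) (hs : s ^ 2 = e) : NumberField ℚ⟮s⟯ :=
  { to_charZero := inferInstance
    to_finiteDimensional := by
      have := adjoin.finiteDimensional (quad_integralQ e s hs)
      convert this }

lemma quad_finrank (e : ℤ) (hns : ∀ q : ℚ, q ^ 2 ≠ e) (s : ℂ) (hs : s ^ 2 = e) :
    Module.finrank ℚ ℚ⟮s⟯ = 2 := by
  have : Module.finrank ℚ ℚ⟮s⟯ = 2 := by
    rw [adjoin.finrank (quad_integralQ e s hs), quad_minpoly e hns s hs]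
    exact Polynomial.natDegree_X_pow_sub_C
  convert this

lemma quad_repr (K : Type*) [Field K] [NumberField K] (h2 : Module.finrank ℚ K = 2)
    (e : ℤ) (hns : ∀ q : ℚ, q ^ 2 ≠ e) (g : K) (hg : g ^ 2 = e) (x : K) : ∃ a b : ℚ, x = (a : K) + (b : K) * g := by
  have hli : LinearIndependent ℚ ![(1 : K), g] := by
    rw [LinearIndependent.pair_iff]
    intro p q hpq
    simp only [Rat.smul_def, mul_one] at hpq
    have h1 : ((p ^ 2 : ℚ) : K) = ((q ^ 2 * e : ℚ) : K) := by
      push_cast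
      linear_combination ((p : K) - q * g) * hpq + (q : K)^2 * hg
    have h1' : p ^ 2 = q ^ 2 * e := by exact_mod_cast h1
    by_cases hq : q = 0
    · subst hq
      simp at h1'
      exact ⟨h1', rfl⟩
    · exfalso
      apply hns (p / q)
      rw [div_pow, h1']
      field_simp
  let bs := basisOfLinearIndependentOfCardEqFinrank hli (by simp [h2])
  refine ⟨bs.repr x 0, bs.repr x 1, ?_⟩
  have := bs.sum_repr x
  rw [Fin.sum_univ_two] at this
  have hb0 : bs 0 = 1 := by simp [bs]
  have hb1 : bs 1 = g := by simp [bs]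
  rw [hb0, hb1, Rat.smul_def, Rat.smul_def, mul_one] at this
  exact this.symm

lemma quad_emb (K : Type*) [Field K] [NumberField K] (h2 : Module.finrank ℚ K = 2)
    (e : ℤ) (hns : ∀ q : ℚ, q ^ 2 ≠ e) (g : K) (hg : g ^ 2 = e) : ∃ φ ψ : K →ₐ[ℚ] ℂ, φ ≠ ψ ∧ (Finset.univ : Finset (K →ₐ[ℚ] ℂ)) = {φ, ψ} ∧
    ψ g = - φ g := by
  have hc : (Finset.univ : Finset (K →ₐ[ℚ] ℂ)).card = 2 := by
    rw [Finset.card_univ, AlgHom.card, h2]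
  obtain ⟨φ, ψ, hne, hu⟩ := Finset.card_eq_two.1 hc
  refine ⟨φ, ψ, hne, hu, ?_⟩
  have h1 : (ψ g) ^ 2 = (φ g) ^ 2 := by
    rw [← map_pow, ← map_pow, hg]; simp
  rcases sq_eq_sq_iff_eq_or_eq_neg.1 h1 with h | h
  · exfalso
    apply hne
    ext x
    obtain ⟨a, b, rfl⟩ := quad_repr K h2 e hns g hg x
    simp [h]
  · exact h

lemma quad_norm_trace (K : Type*) [Field K] [NumberField K] (h2 : Module.finrank ℚ K = 2)
    (e : ℤ) (hns : ∀ q : ℚ, q ^ 2 ≠ e) (g : K) (hg : g ^ 2 = e) (a b : ℚ) :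
    Algebra.norm ℚ ((a : K) + (b : K) * g) = a ^ 2 - e * b ^ 2
    ∧ Algebra.trace ℚ K ((a : K) + (b : K) * g) = 2 * a := by
  obtain ⟨φ, ψ, hne, hu, hφ⟩ := quad_emb K h2 e hns g hg
  have hsq : (φ g) ^ 2 = e := by rw [← map_pow, hg]; simp
  constructor
  · have := Algebra.norm_eq_prod_embeddings ℚ ℂ ((a : K) + (b : K) * g)
    rw [hu, Finset.prod_pair hne] at this
    simp only [map_add, map_mul, hφ, eq_ratCast, map_ratCast] at this
    have h3 : ((Algebra.norm ℚ ((a : K) + (b : K) * g) : ℚ) : ℂ) = ((a ^ 2 - e * b ^ 2 : ℚ) : ℂ) := by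
      rw [this]
      push_cast
      linear_combination (-(b:ℂ)^2) * hsq
    exact_mod_cast h3
  · have := trace_eq_sum_embeddings ℂ (K := ℚ) (x := ((a : K) + (b : K) * g))
    rw [hu, Finset.sum_pair hne] at this
    simp only [map_add, map_mul, hφ, eq_ratCast, map_ratCast] at this
    have h3 : ((Algebra.trace ℚ K ((a : K) + (b : K) * g) : ℚ) : ℂ) = ((2 * a : ℚ) : ℂ) := by
      rw [map_add, Rat.cast_add, this]
      push_cast
      ring
    exact_mod_cast h3

lemma quad_discr (K : Type*) [Field K] [NumberField K] (h2 : Module.finrank ℚ K = 2)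
    (e : ℤ) (hns : ∀ q : ℚ, q ^ 2 ≠ e) (g : K) (hg : g ^ 2 = e) : |discr K| ≤ 4 * |e| := by
  have he0 : e ≠ 0 := by rintro rfl; exact hns 0 (by norm_num)
  have hcard : Fintype.card (Module.Free.ChooseBasisIndex ℤ (𝓞 K)) = 2 := by
    rw [← Module.finrank_eq_card_chooseBasisIndex, RingOfIntegers.rank, h2]
  let bs : Module.Basis (Fin 2) ℤ (𝓞 K) :=
    (RingOfIntegers.basis K).reindex (Fintype.equivFinOfCardEq hcard)
  obtain ⟨s', hs'⟩ : ∃ s' : 𝓞 K, (s' : K) = g := ⟨⟨g, quad_integral e g hg⟩, rfl⟩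
  let v : Fin 2 → 𝓞 K := ![1, s']
  have hdet := Algebra.discr_of_matrix_vecMul (A := ℤ) bs (bs.toMatrix v)
  have hv : Matrix.vecMul bs ((bs.toMatrix v).map (algebraMap ℤ (𝓞 K))) = v := by
    ext1 j
    rw [← bs.sum_toMatrix_smul_self v j]
    simp only [Matrix.vecMul, dotProduct, Matrix.map_apply]
    refine Finset.sum_congr rfl fun i _ => ?_
    rw [Algebra.smul_def, mul_comm]
  have hbd := NumberField.discr_eq_discr K bs
  rw [hv] at hdet
  have hdet' : Algebra.discr ℤ v = (bs.toMatrix v).det ^ 2 * discr K := by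
    rw [hdet, ← hbd]
  have htr : ∀ (x : 𝓞 K) (a b : ℚ), (x : K) = (a : K) + (b : K) * g →
      ((Algebra.trace ℤ _ x : ℤ) : ℚ) = 2 * a := by
    intro x a b hx
    rw [Algebra.coe_trace_int, hx, (quad_norm_trace K h2 e hns g hg a b).2]
  have hd : Algebra.discr ℤ v = 4 * e := by
    rw [Algebra.discr_def, Matrix.det_fin_two]
    simp only [Algebra.traceMatrix_apply, Algebra.traceForm_apply, v, Matrix.cons_val_zero, Matrix.cons_val_one]
    have t1 := htr (1 * 1) 1 0 (by simp)
    have t2 := htr (1 * s') 0 1 (by simp [hs'])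
    have t3 := htr (s' * 1) 0 1 (by simp [hs'])
    have t4 := htr (s' * s') e 0 (by
      have : ((s' * s' : 𝓞 K) : K) = g ^ 2 := by
        simp [hs', pow_two]
      rw [this, hg]; simp)
    have : ((Algebra.trace ℤ _ (1 * 1 : 𝓞 K) * Algebra.trace ℤ _ (s' * s') - Algebra.trace ℤ _ (1 * s') * Algebra.trace ℤ _ (s' * 1) : ℤ) : ℚ) = ((4 * e : ℤ) : ℚ) := by
      push_cast
      rw [t1, t2, t3, t4]; ring
    exact_mod_cast this
  rw [hd] at hdet'
  have habs : 4 * |e| = (bs.toMatrix v).det ^ 2 * |discr K| := by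
    have := congrArg abs hdet'
    rwa [abs_mul, abs_mul, abs_pow, sq_abs, show |(4:ℤ)| = 4 by norm_num] at this
  have hne : (bs.toMatrix v).det ≠ 0 := by
    intro h
    rw [h] at habs
    have := abs_pos.2 he0
    simp at habs; omega
  rw [habs]
  have : 1 ≤ (bs.toMatrix v).det ^ 2 := by
    have := sq_pos_of_ne_zero hne
    omega
  nlinarith [abs_nonneg (discr K)]

lemma ideal_cube_inj {R : Type*} [CommRing R] [IsDedekindDomain R] (a b : Ideal R) (h : a ^ 3 = b ^ 3) : a = b := by
  apply dvd_antisymm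
  · exact (UniqueFactorizationMonoid.pow_dvd_pow_iff_dvd (n := 3) (by norm_num)).1 (dvd_of_eq h)
  · exact (UniqueFactorizationMonoid.pow_dvd_pow_iff_dvd (n := 3) (by norm_num)).1 (dvd_of_eq h.symm)

lemma sqf_rat_int (e : ℤ) (hsq : Squarefree e) (v : ℚ) (k : ℤ) (h : (e : ℚ) * v ^ 2 = k) :
    ∃ w : ℤ, v = w := by
  have hden : (v.den : ℚ) ≠ 0 := by exact_mod_cast v.den_nz
  have h1 : (e : ℚ) * v.num ^ 2 = k * v.den ^ 2 := by
    rw [← h]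
    nth_rw 2 [← Rat.num_div_den v]
    field_simp
  have h2 : e * v.num ^ 2 = k * (v.den : ℤ) ^ 2 := by exact_mod_cast h1
  have hcop : IsCoprime ((v.den : ℤ) ^ 2) (v.num ^ 2) := by
    apply IsCoprime.pow
    rw [Int.isCoprime_iff_gcd_eq_one]
    have := v.reduced
    rw [Int.gcd_comm]
    simpa [Int.gcd, Nat.Coprime] using this
  have h3 : (v.den : ℤ) * v.den ∣ e := by
    rw [← pow_two]
    apply hcop.dvd_of_dvd_mul_right
    rw [h2]; exact dvd_mul_left _ _
  have h4 := hsq _ h3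
  have h5 : v.den = 1 := by
    have := Int.isUnit_iff_natAbs_eq.1 h4
    simpa using this
  refine ⟨v.num, ?_⟩
  nth_rw 1 [← Rat.num_div_den v]
  rw [h5]; simp

lemma sq_eq_cube (u m : ℤ) (hm : m ≠ 0) (h : u ^ 2 = 4 * m ^ 3) : ∃ t : ℤ, u = 2 * t ^ 3 := by
  have h2 : (2 : ℤ) ^ 2 ∣ u ^ 2 := ⟨m ^ 3, by rw [h]; ring⟩
  obtain ⟨k, rfl⟩ := (Int.pow_dvd_pow_iff two_ne_zero).1 h2
  have hk : k ^ 2 = m ^ 3 := by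
    have : (4 : ℤ) * k ^ 2 = 4 * m ^ 3 := by rw [← h]; ring
    linarith
  have h3 : m ^ 2 ∣ k ^ 2 := ⟨m, by rw [hk]; ring⟩
  obtain ⟨t, rfl⟩ := (Int.pow_dvd_pow_iff two_ne_zero).1 h3
  have : t ^ 2 = m := by
    have h5 : m ^ 2 * t ^ 2 = m ^ 2 * m := by rw [← mul_pow, hk]; ring
    exact mul_left_cancel₀ (pow_ne_zero 2 hm) h5
  refine ⟨t, ?_⟩
  rw [← this]; ring

lemma quad_triple (K : Type*) [Field K] [NumberField K] (h2 : Module.finrank ℚ K = 2)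
    (e : ℤ) (hns : ∀ q : ℚ, q ^ 2 ≠ e) (g : K) (hg : g ^ 2 = e) (hsq : Squarefree e)
    (B : ℝ) (hB0 : 0 < B) (hB : 4 * Real.sqrt (4 * |(e : ℝ)|) < B ^ 2)
    (c : ClassGroup (𝓞 K)) (hc : c ^ 3 = 1) :
    ∃ (b : nonZeroDivisors (Ideal (𝓞 K))) (γ : 𝓞 K) (m u v : ℤ),
      ClassGroup.mk0 b = c ∧ (b : Ideal (𝓞 K)) ^ 3 = Ideal.span {γ} ∧
      2 * (γ : K) = (u : K) + (v : K) * g ∧ u ^ 2 - 4 * m ^ 3 = e * v ^ 2 ∧ m ≠ 0 ∧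
      |(m : ℝ)| ≤ B ^ 2 ∧ |(u : ℝ)| ≤ 2 * B ^ 3 ∧ |(v : ℝ)| * Real.sqrt |(e : ℝ)| ≤ 2 * B ^ 3 := by
  have hdisc : |(discr K : ℝ)| ≤ 4 * |(e : ℝ)| := by exact_mod_cast quad_discr K h2 e hns g hg
  obtain ⟨b, γ, hb, hb3, hw, hN⟩ := exists_small_cube K h2 B hB0
    (lt_of_le_of_lt (by gcongr) hB) c hc
  obtain ⟨p, q, hpq⟩ := quad_repr K h2 e hns g hg (γ : K)
  obtain ⟨hn, ht⟩ := quad_norm_trace K h2 e hns g hg p q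
  rw [← hpq] at hn ht
  rw [← Algebra.coe_norm_int] at hn
  rw [← Algebra.coe_trace_int] at ht
  set n : ℤ := Algebra.norm ℤ γ with hn'
  set u : ℤ := Algebra.trace ℤ _ γ with hu'
  have hnN : n.natAbs = (Ideal.absNorm (b : Ideal (𝓞 K))) ^ 3 := by
    rw [hn', ← Ideal.absNorm_span_singleton, ← hb3, map_pow]
  set N := Ideal.absNorm (b : Ideal (𝓞 K)) with hNdef
  have hN0 : N ≠ 0 := by
    rw [hNdef, Ne, Ideal.absNorm_eq_zero_iff]
    exact nonZeroDivisors.ne_zero b.2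
  obtain ⟨m, hm, hmN⟩ : ∃ m : ℤ, n = m ^ 3 ∧ m.natAbs = N := by
    rcases Int.natAbs_eq n with h | h
    · exact ⟨N, by rw [h, hnN]; push_cast; rfl, by simp⟩
    · refine ⟨-N, by rw [h, hnN]; push_cast; ring, by simp⟩
  obtain ⟨v, hv⟩ := sqf_rat_int e hsq (2 * q) (u ^ 2 - 4 * n) (by
    push_cast
    rw [hn, ht]; ring)
  obtain ⟨φ, ψ, hne, hun, hψ⟩ := quad_emb K h2 e hns g hg
  have h2γ : 2 * (γ : K) = (u : K) + (v : K) * g := by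
    have e1 : (u : K) = 2 * (p : K) := by
      have := congrArg (fun x : ℚ => (x : K)) ht
      simpa using this
    have e2 : (v : K) = 2 * (q : K) := by
      have := congrArg (fun x : ℚ => (x : K)) hv
      simpa using this.symm
    rw [hpq, e1, e2]; ring
  have hφ1 : ‖φ (γ : K)‖ ≤ B ^ 3 := by
    have := hw (InfinitePlace.mk φ.toRingHom)
    simpa [InfinitePlace.apply] using this
  have hψ1 : ‖ψ (γ : K)‖ ≤ B ^ 3 := by
    have := hw (InfinitePlace.mk ψ.toRingHom)
    simpa [InfinitePlace.apply] using this
  have eφ : 2 * φ (γ : K) = u + v * φ g := by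
    have := congrArg φ h2γ
    simp only [map_mul, map_add, map_ofNat, map_intCast] at this
    exact this
  have eψ : 2 * ψ (γ : K) = u - v * φ g := by
    have := congrArg ψ h2γ
    simp only [map_mul, map_add, hψ, map_ofNat, map_intCast] at this
    rw [this]; ring
  have hgn : ‖φ g‖ = Real.sqrt |(e : ℝ)| := by
    have : ‖φ g‖ ^ 2 = |(e : ℝ)| := by
      rw [← norm_pow, ← map_pow, hg]; simp
    rw [← this, Real.sqrt_sq (norm_nonneg _)]
  refine ⟨b, γ, m, u, v, hb, hb3, h2γ, ?_, ?_, ?_, ?_, ?_⟩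
  · have : ((u ^ 2 - 4 * m ^ 3 : ℤ) : ℚ) = ((e * v ^ 2 : ℤ) : ℚ) := by
      rw [← hm]; push_cast
      rw [hn, ht, ← hv]; ring
    exact_mod_cast this
  · rintro rfl; simp at hmN; exact hN0 hmN.symm
  · have : |(m : ℝ)| = N := by rw [← hmN]; simp
    rw [this]; exact hN
  · have h : (u : ℂ) = φ (γ : K) + ψ (γ : K) := by linear_combination (-1/2) * eφ - (1/2) * eψ
    have h' : |(u : ℝ)| = ‖(u : ℂ)‖ := by simp
    rw [h', h]
    exact (norm_add_le _ _).trans (by linarith)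
  · have h : (v : ℂ) * φ g = φ (γ : K) - ψ (γ : K) := by linear_combination (-1/2) * eφ + (1/2) * eψ
    have h' : |(v : ℝ)| * Real.sqrt |(e : ℝ)| = ‖(v : ℂ) * φ g‖ := by rw [norm_mul, hgn]; simp
    rw [h', h]
    exact (norm_sub_le _ _).trans (by linarith)

lemma quad_clTor (K : Type*) [Field K] [NumberField K] (h2 : Module.finrank ℚ K = 2)
    (e : ℤ) (hns : ∀ q : ℚ, q ^ 2 ≠ e) (g : K) (hg : g ^ 2 = e) (hsq : Squarefree e)
    (B : ℝ) (hB0 : 0 < B) (hB : 4 * Real.sqrt (4 * |(e : ℝ)|) < B ^ 2)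
    (T : Finset (ℤ × ℤ × ℤ))
    (hT : ∀ m u v : ℤ, u ^ 2 - 4 * m ^ 3 = e * v ^ 2 → m ≠ 0 → v ≠ 0 →
      |(m : ℝ)| ≤ B ^ 2 → |(u : ℝ)| ≤ 2 * B ^ 3 → |(v : ℝ)| * Real.sqrt |(e : ℝ)| ≤ 2 * B ^ 3 →
      (v, m, u) ∈ T) :
    Nat.card {c : ClassGroup (𝓞 K) // c ^ 3 = 1} ≤ T.card + 1 := by
  have key := quad_triple K h2 e hns g hg hsq B hB0 hB
  choose! b γ m u v h1 h3 h4 h5 h6 h7 h8 h9 using key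
  let S : Finset (ClassGroup (𝓞 K)) := Finset.univ.filter (fun c => c ^ 3 = 1)
  have hS : Nat.card {c : ClassGroup (𝓞 K) // c ^ 3 = 1} = S.card := by
    rw [Nat.card_eq_fintype_card, Fintype.card_subtype]
  have hS1 : (S.erase 1).card ≤ T.card := by
    apply Finset.card_le_card_of_injOn (fun c => (v c, m c, u c))
    · intro c hc
      simp only [S, Finset.coe_erase, Set.mem_sdiff, Finset.mem_coe, Finset.mem_filter, Finset.mem_univ, true_and, Set.mem_singleton_iff] at hc
      obtain ⟨hc3, hc1⟩ := hc
      refine hT _ _ _ (h5 c hc3) (h6 c hc3) ?_ (h7 c hc3) (h8 c hc3) (h9 c hc3)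
      intro hv0
      apply hc1
      have e5 := h5 c hc3
      rw [hv0] at e5
      obtain ⟨t, ht⟩ := sq_eq_cube (u c) (m c) (h6 c hc3) (by linarith)
      have e4 := h4 c hc3
      rw [hv0, ht] at e4
      have hγ : γ c = (t : 𝓞 K) ^ 3 := by
        apply RingOfIntegers.coe_injective
        push_cast at e4 ⊢
        have : (2 : K) ≠ 0 := two_ne_zero
        apply mul_left_cancel₀ this
        rw [e4]; simp
      have e3 := h3 c hc3
      rw [hγ, ← Ideal.span_singleton_pow] at e3
      have := ideal_cube_inj _ _ e3
      rw [← h1 c hc3, ClassGroup.mk0_eq_one_iff, this]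
      exact ⟨⟨_, rfl⟩⟩
    · intro c hc c' hc' heq
      simp only [S, Finset.coe_erase, Set.mem_sdiff, Finset.mem_coe, Finset.mem_filter, Finset.mem_univ, true_and, Set.mem_singleton_iff] at hc hc'
      simp only [Prod.mk.injEq] at heq
      obtain ⟨q1, q2, q3⟩ := heq
      have hγ : γ c = γ c' := by
        apply RingOfIntegers.coe_injective
        have : (2 : K) ≠ 0 := two_ne_zero
        apply mul_left_cancel₀ this
        change 2 * (γ c : K) = 2 * (γ c' : K)
        rw [h4 c hc.1, h4 c' hc'.1, q1, q3]
      have hb : b c = b c' := by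
        apply Subtype.ext
        apply ideal_cube_inj
        rw [h3 c hc.1, h3 c' hc'.1, hγ]
      rw [← h1 c hc.1, ← h1 c' hc'.1, hb]
  have := Finset.pred_card_le_card_erase (s := S) (a := 1)
  omega

lemma quad_clTor' (e : ℤ) (hns : ∀ q : ℚ, q ^ 2 ≠ e) (s : ℂ) (hs : s ^ 2 = e) (hsq : Squarefree e)
    (B : ℝ) (hB0 : 0 < B) (hB : 4 * Real.sqrt (4 * |(e : ℝ)|) < B ^ 2)
    (T : Finset (ℤ × ℤ × ℤ))
    (hT : ∀ m u v : ℤ, u ^ 2 - 4 * m ^ 3 = e * v ^ 2 → m ≠ 0 → v ≠ 0 →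
      |(m : ℝ)| ≤ B ^ 2 → |(u : ℝ)| ≤ 2 * B ^ 3 → |(v : ℝ)| * Real.sqrt |(e : ℝ)| ≤ 2 * B ^ 3 →
      (v, m, u) ∈ T) :
    clTor ℚ⟮s⟯ 3 ≤ T.card + 1 := by
  have := quad_numberField e s hs
  unfold clTor
  refine quad_clTor ℚ⟮s⟯ (quad_finrank e hns s hs) e hns (AdjoinSimple.gen ℚ s) ?_ hsq B hB0 hB T hT
  apply Subtype.ext
  push_cast
  exact hs

lemma clTor_pos_neg (d : ℕ) (hd : 2 ≤ d) (hsq : Squarefree d) (B : ℝ) (hB0 : 0 < B)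
    (hB : 8 * Real.sqrt d < B ^ 2) (e : ℤ) (he : e = d ∨ e = -d) 
    (T : Finset (ℤ × ℤ × ℤ))
    (hT : ∀ m u v : ℤ, u ^ 2 - 4 * m ^ 3 = e * v ^ 2 → m ≠ 0 → v ≠ 0 →
      |(m : ℝ)| ≤ B ^ 2 → |(u : ℝ)| ≤ 2 * B ^ 3 → |(v : ℝ)| * Real.sqrt d ≤ 2 * B ^ 3 →
      (v, m, u) ∈ T) :
    (e = d → clTor (Qpos d) 3 ≤ T.card + 1) ∧ (e = -d → clTor (Qneg d) 3 ≤ T.card + 1) := by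
  have habs : |(e : ℝ)| = d := by rcases he with rfl | rfl <;> simp
  have hsqe : Squarefree e := by
    rw [← Int.squarefree_natAbs]
    rcases he with rfl | rfl <;> simpa using hsq
  have hB' : 4 * Real.sqrt (4 * |(e : ℝ)|) < B ^ 2 := by
    rw [habs, Real.sqrt_mul (by norm_num), show (4 : ℝ) = 2 ^ 2 by norm_num, Real.sqrt_sq (by norm_num)]
    linarith
  have hns : ∀ q : ℚ, q ^ 2 ≠ e := by
    intro q hq
    rcases he with rfl | rfl
    · have h1 : (1 : ℚ) * q ^ 2 = ((d : ℤ) : ℚ) := by rw [one_mul, hq]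
      have h1' : ((1 : ℤ) : ℚ) * q ^ 2 = ((d : ℤ) : ℚ) := by exact_mod_cast h1
      obtain ⟨w, rfl⟩ := sqf_rat_int 1 squarefree_one q d h1'
      have h3 : w * w = (d : ℤ) := by
        have : ((w * w : ℤ) : ℚ) = ((d : ℤ) : ℚ) := by rw [← hq]; push_cast; ring
        exact_mod_cast this
      have hu := hsqe w ⟨1, by rw [h3]; ring⟩
      rcases Int.isUnit_iff.1 hu with rfl | rfl <;> norm_num at h3 <;> omega
    · have : (0 : ℚ) ≤ q ^ 2 := sq_nonneg q
      rw [hq] at this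
      push_cast at this
      have hd' : (2 : ℚ) ≤ d := by exact_mod_cast hd
      linarith
  have hsd : ((Real.sqrt d : ℝ) : ℂ) ^ 2 = d := by
    rw [← Complex.ofReal_pow, Real.sq_sqrt (by positivity)]; simp
  constructor
  · intro h
    refine quad_clTor' e hns _ ?_ hsqe B hB0 hB' T (by rw [habs]; exact hT)
    rw [hsd, h]; simp
  · intro h
    refine quad_clTor' e hns _ ?_ hsqe B hB0 hB' T (by rw [habs]; exact hT)
    rw [mul_pow, hsd, h]; simp

lemma int_div_count (L Δ : ℕ) (hΔ : ∀ n : ℕ, 0 < n → n ≤ L → n.divisors.card ≤ Δ)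
    (k : ℤ) (hk : k ≠ 0) (hkL : k.natAbs ≤ L) (S : Finset ℤ) (hS : ∀ x ∈ S, x ∣ k) :
    S.card ≤ 2 * Δ := by
  have h1 : S.card ≤ 2 * (k.natAbs.divisors).card := by
    apply Finset.card_le_mul_card_image_of_maps_to (f := Int.natAbs)
    · intro x hx
      rw [Nat.mem_divisors]
      exact ⟨Int.natAbs_dvd_natAbs.2 (hS x hx), by simpa using hk⟩
    · intro b hb
      have : S.filter (fun x => x.natAbs = b) ⊆ {(b : ℤ), -(b : ℤ)} := by
        intro x hx
        simp only [Finset.mem_filter, Finset.mem_insert, Finset.mem_singleton] at hx ⊢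
        omega
      exact (Finset.card_le_card this).trans Finset.card_le_two
  have := hΔ k.natAbs (Int.natAbs_pos.2 hk) hkL
  omega

/-- off-diagonal count -/
lemma off_count (L Δ M N V : ℕ) (hΔ : ∀ n : ℕ, 0 < n → n ≤ L → n.divisors.card ≤ Δ)
    (hL1 : 8 * M ^ 3 ≤ L) (hL2 : N * V ^ 2 ≤ L)
    (O : Finset ((ℤ × ℤ) × ((ℤ × ℤ) × (ℤ × ℤ))))
    (hO : ∀ e v m u m' u' : ℤ, ((e, v), ((m, u), (m', u'))) ∈ O →
      e ≠ 0 ∧ v ≠ 0 ∧ e.natAbs ≤ N ∧ v.natAbs ≤ V ∧ m.natAbs ≤ M ∧ m'.natAbs ≤ M ∧ m ≠ m' ∧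
      u ^ 2 - 4 * m ^ 3 = e * v ^ 2 ∧ u' ^ 2 - 4 * m' ^ 3 = e * v ^ 2) :
    O.card ≤ (2 * Δ) * (2 * Δ) * ((2 * M + 1) * (2 * M + 1)) := by
  have hbox : ((Finset.Icc (-(M:ℤ)) M) ×ˢ (Finset.Icc (-(M:ℤ)) M)).card = (2 * M + 1) * (2 * M + 1) := by
    rw [Finset.card_product, Int.card_Icc]
    congr 1 <;> omega
  rw [← hbox]
  apply Finset.card_le_mul_card_image_of_maps_to (f := fun x => (x.2.1.1, x.2.2.1))
  · rintro ⟨⟨e, v⟩, ⟨⟨m, u⟩, ⟨m', u'⟩⟩⟩ hx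
    have := hO _ _ _ _ _ _ hx
    simp only [Finset.mem_product, Finset.mem_Icc]
    omega
  · rintro ⟨m, m'⟩ hm
    by_cases hmm : m = m'
    · have : O.filter (fun x => (x.2.1.1, x.2.2.1) = (m, m')) = ∅ := by
        apply Finset.filter_eq_empty_iff.2
        rintro ⟨⟨e, v⟩, ⟨⟨m1, u⟩, ⟨m2, u'⟩⟩⟩ hx h
        have := hO _ _ _ _ _ _ hx
        simp only [Prod.mk.injEq] at h
        exact this.2.2.2.2.2.2.1 (by rw [h.1, h.2, hmm])
      rw [this]; simp
    set A := O.filter (fun x => (x.2.1.1, x.2.2.1) = (m, m')) with hA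
    simp only [Finset.mem_product, Finset.mem_Icc] at hm
    set k : ℤ := 4 * (m ^ 3 - m' ^ 3) with hk
    have hk0 : k ≠ 0 := by
      intro h
      have : m ^ 3 = m' ^ 3 := by linarith
      exact hmm ((Odd.strictMono_pow (by decide : Odd 3)).injective this)
    have hkL : k.natAbs ≤ L := by
      refine le_trans ?_ hL1
      have h1 : |m| ≤ M := abs_le.2 hm.1
      have h2 : |m'| ≤ M := abs_le.2 hm.2
      have h3 : |m ^ 3| ≤ (M : ℤ) ^ 3 := by rw [abs_pow]; gcongr
      have h4 : |m' ^ 3| ≤ (M : ℤ) ^ 3 := by rw [abs_pow]; gcongr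
      have h5 : |k| ≤ 8 * (M : ℤ) ^ 3 := by
        rw [hk, abs_mul]
        have := abs_sub (m ^ 3) (m' ^ 3)
        simp only [Nat.abs_ofNat]
        linarith
      zify
      exact h5
    have hprop : ∀ e v m1 u m2 u' : ℤ, ((e, v), ((m1, u), (m2, u'))) ∈ A → m1 = m ∧ m2 = m' ∧
       e ≠ 0 ∧ v ≠ 0 ∧ e.natAbs ≤ N ∧ v.natAbs ≤ V ∧ 
       u ^ 2 - 4 * m ^ 3 = e * v ^ 2 ∧ u' ^ 2 - 4 * m' ^ 3 = e * v ^ 2 := by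
      intro e v m1 u m2 u' h
      rw [hA, Finset.mem_filter] at h
      have h1 := hO _ _ _ _ _ _ h.1
      have h2 := h.2
      simp only [Prod.mk.injEq] at h2
      obtain ⟨rfl, rfl⟩ := h2
      tauto
    set D : Finset (ℤ × ℤ) := A.image (fun x => (x.2.1.2, x.2.2.2)) with hD
    have hDc : D.card ≤ 2 * Δ := by
      have hinj : D.card ≤ (D.image (fun p => p.1 - p.2)).card := by
        apply le_of_eq
        symm
        apply Finset.card_image_of_injOn
        rintro ⟨a, b⟩ hab ⟨c, d⟩ hcd heq
        simp only [hD, Finset.coe_image, Set.mem_image, Finset.mem_coe] at hab hcd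
        obtain ⟨⟨⟨e, v⟩, ⟨⟨m1, u⟩, ⟨m2, u'⟩⟩⟩, hx, hx'⟩ := hab
        obtain ⟨⟨⟨e2, v2⟩, ⟨⟨m3, u2⟩, ⟨m4, u2'⟩⟩⟩, hy, hy'⟩ := hcd
        have p1 := hprop _ _ _ _ _ _ hx
        have p2 := hprop _ _ _ _ _ _ hy
        simp only [Prod.mk.injEq] at hx' hy' heq
        obtain ⟨rfl, rfl⟩ := hx'
        obtain ⟨rfl, rfl⟩ := hy'
        have q1 : (u - u') * (u + u') = k := by rw [hk]; linarith [p1.2.2.2.2.2.2.1, p1.2.2.2.2.2.2.2]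
        have q2 : (u2 - u2') * (u2 + u2') = k := by rw [hk]; linarith [p2.2.2.2.2.2.2.1, p2.2.2.2.2.2.2.2]
        have hne : u - u' ≠ 0 := by
          intro h; rw [h, zero_mul] at q1; exact hk0 q1.symm
        have q3 : u + u' = u2 + u2' := by
          apply mul_left_cancel₀ hne
          rw [q1, heq, q2]
        ext <;> simp <;> omega
      refine hinj.trans (int_div_count L Δ hΔ k hk0 hkL _ ?_)
      intro x hx
      rw [Finset.mem_image] at hx
      obtain ⟨⟨a, b⟩, hab, rfl⟩ := hx
      simp only [hD, Finset.mem_image] at hab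
      obtain ⟨⟨⟨e, v⟩, ⟨⟨m1, u⟩, ⟨m2, u'⟩⟩⟩, hx, hx'⟩ := hab
      have p1 := hprop _ _ _ _ _ _ hx
      simp only [Prod.mk.injEq] at hx'
      obtain ⟨rfl, rfl⟩ := hx'
      refine ⟨u + u', ?_⟩
      rw [hk]; linarith [p1.2.2.2.2.2.2.1, p1.2.2.2.2.2.2.2]
    have hAD : A.card ≤ 2 * Δ * D.card := by
      apply Finset.card_le_mul_card_image_of_maps_to (f := fun x => (x.2.1.2, x.2.2.2))
      · intro x hx
        exact Finset.mem_image_of_mem _ hx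
      · rintro ⟨u, u'⟩ huu
        set E := A.filter (fun x => (x.2.1.2, x.2.2.2) = (u, u')) with hE
        have hEp : ∀ e v m1 u1 m2 u2 : ℤ, ((e, v), ((m1, u1), (m2, u2))) ∈ E → m1 = m ∧ m2 = m' ∧
           u1 = u ∧ u2 = u' ∧ 
          e ≠ 0 ∧ v ≠ 0 ∧ e.natAbs ≤ N ∧ v.natAbs ≤ V ∧ u ^ 2 - 4 * m ^ 3 = e * v ^ 2 := by
          intro e v m1 u1 m2 u2 h
          rw [hE, Finset.mem_filter] at h
          have h1 := hprop _ _ _ _ _ _ h.1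
          have h2 := h.2
          simp only [Prod.mk.injEq] at h2
          obtain ⟨rfl, rfl⟩ := h2
          tauto
        have hinj : E.card = (E.image (fun x => x.1.2)).card := by
          symm
          apply Finset.card_image_of_injOn
          rintro ⟨⟨e, v⟩, ⟨⟨m1, u1⟩, ⟨m2, u2⟩⟩⟩ hx ⟨⟨e', v'⟩, ⟨⟨m1', u1'⟩, ⟨m2', u2'⟩⟩⟩ hy heq
          obtain ⟨rfl, rfl, rfl, rfl, a1, a2, a3, a4, a5⟩ := hEp _ _ _ _ _ _ hx
          obtain ⟨rfl, rfl, rfl, rfl, b1, b2, b3, b4, b5⟩ := hEp _ _ _ _ _ _ hy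
          simp only at heq
          subst heq
          have : e = e' := mul_right_cancel₀ (pow_ne_zero 2 a2) (a5.symm.trans b5)
          rw [this]
        rw [hinj]
        by_cases hemp : E = ∅
        · rw [hemp]; simp
        obtain ⟨⟨⟨e, v⟩, ⟨⟨m1, u1⟩, ⟨m2, u2⟩⟩⟩, hx⟩ := Finset.nonempty_iff_ne_empty.2 hemp
        have hh := hEp _ _ _ _ _ _ hx
        obtain ⟨-, -, -, -, a1, a2, a3, a4, a5⟩ := hh
        apply int_div_count L Δ hΔ (u ^ 2 - 4 * m ^ 3)
        · rw [a5]; exact mul_ne_zero a1 (pow_ne_zero 2 a2)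
        · rw [a5, Int.natAbs_mul, Int.natAbs_pow]
          refine le_trans ?_ hL2
          gcongr
        · intro x hx
          rw [Finset.mem_image] at hx
          obtain ⟨⟨⟨e, v⟩, ⟨⟨m1, u1⟩, ⟨m2, u2⟩⟩⟩, hx, rfl⟩ := hx
          obtain ⟨-, -, -, -, a1, a2, a3, a4, a5⟩ := hEp _ _ _ _ _ _ hx
          rw [a5]
          exact Dvd.intro_left (e * v) (by ring)
    calc A.card ≤ 2 * Δ * D.card := hAD
      _ ≤ 2 * Δ * (2 * Δ) := by gcongr

lemma ap_count (S : Finset ℤ) (len q : ℕ) (hq : 0 < q) (hlen : ∀ x ∈ S, ∀ y ∈ S, x - y ≤ len)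
    (hmod : ∀ x ∈ S, ∀ y ∈ S, (q : ℤ) ∣ x - y) : S.card ≤ len / q + 1 := by
  by_cases hS : S.Nonempty
  · set x0 := S.min' hS
    have hx0 : x0 ∈ S := S.min'_mem hS
    have hmin : ∀ x ∈ S, x0 ≤ x := fun x hx => S.min'_le x hx
    rw [← Finset.card_range (len / q + 1)]
    apply Finset.card_le_card_of_injOn (fun x => ((x - x0) / q).toNat)
    · intro x hx
      have h1 := hlen x hx x0 hx0
      have h2 := hmin x hx
      simp only [Finset.coe_range, Set.mem_Iio]
      have h3 : (x - x0) / (q : ℤ) ≤ (len : ℤ) / q := Int.ediv_le_ediv (by exact_mod_cast hq) h1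
      have h4 : ((len / q : ℕ) : ℤ) = (len : ℤ) / q := by push_cast; rfl
      have h5 : 0 ≤ (len : ℤ) / q := by positivity
      omega
    · intro x hx y hy hxy
      simp only at hxy
      obtain ⟨a, ha⟩ := hmod x hx x0 hx0
      obtain ⟨b, hb⟩ := hmod y hy x0 hx0
      have hq' : (0 : ℤ) < q := by exact_mod_cast hq
      rw [ha, hb, Int.mul_ediv_cancel_left _ hq'.ne', Int.mul_ediv_cancel_left _ hq'.ne'] at hxy
      have ha0 : 0 ≤ a := by
        have := hmin x hx
        by_contra h
        nlinarith
      have hb0 : 0 ≤ b := by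
        have := hmin y hy
        by_contra h
        nlinarith
      have : a = b := by omega
      subst this
      omega
  · rw [Finset.not_nonempty_iff_eq_empty.1 hS]; simp

lemma U_count (L Δ N R W : ℕ) (m : ℤ) (hm : m ≠ 0) (hW : 0 < W)
    (hΔ : ∀ n : ℕ, 0 < n → n ≤ L → n.divisors.card ≤ Δ)
    (hL : W ^ 2 ≤ L) (hR : 2 * N ≤ R ^ 2) (S : Finset ℤ)
    (hS : ∀ u ∈ S, 0 ≤ u ∧ (W : ℤ) ^ 2 ∣ u ^ 2 - 4 * m ^ 3 ∧ |u ^ 2 - 4 * m ^ 3| ≤ N * (W : ℤ) ^ 2) :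
    S.card ≤ (1 + ∑ g ∈ (16 * m.natAbs ^ 3).divisors, if g ∣ W then R / (W / g) else 0) * Δ := by
  by_cases hemp : S = ∅
  · rw [hemp]; simp
  obtain ⟨u0, hu0⟩ := Finset.nonempty_iff_ne_empty.2 hemp
  obtain ⟨z0, z1, z2⟩ := hS u0 hu0
  refine le_trans ?_ (Nat.mul_le_mul_left _ (hΔ (W ^ 2) (by positivity) hL))
  apply Finset.card_le_mul_card_image_of_maps_to (f := fun u => Int.gcd (u - u0) ((W : ℤ) ^ 2))
  · intro u hu
    rw [Nat.mem_divisors]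
    refine ⟨?_, by positivity⟩
    have := Int.gcd_dvd_right (u - u0) ((W : ℤ) ^ 2)
    exact_mod_cast this
  · intro d hd
    rw [Nat.mem_divisors] at hd
    obtain ⟨⟨f, hf⟩, -⟩ := hd
    have hWpos : 0 < W ^ 2 := by positivity
    have hd0 : 0 < d := Nat.pos_of_ne_zero (by rintro rfl; rw [zero_mul] at hf; omega)
    have hf0 : 0 < f := Nat.pos_of_ne_zero (by rintro rfl; rw [mul_zero] at hf; omega)
    set A := S.filter (fun u => Int.gcd (u - u0) ((W : ℤ) ^ 2) = d) with hA
    by_cases hAe : A = ∅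
    · rw [hAe]; simp
    obtain ⟨u1, hu1⟩ := Finset.nonempty_iff_ne_empty.2 hAe
    have hfac : ∀ u ∈ A, (d : ℤ) ∣ u - u0 ∧ (f : ℤ) ∣ u + u0 := by
      intro u hu
      rw [hA, Finset.mem_filter] at hu
      obtain ⟨hu, hg⟩ := hu
      obtain ⟨y0, y1, y2⟩ := hS u hu
      have hdv : (d : ℤ) ∣ u - u0 := by rw [← hg]; exact Int.gcd_dvd_left _ _
      refine ⟨hdv, ?_⟩
      have h1 : (W : ℤ) ^ 2 ∣ (u - u0) * (u + u0) := by
        have := Int.dvd_sub y1 z1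
        convert this using 1; ring
      have hWd : (W : ℤ) ^ 2 = d * f := by exact_mod_cast hf
      obtain ⟨a, ha⟩ := hdv
      have hd' : (d : ℤ) ≠ 0 := by exact_mod_cast hd0.ne'
      have hcop : IsCoprime (f : ℤ) a := by
        rw [Int.isCoprime_iff_gcd_eq_one]
        rw [ha, hWd, Int.gcd_mul_left] at hg
        simp only [Int.natAbs_natCast] at hg
        have : Int.gcd a f = 1 := Nat.eq_of_mul_eq_mul_left hd0 (by rw [hg, mul_one])
        rw [Int.gcd_comm]; exact this
      rw [ha, hWd, mul_assoc] at h1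
      exact hcop.dvd_of_dvd_mul_left ((mul_dvd_mul_iff_left hd').1 h1)
    set g := Nat.gcd d f with hg
    have hgd : g ∣ d := Nat.gcd_dvd_left _ _
    have hgf : g ∣ f := Nat.gcd_dvd_right _ _
    have hg0 : 0 < g := Nat.gcd_pos_of_pos_left _ hd0
    have hgW : g ∣ W := by
      rw [← Nat.pow_dvd_pow_iff two_ne_zero, hf, pow_two]
      exact mul_dvd_mul hgd hgf
    have hgm : g ∣ 16 * m.natAbs ^ 3 := by
      obtain ⟨c1, c2⟩ := hfac u1 hu1
      have hgd' : (g : ℤ) ∣ d := by exact_mod_cast hgd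
      have hgf' : (g : ℤ) ∣ f := by exact_mod_cast hgf
      have h2 : (g : ℤ) ∣ 2 * u0 := by
        have := Int.dvd_sub (hgf'.trans c2) (hgd'.trans c1)
        convert this using 1; ring
      have h3 : (g : ℤ) ∣ u0 ^ 2 - 4 * m ^ 3 := by
        refine dvd_trans ?_ z1
        have : (g : ℤ) ∣ W := by exact_mod_cast hgW
        exact this.trans (dvd_pow_self _ two_ne_zero)
      have h4 : (g : ℤ) ∣ 16 * m ^ 3 := by
        have := Int.dvd_sub (h2.mul_left (2 * u0)) (h3.mul_left 4)
        convert this using 1; ring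
      have := Int.natAbs_dvd_natAbs.2 h4
      simpa [Int.natAbs_mul, Int.natAbs_pow] using this
    obtain ⟨w', hw'⟩ := hgW
    have hw'0 : 0 < w' := Nat.pos_of_ne_zero (by rintro rfl; rw [mul_zero] at hw'; omega)
    have hlcm : Nat.lcm d f = W * w' := by
      have := Nat.gcd_mul_lcm d f
      rw [← hg, ← hf] at this
      apply Nat.eq_of_mul_eq_mul_left hg0
      rw [this]
      nth_rw 2 [hw'] 
      rw [pow_two]
      nth_rw 2 [hw']
      rw [hw']; ring
    have hcard : A.card ≤ (R * W) / (W * w') + 1 := by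
      apply ap_count
      · positivity
      · intro x hx y hy
        rw [hA, Finset.mem_filter] at hx hy
        obtain ⟨x0, x1, x2⟩ := hS x hx.1
        obtain ⟨y0, y1, y2⟩ := hS y hy.1
        rw [abs_le] at x2 y2
        by_cases hxy : x ≤ y
        · have : (0 : ℤ) ≤ ((R * W : ℕ) : ℤ) := by positivity
          linarith
        · push Not at hxy
          have h1 : (x - y) ^ 2 ≤ 2 * N * (W : ℤ) ^ 2 := by nlinarith
          have hR' : (2 * N : ℤ) ≤ (R : ℤ) ^ 2 := by exact_mod_cast hR
          have h2 : (x - y) ^ 2 ≤ ((R * W : ℕ) : ℤ) ^ 2 := by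
            push_cast
            rw [mul_pow]
            refine h1.trans ?_
            gcongr
          exact le_of_sq_le_sq h2 (by positivity)
      · intro x hx y hy
        obtain ⟨a1, a2⟩ := hfac x hx
        obtain ⟨b1, b2⟩ := hfac y hy
        rw [← hlcm]
        have e1 : (d : ℤ) ∣ x - y := by
          have := Int.dvd_sub a1 b1
          convert this using 1; ring
        have e2 : (f : ℤ) ∣ x - y := by
          have := Int.dvd_sub a2 b2
          convert this using 1; ring
        have := Int.coe_lcm_dvd e1 e2
        simpa [Int.lcm] using this
    have hsimp : (R * W) / (W * w') = R / (W / g) := by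
      have : W / g = w' := by rw [hw']; exact Nat.mul_div_cancel_left _ hg0
      rw [this, mul_comm R W]
      exact Nat.mul_div_mul_left _ _ hW
    rw [hsimp] at hcard
    have hmem : g ∈ (16 * m.natAbs ^ 3).divisors := by
      rw [Nat.mem_divisors]
      refine ⟨hgm, ?_⟩
      have := Int.natAbs_pos.2 hm
      positivity
    have := Finset.single_le_sum (f := fun g => if g ∣ W then R / (W / g) else 0)
      (fun i _ => Nat.zero_le _) hmem
    simp only [if_pos (Dvd.intro _ hw'.symm : g ∣ W)] at this
    omega

lemma sum_W (R V Δ L n : ℕ) (hn : 0 < n) (hnL : n ≤ L)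
    (hΔ : ∀ n : ℕ, 0 < n → n ≤ L → n.divisors.card ≤ Δ) (Λ : ℕ) (hΛ : ∑ w ∈ Finset.Icc 1 V, R / w ≤ Λ) :
    ∑ W ∈ Finset.Icc 1 V, (1 + ∑ g ∈ n.divisors, if g ∣ W then R / (W / g) else 0) ≤ V + Δ * Λ := by
  rw [Finset.sum_add_distrib, Finset.sum_comm]
  have h1 : ∑ i ∈ Finset.Icc 1 V, 1 = V := by simp
  rw [h1]
  gcongr
  have h2 : ∀ g ∈ n.divisors, ∑ W ∈ Finset.Icc 1 V, (if g ∣ W then R / (W / g) else 0) ≤ Λ := by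
    intro g hg
    have hg0 : 0 < g := Nat.pos_of_mem_divisors hg
    rw [← Finset.sum_filter]
    refine le_trans ?_ hΛ
    have hinj : Set.InjOn (fun W => W / g) (↑((Finset.Icc 1 V).filter (fun W => g ∣ W)) : Set ℕ) := by
      intro a ha b hb hab
      simp only [Finset.coe_filter, Set.mem_ofPred_eq] at ha hb
      obtain ⟨a', rfl⟩ := ha.2
      obtain ⟨b', rfl⟩ := hb.2
      simp only [Nat.mul_div_cancel_left _ hg0] at hab
      rw [hab]
    have h3 := Finset.sum_image (f := fun w => R / w) hinj
    rw [← h3]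
    apply Finset.sum_le_sum_of_subset
    intro x hx
    simp only [Finset.mem_image, Finset.mem_filter, Finset.mem_Icc] at hx ⊢
    obtain ⟨a, ⟨⟨h1, h2⟩, ⟨b, rfl⟩⟩, rfl⟩ := hx
    rw [Nat.mul_div_cancel_left _ hg0]
    constructor
    · exact Nat.pos_of_ne_zero (by rintro rfl; simp at h1)
    · nlinarith
  calc ∑ g ∈ n.divisors, ∑ W ∈ Finset.Icc 1 V, (if g ∣ W then R / (W / g) else 0)
      ≤ n.divisors.card • Λ := Finset.sum_le_card_nsmul _ _ _ h2
    _ ≤ Δ * Λ := by rw [smul_eq_mul]; exact Nat.mul_le_mul_right _ (hΔ n hn hnL)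

/-- symmetric integer interval -/
noncomputable def sIcc (M : ℕ) : Finset ℤ := Finset.Icc (-(M : ℤ)) M

lemma mem_sIcc (M : ℕ) (x : ℤ) : x ∈ sIcc M ↔ x.natAbs ≤ M := by
  rw [sIcc, Finset.mem_Icc]; omega

lemma card_sIcc (M : ℕ) : (sIcc M).card = 2 * M + 1 := by
  rw [sIcc, Int.card_Icc]; omega

/-- the solutions for fixed `e` and `v` -/
noncomputable def Tv (M U : ℕ) (e v : ℤ) : Finset (ℤ × ℤ) :=
  (sIcc M ×ˢ sIcc U).filter (fun p => p.2 ^ 2 - 4 * p.1 ^ 3 = e * v ^ 2 ∧ p.1 ≠ 0)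

/-- the solutions for fixed `e` -/
noncomputable def Tset (V M U : ℕ) (e : ℤ) : Finset (ℤ × ℤ × ℤ) :=
  (((sIcc V).erase 0) ×ˢ (sIcc M ×ˢ sIcc U)).filter
    (fun p => p.2.2 ^ 2 - 4 * p.2.1 ^ 3 = e * p.1 ^ 2 ∧ p.2.1 ≠ 0)

lemma Tset_card (V M U : ℕ) (e : ℤ) :
    (Tset V M U e).card = ∑ v ∈ (sIcc V).erase 0, (Tv M U e v).card := by
  unfold Tset Tv
  rw [Finset.card_filter, Finset.sum_product]
  simp only [Finset.card_filter]

lemma diag_count (M U : ℕ) (e v : ℤ) :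
    ((Tv M U e v ×ˢ Tv M U e v).filter (fun p => p.1.1 = p.2.1)).card ≤ 2 * (Tv M U e v).card := by
  apply Finset.card_le_mul_card_image_of_maps_to (f := fun p => p.1)
  · intro x hx
    rw [Finset.mem_filter, Finset.mem_product] at hx
    exact hx.1.1
  · rintro ⟨m, u⟩ hb
    have : ((Tv M U e v ×ˢ Tv M U e v).filter (fun p => p.1.1 = p.2.1)).filter (fun p => p.1 = (m, u))
        ⊆ {((m, u), (m, u)), ((m, u), (m, -u))} := by
      rintro ⟨⟨m1, u1⟩, ⟨m2, u2⟩⟩ hx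
      simp only [Tv, Finset.mem_filter, Finset.mem_product, Prod.mk.injEq, Finset.mem_insert, Finset.mem_singleton] at hx ⊢
      obtain ⟨⟨⟨⟨-, h1, -⟩, ⟨-, h2, -⟩⟩, rfl⟩, rfl, rfl⟩ := hx
      have : u2 ^ 2 = u1 ^ 2 := by linarith
      rcases sq_eq_sq_iff_eq_or_eq_neg.1 this with h | h <;> simp [h]
    exact (Finset.card_le_card this).trans Finset.card_le_two

/-- admissible `u` for fixed `v, m` -/
noncomputable def Us (N U : ℕ) (v m : ℤ) : Finset ℤ :=
  (sIcc U).filter (fun u => v ^ 2 ∣ u ^ 2 - 4 * m ^ 3 ∧ |u ^ 2 - 4 * m ^ 3| ≤ N * v ^ 2)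

lemma Tv_sum (N M U : ℕ) (v : ℤ) (hv : v ≠ 0) :
    ∑ e ∈ (sIcc N).erase 0, (Tv M U e v).card ≤ ∑ m ∈ (sIcc M).erase 0, (Us N U v m).card := by
  have h1 : ∑ e ∈ (sIcc N).erase 0, (Tv M U e v).card
      = (((sIcc N).erase 0).biUnion (fun e => Tv M U e v)).card := by
    symm
    apply Finset.card_biUnion
    intro a _ b _ hab
    change Disjoint (Tv M U a v) (Tv M U b v)
    rw [Finset.disjoint_left]
    rintro ⟨m, u⟩ h1 h2
    simp only [Tv, Finset.mem_filter] at h1 h2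
    exact hab (mul_right_cancel₀ (pow_ne_zero 2 hv) (h1.2.1.symm.trans h2.2.1))
  have h2 : ∑ m ∈ (sIcc M).erase 0, (Us N U v m).card
      = (((sIcc M).erase 0 ×ˢ sIcc U).filter (fun p => v ^ 2 ∣ p.2 ^ 2 - 4 * p.1 ^ 3 ∧ |p.2 ^ 2 - 4 * p.1 ^ 3| ≤ N * v ^ 2)).card := by
    rw [Finset.card_filter, Finset.sum_product]
    simp only [Us, Finset.card_filter]
  rw [h1, h2]
  apply Finset.card_le_card
  rintro ⟨m, u⟩ h
  simp only [Tv, Finset.mem_biUnion, Finset.mem_filter, Finset.mem_product, Finset.mem_erase, mem_sIcc] at h ⊢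
  obtain ⟨e, ⟨he0, he⟩, ⟨hm, hu⟩, heq, hm0⟩ := h
  refine ⟨⟨⟨hm0, hm⟩, hu⟩, ?_, ?_⟩
  · rw [heq]; exact dvd_mul_left _ _
  · rw [heq, abs_mul, abs_pow, sq_abs]
    have : |e| ≤ (N : ℤ) := by rw [Int.abs_eq_natAbs]; exact_mod_cast he
    gcongr

lemma Us_card (L Δ N R U : ℕ) (v m : ℤ) (hm : m ≠ 0) (hv : v ≠ 0)
    (hΔ : ∀ n : ℕ, 0 < n → n ≤ L → n.divisors.card ≤ Δ)
    (hL : v.natAbs ^ 2 ≤ L) (hR : 2 * N ≤ R ^ 2) :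
    (Us N U v m).card ≤ 2 * ((1 + ∑ g ∈ (16 * m.natAbs ^ 3).divisors,
      if g ∣ v.natAbs then R / (v.natAbs / g) else 0) * Δ) := by
  have hv2 : ((v.natAbs : ℤ)) ^ 2 = v ^ 2 := Int.natAbs_sq v
  have hU := U_count L Δ N R v.natAbs m hm (Int.natAbs_pos.2 hv) hΔ hL hR
    ((Us N U v m).image (fun u => |u|)) (by
      intro u hu
      rw [Finset.mem_image] at hu
      obtain ⟨a, ha, rfl⟩ := hu
      simp only [Us, Finset.mem_filter] at ha
      rw [hv2, sq_abs]
      exact ⟨abs_nonneg _, ha.2⟩)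
  refine le_trans ?_ (Nat.mul_le_mul_left 2 hU)
  apply Finset.card_le_mul_card_image
  intro b hb
  have : (Us N U v m).filter (fun x => |x| = b) ⊆ {b, -b} := by
    intro x hx
    simp only [Finset.mem_filter, Finset.mem_insert, Finset.mem_singleton] at hx ⊢
    rcases abs_choice x with h | h
    · left; rw [← hx.2, h]
    · right; rw [← hx.2, h]; ring
  exact (Finset.card_le_card this).trans Finset.card_le_two

lemma sum_sym (V : ℕ) (f : ℤ → ℕ) :
    ∑ v ∈ (sIcc V).erase 0, f v = ∑ w ∈ Finset.Icc 1 V, (f w + f (-w)) := by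
  have hdec : (sIcc V).erase 0 = (Finset.Icc 1 V).image (fun w : ℕ => (w : ℤ)) ∪
      (Finset.Icc 1 V).image (fun w : ℕ => -(w : ℤ)) := by
    ext x
    simp only [Finset.mem_erase, mem_sIcc, Finset.mem_union, Finset.mem_image, Finset.mem_Icc]
    constructor
    · rintro ⟨h0, h1⟩
      rcases Int.natAbs_eq x with h | h
      · left; exact ⟨x.natAbs, by omega, h.symm⟩
      · right; exact ⟨x.natAbs, by omega, h.symm⟩
    · rintro (⟨a, ha, rfl⟩ | ⟨a, ha, rfl⟩) <;> omega
  rw [hdec, Finset.sum_union, Finset.sum_image, Finset.sum_image]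
  · rw [Finset.sum_add_distrib]
  · intro a _ b _ h; simpa using h
  · intro a _ b _ h; simpa using h
  · rw [Finset.disjoint_left]
    intro x h1 h2
    simp only [Finset.mem_image, Finset.mem_Icc] at h1 h2
    obtain ⟨a, ha, rfl⟩ := h1
    obtain ⟨b, hb, h⟩ := h2
    omega

lemma sum_sym' (V : ℕ) (f : ℕ → ℕ) :
    ∑ v ∈ (sIcc V).erase 0, f v.natAbs = 2 * ∑ w ∈ Finset.Icc 1 V, f w := by
  rw [sum_sym V (fun v => f v.natAbs), Finset.mul_sum]
  refine Finset.sum_congr rfl fun w _ => ?_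
  simp only [Int.natAbs_natCast, Int.natAbs_neg]; ring

lemma first_moment (L Δ N R M V U Λ : ℕ)
    (hΔ : ∀ n : ℕ, 0 < n → n ≤ L → n.divisors.card ≤ Δ)
    (hL : V ^ 2 ≤ L) (hLM : 16 * M ^ 3 ≤ L) (hR : 2 * N ≤ R ^ 2)
    (hΛ : ∑ w ∈ Finset.Icc 1 V, R / w ≤ Λ) :
    ∑ e ∈ (sIcc N).erase 0, ∑ v ∈ (sIcc V).erase 0, (Tv M U e v).card
      ≤ (2 * M + 1) * (4 * Δ * (V + Δ * Λ)) := by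
  rw [Finset.sum_comm]
  have h1 : ∑ v ∈ (sIcc V).erase 0, ∑ e ∈ (sIcc N).erase 0, (Tv M U e v).card
      ≤ ∑ v ∈ (sIcc V).erase 0, ∑ m ∈ (sIcc M).erase 0, (Us N U v m).card := by
    apply Finset.sum_le_sum
    intro v hv
    exact Tv_sum N M U v (Finset.ne_of_mem_erase hv)
  refine h1.trans ?_
  rw [Finset.sum_comm]
  have h2 : ∀ m ∈ (sIcc M).erase 0, ∑ v ∈ (sIcc V).erase 0, (Us N U v m).card ≤ 4 * Δ * (V + Δ * Λ) := by
    intro m hm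
    have hm0 := Finset.ne_of_mem_erase hm
    have hmM := (mem_sIcc _ _).1 (Finset.mem_of_mem_erase hm)
    obtain ⟨F, hF⟩ : ∃ F : ℕ → ℕ, ∀ w, F w = 2 * ((1 + ∑ g ∈ (16 * m.natAbs ^ 3).divisors,
        if g ∣ w then R / (w / g) else 0) * Δ) := ⟨_, fun _ => rfl⟩
    have h3 : ∑ v ∈ (sIcc V).erase 0, (Us N U v m).card ≤ ∑ v ∈ (sIcc V).erase 0, F v.natAbs := by
      apply Finset.sum_le_sum
      intro v hv
      have hv0 := Finset.ne_of_mem_erase hv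
      have hvV := (mem_sIcc _ _).1 (Finset.mem_of_mem_erase hv)
      rw [hF]
      exact Us_card L Δ N R U v m hm0 hv0 hΔ (le_trans (by gcongr) hL) hR
    refine h3.trans ?_
    rw [sum_sym' V F]
    simp only [hF]
    rw [← Finset.mul_sum, ← Finset.sum_mul]
    have h4 := sum_W R V Δ L (16 * m.natAbs ^ 3) (by have := Int.natAbs_pos.2 hm0; positivity)
      (le_trans (by gcongr) hLM) hΔ Λ hΛ
    calc _ ≤ 2 * (2 * ((V + Δ * Λ) * Δ)) := by gcongr
      _ = _ := by ring
  refine (Finset.sum_le_card_nsmul _ _ _ h2).trans ?_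
  rw [smul_eq_mul]
  apply Nat.mul_le_mul_right
  exact (Finset.card_le_card (Finset.erase_subset _ _)).trans (card_sIcc M).le

lemma off_sum (L Δ M N V U : ℕ) (hΔ : ∀ n : ℕ, 0 < n → n ≤ L → n.divisors.card ≤ Δ)
    (hL1 : 8 * M ^ 3 ≤ L) (hL2 : N * V ^ 2 ≤ L) :
    ∑ e ∈ (sIcc N).erase 0, ∑ v ∈ (sIcc V).erase 0,
      ((Tv M U e v ×ˢ Tv M U e v).filter (fun p => ¬ p.1.1 = p.2.1)).card
      ≤ (2 * Δ) * (2 * Δ) * ((2 * M + 1) * (2 * M + 1)) := by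
  rw [← Finset.sum_product']
  rw [← Finset.card_sigma]
  set S := (((sIcc N).erase 0) ×ˢ ((sIcc V).erase 0)).sigma (fun x => (Tv M U x.1 x.2 ×ˢ Tv M U x.1 x.2).filter (fun p => ¬ p.1.1 = p.2.1)) with hS
  have : S.card = (S.image (fun x => (x.1, x.2))).card := by
    symm
    apply Finset.card_image_of_injective
    rintro ⟨a, b⟩ ⟨c, d⟩ h
    simp only [Prod.mk.injEq] at h
    rw [h.1, h.2]
  rw [this]
  apply off_count L Δ M N V hΔ hL1 hL2
  intro e v m u m' u' h
  rw [Finset.mem_image] at h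
  obtain ⟨⟨⟨e1, v1⟩, ⟨⟨m1, u1⟩, ⟨m2, u2⟩⟩⟩, h1, h2⟩ := h
  simp only [Prod.mk.injEq] at h2
  obtain ⟨⟨rfl, rfl⟩, ⟨rfl, rfl⟩, ⟨rfl, rfl⟩⟩ := h2
  simp only [hS, Finset.mem_sigma, Finset.mem_product, Finset.mem_erase, Finset.mem_filter, Tv, mem_sIcc] at h1
  tauto

lemma second_moment_count (L Δ N R M V U Λ : ℕ)
    (hΔ : ∀ n : ℕ, 0 < n → n ≤ L → n.divisors.card ≤ Δ)
    (hL : V ^ 2 ≤ L) (hLM : 16 * M ^ 3 ≤ L) (hL2 : N * V ^ 2 ≤ L) (hR : 2 * N ≤ R ^ 2)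
    (hΛ : ∑ w ∈ Finset.Icc 1 V, R / w ≤ Λ) :
    ∑ e ∈ (sIcc N).erase 0, (Tset V M U e).card ^ 2 ≤ (2 * V + 1) *
      (2 * ((2 * M + 1) * (4 * Δ * (V + Δ * Λ))) + (2 * Δ) * (2 * Δ) * ((2 * M + 1) * (2 * M + 1))) := by
  have h1 : ∀ e ∈ (sIcc N).erase 0, (Tset V M U e).card ^ 2 ≤
      (2 * V + 1) * ∑ v ∈ (sIcc V).erase 0, (Tv M U e v).card ^ 2 := by
    intro e _
    rw [Tset_card]
    refine sq_sum_le_card_mul_sum_sq.trans ?_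
    apply Nat.mul_le_mul_right
    exact (Finset.card_le_card (Finset.erase_subset _ _)).trans (card_sIcc V).le
  refine (Finset.sum_le_sum h1).trans ?_
  rw [← Finset.mul_sum]
  apply Nat.mul_le_mul_left
  have h2 : ∀ e v, (Tv M U e v).card ^ 2 ≤ 2 * (Tv M U e v).card +
      ((Tv M U e v ×ˢ Tv M U e v).filter (fun p => ¬ p.1.1 = p.2.1)).card := by
    intro e v
    have := Finset.card_filter_add_card_filter_not (s := Tv M U e v ×ˢ Tv M U e v) (fun p => p.1.1 = p.2.1)
    rw [Finset.card_product] at this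
    have h3 := diag_count M U e v
    rw [pow_two, ← this]
    omega
  refine (Finset.sum_le_sum (fun e _ => Finset.sum_le_sum (fun v _ => h2 e v))).trans ?_
  simp only [Finset.sum_add_distrib, ← Finset.mul_sum]
  have h4 := first_moment L Δ N R M V U Λ hΔ hL hLM hR hΛ
  have h5 := off_sum L Δ M N V U hΔ (by omega) hL2
  omega

lemma divisor_bound (ε : ℝ) (hε : 0 < ε) : ∃ C : ℝ, 0 < C ∧ ∀ n : ℕ, 0 < n →
    (n.divisors.card : ℝ) ≤ C * (n : ℝ) ^ ε := by
  set P : ℕ := ⌈(2 : ℝ) ^ (1 / ε)⌉₊ with hP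
  have hlog : 0 < Real.log 2 := Real.log_pos (by norm_num)
  set A : ℝ := 1 + 1 / (ε * Real.log 2) with hA
  have hA1 : 1 ≤ A := by
    rw [hA]
    have : 0 < 1 / (ε * Real.log 2) := by positivity
    linarith
  refine ⟨A ^ P, by positivity, ?_⟩
  intro n hn
  have hloc : ∀ p : ℕ, p.Prime → ∀ a : ℕ, ((a : ℝ) + 1) ≤ (if p < P then A else 1) * ((p : ℝ) ^ a) ^ ε := by
    intro p hp a
    have hp2 : (2 : ℝ) ≤ p := by exact_mod_cast hp.two_le
    have hcomm : ((p : ℝ) ^ a) ^ ε = ((p : ℝ) ^ ε) ^ a := by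
      rw [← Real.rpow_natCast, ← Real.rpow_mul (by positivity), mul_comm, Real.rpow_mul (by positivity), Real.rpow_natCast]
    rw [hcomm]
    split_ifs with h
    · have h1 : 1 + ε * Real.log 2 ≤ (p : ℝ) ^ ε := by
        calc 1 + ε * Real.log 2 ≤ Real.exp (ε * Real.log 2) := by
              have := Real.add_one_le_exp (ε * Real.log 2); linarith
          _ = (2 : ℝ) ^ ε := by rw [Real.rpow_def_of_pos (by norm_num), mul_comm]
          _ ≤ _ := by gcongr
      have h2 : 1 + (a : ℝ) * (ε * Real.log 2) ≤ ((p : ℝ) ^ ε) ^ a := by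
        refine (one_add_mul_le_pow ?_ a).trans ?_
        · have : 0 < ε * Real.log 2 := by positivity
          linarith
        · gcongr
      refine le_trans ?_ (mul_le_mul_of_nonneg_left h2 (by linarith))
      rw [hA]
      have h3 : 0 < ε * Real.log 2 := by positivity
      have h4 : (1 + 1 / (ε * Real.log 2)) * (1 + (a : ℝ) * (ε * Real.log 2)) = 
        1 + 1 / (ε * Real.log 2) + a * (ε * Real.log 2) + a := by
        field_simp
        ring
      rw [h4]
      have : 0 < 1 / (ε * Real.log 2) := by positivity
      have : 0 ≤ a * (ε * Real.log 2) := by positivity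
      linarith
    · push Not at h
      rw [one_mul]
      have h1 : (2 : ℝ) ≤ (p : ℝ) ^ ε := by
        have h2 : (2 : ℝ) ^ (1 / ε) ≤ p := (Nat.le_ceil _).trans (by exact_mod_cast h)
        calc (2 : ℝ) = ((2 : ℝ) ^ (1 / ε)) ^ ε := by
              rw [← Real.rpow_mul (by norm_num), one_div, inv_mul_cancel₀ hε.ne', Real.rpow_one]
          _ ≤ _ := by gcongr
      have h3 : (a : ℝ) + 1 ≤ 2 ^ a := by exact_mod_cast Nat.lt_two_pow_self
      exact h3.trans (by gcongr)
  have hn' : ((n : ℝ)) = ∏ p ∈ n.primeFactors, (p : ℝ) ^ (n.factorization p) := by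
    nth_rw 1 [← Nat.prod_factorization_pow_eq_self hn.ne']
    rw [Finsupp.prod]
    push_cast
    rfl
  rw [Nat.card_divisors hn.ne']
  push_cast
  rw [hn']
  rw [← Real.finsetProd_rpow _ _ (fun i _ => by positivity)]
  calc ∏ x ∈ n.primeFactors, ((n.factorization x : ℝ) + 1)
      ≤ ∏ x ∈ n.primeFactors, ((if x < P then A else 1) * ((x : ℝ) ^ (n.factorization x)) ^ ε) := by
        apply Finset.prod_le_prod
        · intro i _; positivity
        · intro i hi
          exact hloc i (Nat.prime_of_mem_primeFactors hi) _
    _ = (∏ x ∈ n.primeFactors, (if x < P then A else 1)) * ∏ x ∈ n.primeFactors, ((x : ℝ) ^ (n.factorization x)) ^ ε :=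
        Finset.prod_mul_distrib
    _ ≤ _ := by
        gcongr
        rw [← Finset.prod_filter, Finset.prod_const]
        apply pow_le_pow_right₀ hA1
        refine le_trans (Finset.card_le_card (t := Finset.range P) ?_) (Finset.card_range P).le
        intro x hx
        rw [Finset.mem_filter] at hx
        exact Finset.mem_range.2 hx.2

lemma clTor_sum (N V M U : ℕ) (X : ℝ) (hX : 2 ≤ X) (hN : (N : ℝ) ≤ X)
    (hV : 54 * X ^ ((1 : ℝ) / 4) < V + 1) (hM : 9 * X ^ ((1 : ℝ) / 2) < M + 1)
    (hU : 54 * X ^ ((3 : ℝ) / 4) < U + 1) :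
    (∑ d ∈ Finset.Icc 2 N, if Squarefree d then
          ((clTor (Qpos d) 3 : ℝ) ^ 2 + (clTor (Qneg d) 3 : ℝ) ^ 2) else 0)
      ≤ 2 * ((∑ e ∈ (sIcc N).erase 0, (Tset V M U e).card ^ 2 : ℕ) : ℝ) + 4 * N := by
  have key : ∀ d ∈ Finset.Icc 2 N, Squarefree d → ∀ e : ℤ, (e = d ∨ e = -d) → 
      (e = d → clTor (Qpos d) 3 ≤ (Tset V M U e).card + 1) ∧
      (e = -d → clTor (Qneg d) 3 ≤ (Tset V M U e).card + 1) := by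
    intro d hd hsq e he
    rw [Finset.mem_Icc] at hd
    have hd0 : (0 : ℝ) < d := by have := hd.1; positivity
    have hdX : (d : ℝ) ≤ X := le_trans (by exact_mod_cast hd.2) hN
    set D : ℝ := (d : ℝ) ^ ((1 : ℝ) / 4) with hD
    set Y : ℝ := X ^ ((1 : ℝ) / 4) with hY
    have hX0 : 0 ≤ X := by linarith
    have hD0 : 0 < D := by positivity
    have hDY : D ≤ Y := by rw [hD, hY]; gcongr
    have hD2 : Real.sqrt d = D ^ 2 := by
      rw [hD, Real.sqrt_eq_rpow, ← Real.rpow_natCast, ← Real.rpow_mul hd0.le]; norm_num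
    have hY2 : X ^ ((1 : ℝ) / 2) = Y ^ 2 := by
      rw [hY, ← Real.rpow_natCast, ← Real.rpow_mul hX0]; norm_num
    have hY3 : X ^ ((3 : ℝ) / 4) = Y ^ 3 := by
      rw [hY, ← Real.rpow_natCast, ← Real.rpow_mul hX0]; norm_num
    rw [hY2] at hM
    rw [hY3] at hU
    have hbd : ∀ (z : ℤ) (K : ℕ) (b : ℝ), |(z : ℝ)| ≤ b → b < K + 1 → z.natAbs ≤ K := by
      intro z K b h1 h2
      have h3 : ((z.natAbs : ℕ) : ℝ) < ((K + 1 : ℕ) : ℝ) := by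
        rw [Nat.cast_natAbs]; push_cast; linarith
      have : z.natAbs < K + 1 := by exact_mod_cast h3
      omega
    apply clTor_pos_neg d hd.1 hsq (3 * D) (by positivity) (by rw [hD2]; nlinarith [pow_pos hD0 2]) e he
    intro m u v heq hm0 hv0 hm hu hv
    simp only [Tset, Finset.mem_filter, Finset.mem_product, Finset.mem_erase, mem_sIcc]
    refine ⟨⟨⟨hv0, ?_⟩, ?_, ?_⟩, heq, hm0⟩
    · refine hbd v V (54 * Y) ?_ hV
      rw [hD2] at hv
      have : |(v : ℝ)| ≤ 54 * D := by
        have h1 : |(v : ℝ)| * D ^ 2 ≤ (54 * D) * D ^ 2 := by nlinarith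
        exact le_of_mul_le_mul_right h1 (by positivity)
      linarith
    · refine hbd m M (9 * Y ^ 2) ?_ hM
      refine hm.trans ?_
      rw [mul_pow]
      norm_num
      gcongr
    · refine hbd u U (54 * Y ^ 3) ?_ hU
      refine hu.trans ?_
      have : D ^ 3 ≤ Y ^ 3 := by gcongr
      nlinarith
  have hterm : ∀ d ∈ Finset.Icc 2 N, (if Squarefree d then
          ((clTor (Qpos d) 3 : ℝ) ^ 2 + (clTor (Qneg d) 3 : ℝ) ^ 2) else 0) ≤
      2 * ((((Tset V M U (d : ℤ)).card ^ 2 + (Tset V M U (-(d : ℤ))).card ^ 2 : ℕ)) : ℝ) + 4 := by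
    intro d hd
    split_ifs with hsq
    · have h1 := (key d hd hsq d (Or.inl rfl)).1 rfl
      have h2 := (key d hd hsq (-d) (Or.inr rfl)).2 rfl
      have h1' : (clTor (Qpos d) 3 : ℝ) ≤ ((Tset V M U (d : ℤ)).card : ℝ) + 1 := by exact_mod_cast h1
      have h2' : (clTor (Qneg d) 3 : ℝ) ≤ ((Tset V M U (-(d : ℤ))).card : ℝ) + 1 := by exact_mod_cast h2
      push_cast
      have h3 : (clTor (Qpos d) 3 : ℝ) ^ 2 ≤ (((Tset V M U (d : ℤ)).card : ℝ) + 1) ^ 2 := by gcongr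
      have h4 : (clTor (Qneg d) 3 : ℝ) ^ 2 ≤ (((Tset V M U (-(d : ℤ))).card : ℝ) + 1) ^ 2 := by gcongr
      nlinarith [sq_nonneg (((Tset V M U (d : ℤ)).card : ℝ) - 1), sq_nonneg (((Tset V M U (-(d : ℤ))).card : ℝ) - 1)]
    · positivity
  refine (Finset.sum_le_sum hterm).trans ?_
  rw [Finset.sum_add_distrib, ← Finset.mul_sum, ← Nat.cast_sum, sum_sym]
  have hsub : Finset.Icc 2 N ⊆ Finset.Icc 1 N := Finset.Icc_subset_Icc (by norm_num) le_rfl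
  have hA : ∑ d ∈ Finset.Icc 2 N, ((Tset V M U (d : ℤ)).card ^ 2 + (Tset V M U (-(d : ℤ))).card ^ 2)
      ≤ ∑ d ∈ Finset.Icc 1 N, ((Tset V M U (d : ℤ)).card ^ 2 + (Tset V M U (-(d : ℤ))).card ^ 2) :=
    Finset.sum_le_sum_of_subset hsub
  have hA' : ((∑ d ∈ Finset.Icc 2 N, ((Tset V M U (d : ℤ)).card ^ 2 + (Tset V M U (-(d : ℤ))).card ^ 2) : ℕ) : ℝ)
      ≤ ((∑ d ∈ Finset.Icc 1 N, ((Tset V M U (d : ℤ)).card ^ 2 + (Tset V M U (-(d : ℤ))).card ^ 2) : ℕ) : ℝ) := by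
    exact_mod_cast hA
  have hB : (∑ _d ∈ Finset.Icc 2 N, (4 : ℝ)) ≤ 4 * N := by
    rw [Finset.sum_const, Nat.card_Icc, nsmul_eq_mul, mul_comm]
    gcongr
    omega
  linarith

lemma harmonic_div (R V : ℕ) (b : ℝ) (hb : 1 ≤ b) (hV : (V : ℝ) ≤ 54 * b) :
    ((∑ w ∈ Finset.Icc 1 V, R / w : ℕ) : ℝ) ≤ R * (5401 * b ^ ((1 : ℝ) / 100)) := by
  have h1 : ((∑ w ∈ Finset.Icc 1 V, R / w : ℕ) : ℝ) ≤ R * ((harmonic V : ℚ) : ℝ) := by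
    rw [harmonic_eq_sum_Icc]
    push_cast
    rw [Finset.mul_sum]
    apply Finset.sum_le_sum
    intro i _
    rw [← div_eq_mul_inv]
    exact Nat.cast_div_le
  refine h1.trans ?_
  gcongr
  refine (harmonic_le_one_add_log V).trans ?_
  have h2 : Real.log V ≤ (V : ℝ) ^ ((1 : ℝ) / 100) / (1 / 100) := Real.log_le_rpow_div (by positivity) (by norm_num)
  have h3 : (V : ℝ) ^ ((1 : ℝ) / 100) ≤ 54 * b ^ ((1 : ℝ) / 100) := by
    calc (V : ℝ) ^ ((1 : ℝ) / 100) ≤ (54 * b) ^ ((1 : ℝ) / 100) := by gcongr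
      _ = 54 ^ ((1 : ℝ) / 100) * b ^ ((1 : ℝ) / 100) := Real.mul_rpow (by norm_num) (by linarith)
      _ ≤ 54 * b ^ ((1 : ℝ) / 100) := by
        gcongr
        calc (54 : ℝ) ^ ((1 : ℝ) / 100) ≤ 54 ^ (1 : ℝ) := by
              apply Real.rpow_le_rpow_of_exponent_le <;> norm_num
          _ = 54 := by norm_num
  have h4 : 1 ≤ b ^ ((1 : ℝ) / 100) := Real.one_le_rpow hb (by norm_num)
  linarith

lemma final_arith (V M Δ Q t a δ C1 : ℝ) (hV : 0 ≤ V) (hM : 0 ≤ M) (hΔ : 0 ≤ Δ) (hQ : 0 ≤ Q)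
    (ht1 : 1 ≤ t) (ha1 : 1 ≤ a) (hδ1 : 1 ≤ δ) (hC1 : 0 < C1)
    (k1 : 2 * V + 1 ≤ 109 * t) (k2 : 2 * M + 1 ≤ 19 * a) (k3 : Δ ≤ C1 * δ)
    (k4 : Q ≤ 4 * (C1 * δ) * ((54 + C1 * 16203) * (a * δ ^ 3))) :
    (2 * V + 1) * (2 * ((2 * M + 1) * Q) + (2 * Δ) * (2 * Δ) * ((2 * M + 1) * (2 * M + 1))) ≤
    (109 * (2 * (19 * (4 * C1 * (54 + C1 * 16203))) + (2 * C1) * (2 * C1) * (19 * 19))) * (t * a ^ 2 * δ ^ 4) := by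
  have hδ24 : δ ^ 2 ≤ δ ^ 4 := pow_le_pow_right₀ hδ1 (by norm_num)
  have p1 : (2 * M + 1) * Q ≤ (19 * a) * (4 * (C1 * δ) * ((54 + C1 * 16203) * (a * δ ^ 3))) :=
    mul_le_mul k2 k4 hQ (by linarith)
  have p2 : (2 * Δ) * (2 * Δ) ≤ (2 * (C1 * δ)) * (2 * (C1 * δ)) :=
    mul_le_mul (by linarith) (by linarith) (by linarith) (by positivity)
  have p3 : (2 * M + 1) * (2 * M + 1) ≤ (19 * a) * (19 * a) :=
    mul_le_mul k2 k2 (by linarith) (by linarith)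
  have p4 : (2 * Δ) * (2 * Δ) * ((2 * M + 1) * (2 * M + 1)) ≤
      (2 * (C1 * δ)) * (2 * (C1 * δ)) * ((19 * a) * (19 * a)) :=
    mul_le_mul p2 p3 (by positivity) (by positivity)
  have p5 : (2 * (C1 * δ)) * (2 * (C1 * δ)) * ((19 * a) * (19 * a)) ≤
      (2 * C1) * (2 * C1) * (19 * 19) * a ^ 2 * δ ^ 4 := by
    have : (2 * (C1 * δ)) * (2 * (C1 * δ)) * ((19 * a) * (19 * a)) =
      (2 * C1) * (2 * C1) * (19 * 19) * a ^ 2 * δ ^ 2 := by ring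
    rw [this]
    exact mul_le_mul_of_nonneg_left hδ24 (by positivity)
  have p6 : 2 * ((2 * M + 1) * Q) + (2 * Δ) * (2 * Δ) * ((2 * M + 1) * (2 * M + 1)) ≤
      (2 * (19 * (4 * C1 * (54 + C1 * 16203))) + (2 * C1) * (2 * C1) * (19 * 19)) * (a ^ 2 * δ ^ 4) := by
    have : 2 * ((19 * a) * (4 * (C1 * δ) * ((54 + C1 * 16203) * (a * δ ^ 3)))) +
      (2 * C1) * (2 * C1) * (19 * 19) * a ^ 2 * δ ^ 4 =
      (2 * (19 * (4 * C1 * (54 + C1 * 16203))) + (2 * C1) * (2 * C1) * (19 * 19)) * (a ^ 2 * δ ^ 4) := by ring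
    rw [← this]
    linarith
  have p7 := mul_le_mul k1 p6 (by positivity) (by linarith)
  refine p7.trans (le_of_eq ?_)
  ring

lemma final_bound : ∃ C : ℝ, ∀ X : ℝ, 2 ≤ X → ∃ V M U : ℕ,
    54 * X ^ ((1 : ℝ) / 4) < V + 1 ∧ 9 * X ^ ((1 : ℝ) / 2) < M + 1 ∧
    54 * X ^ ((3 : ℝ) / 4) < U + 1 ∧
    ((∑ e ∈ (sIcc ⌊X⌋₊).erase 0, (Tset V M U e).card ^ 2 : ℕ) : ℝ) ≤ C * X ^ ((23 : ℝ) / 18) := by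
  obtain ⟨C0, hC0, hdiv⟩ := divisor_bound (1 / 300) (by norm_num)
  set C1 : ℝ := C0 * 20000 ^ ((1 : ℝ) / 300) with hC1
  have hC1p : 0 < C1 := by positivity
  refine ⟨109 * (2 * (19 * (4 * C1 * (54 + C1 * 16203))) + (2 * C1) * (2 * C1) * (19 * 19)), ?_⟩
  intro X hX
  have hX0 : 0 < X := by linarith
  have hX1 : 1 ≤ X := by linarith
  set t : ℝ := X ^ ((1 : ℝ) / 4) with ht
  set a : ℝ := X ^ ((1 : ℝ) / 2) with ha
  set δ : ℝ := X ^ ((1 : ℝ) / 200) with hδ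
  have ht1 : 1 ≤ t := Real.one_le_rpow hX1 (by norm_num)
  have ha1 : 1 ≤ a := Real.one_le_rpow hX1 (by norm_num)
  have hδ1 : 1 ≤ δ := Real.one_le_rpow hX1 (by norm_num)
  have ht2 : t ^ 2 = a := by rw [ht, ha, ← Real.rpow_natCast, ← Real.rpow_mul hX0.le]; norm_num
  have ha2 : a ^ 2 = X := by rw [ha, ← Real.rpow_natCast, ← Real.rpow_mul hX0.le]; norm_num
  have hta : t ≤ a := by rw [← ht2]; nlinarith
  set V : ℕ := ⌊54 * t⌋₊ with hV
  set M : ℕ := ⌊9 * a⌋₊ with hM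
  set U : ℕ := ⌊54 * X ^ ((3 : ℝ) / 4)⌋₊ with hU
  set N : ℕ := ⌊X⌋₊ with hN
  set R : ℕ := ⌈2 * a⌉₊ with hR
  have hVle : (V : ℝ) ≤ 54 * t := Nat.floor_le (by positivity)
  have hMle : (M : ℝ) ≤ 9 * a := Nat.floor_le (by positivity)
  have hNle : (N : ℝ) ≤ X := Nat.floor_le (by positivity)
  have hRle : (R : ℝ) ≤ 3 * a := by
    have := Nat.ceil_lt_add_one (show 0 ≤ 2 * a by positivity)
    linarith
  have hRge : 2 * a ≤ (R : ℝ) := Nat.le_ceil _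
  refine ⟨V, M, U, Nat.lt_floor_add_one _, Nat.lt_floor_add_one _, Nat.lt_floor_add_one _, ?_⟩
  set L : ℕ := 16 * M ^ 3 + N * V ^ 2 + V ^ 2 with hL
  have hV2 : (V : ℝ) ^ 2 ≤ 2916 * a := by
    calc (V : ℝ) ^ 2 ≤ (54 * t) ^ 2 := by gcongr
      _ = 2916 * a := by rw [mul_pow, ht2]; norm_num
  have hM3 : (M : ℝ) ^ 3 ≤ 729 * a ^ 3 := by
    calc (M : ℝ) ^ 3 ≤ (9 * a) ^ 3 := by gcongr
      _ = 729 * a ^ 3 := by rw [mul_pow]; norm_num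
  have hLle : (L : ℝ) ≤ 20000 * a ^ 3 := by
    rw [hL]; push_cast
    have h1 : (N : ℝ) * (V : ℝ) ^ 2 ≤ a ^ 2 * (2916 * a) := by
      rw [ha2]; gcongr
    have h2 : a ≤ a ^ 3 := le_self_pow₀ ha1 (by norm_num)
    nlinarith
  set Δ : ℕ := ⌊C0 * (L : ℝ) ^ ((1 : ℝ) / 300)⌋₊ with hΔdef
  have hΔle : (Δ : ℝ) ≤ C1 * δ := by
    have h1 : (Δ : ℝ) ≤ C0 * (L : ℝ) ^ ((1 : ℝ) / 300) := Nat.floor_le (by positivity)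
    have h2 : (L : ℝ) ^ ((1 : ℝ) / 300) ≤ (20000 * a ^ 3) ^ ((1 : ℝ) / 300) := by gcongr
    have h3 : (20000 * a ^ 3) ^ ((1 : ℝ) / 300) = 20000 ^ ((1 : ℝ) / 300) * δ := by
      rw [Real.mul_rpow (by norm_num) (by positivity)]
      congr 1
      rw [ha, hδ, ← Real.rpow_natCast, ← Real.rpow_mul hX0.le, ← Real.rpow_mul hX0.le]
      norm_num
    rw [h3] at h2
    calc (Δ : ℝ) ≤ C0 * (L : ℝ) ^ ((1 : ℝ) / 300) := h1
      _ ≤ C0 * (20000 ^ ((1 : ℝ) / 300) * δ) := by gcongr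
      _ = C1 * δ := by rw [hC1]; ring
  have hΔ : ∀ n : ℕ, 0 < n → n ≤ L → n.divisors.card ≤ Δ := by
    intro n hn hnL
    apply Nat.le_floor
    refine (hdiv n hn).trans ?_
    gcongr
  have hR2 : 2 * N ≤ R ^ 2 := by
    have : (2 * N : ℝ) ≤ (R : ℝ) ^ 2 := by
      calc (2 * N : ℝ) ≤ (2 * a) ^ 2 := by rw [mul_pow, ha2]; linarith
        _ ≤ _ := by gcongr
    exact_mod_cast this
  set Λ : ℕ := ∑ w ∈ Finset.Icc 1 V, R / w with hΛ
  have hΛle : (Λ : ℝ) ≤ 16203 * a * δ ^ 2 := by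
    have h1 := harmonic_div R V X hX1 (by
      have : t ≤ X := by rw [← ha2]; nlinarith
      linarith)
    have h2 : X ^ ((1 : ℝ) / 100) = δ ^ 2 := by
      rw [hδ, ← Real.rpow_natCast, ← Real.rpow_mul hX0.le]; norm_num
    rw [h2] at h1
    calc (Λ : ℝ) ≤ R * (5401 * δ ^ 2) := h1
      _ ≤ (3 * a) * (5401 * δ ^ 2) := by gcongr
      _ = _ := by ring
  have hmain := second_moment_count L Δ N R M V U Λ hΔ (by omega) (by omega) (by omega) hR2 le_rfl
  have hmain' : ((∑ e ∈ (sIcc N).erase 0, (Tset V M U e).card ^ 2 : ℕ) : ℝ) ≤ (2 * V + 1) *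
      (2 * ((2 * M + 1) * (4 * Δ * (V + Δ * Λ))) + (2 * Δ) * (2 * Δ) * ((2 * M + 1) * (2 * M + 1))) := by
    exact_mod_cast hmain
  refine hmain'.trans ?_
  have k1 : (2 * V + 1 : ℝ) ≤ 109 * t := by linarith
  have k2 : (2 * M + 1 : ℝ) ≤ 19 * a := by linarith
  have k3 : (V + Δ * Λ : ℝ) ≤ (54 + C1 * 16203) * (a * δ ^ 3) := by
    have e1 : (Δ * Λ : ℝ) ≤ (C1 * δ) * (16203 * a * δ ^ 2) := by gcongr
    have e2 : a ≤ a * δ ^ 3 := le_mul_of_one_le_right (by linarith) (one_le_pow₀ hδ1)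
    nlinarith
  have k4 : (4 * Δ * (V + Δ * Λ) : ℝ) ≤ 4 * (C1 * δ) * ((54 + C1 * 16203) * (a * δ ^ 3)) := by gcongr
  have hexp : t * a ^ 2 * δ ^ 4 ≤ X ^ ((23 : ℝ) / 18) := by
    rw [ha2, ht, hδ, ← Real.rpow_natCast, ← Real.rpow_mul hX0.le]
    nth_rw 2 [← Real.rpow_one X]
    rw [← Real.rpow_add hX0, ← Real.rpow_add hX0]
    apply Real.rpow_le_rpow_of_exponent_le hX1
    norm_num
  refine le_trans (final_arith V M Δ (4 * Δ * (V + Δ * Λ)) t a δ C1 (by positivity) (by positivity)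
    (by positivity) (by positivity) ht1 ha1 hδ1 hC1p k1 k2 hΔle k4) ?_
  gcongr

/-- **Heath-Brown–Pierce.** There is a constant `C` such that for every real `X ≥ 2`, the
sum over squarefree `1 < d ≤ X` of `|Cl_{ℚ(√d)}[3]|² + |Cl_{ℚ(√-d)}[3]|²` is at most
`C · X^{23/18}`. -/
theorem second_moment_three_torsion_quadratic :
    ∃ C : ℝ, ∀ X : ℝ, 2 ≤ X →
      (∑ d ∈ Finset.Icc 2 ⌊X⌋₊, if Squarefree d then
          ((clTor (Qpos d) 3 : ℝ) ^ 2 + (clTor (Qneg d) 3 : ℝ) ^ 2) else 0)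
        ≤ C * X ^ ((23 : ℝ) / 18) := by
  obtain ⟨C, hC⟩ := final_bound
  refine ⟨2 * C + 4, ?_⟩
  intro X hX
  obtain ⟨V, M, U, hV, hM, hU, hb⟩ := hC X hX
  have hNle : ((⌊X⌋₊ : ℕ) : ℝ) ≤ X := Nat.floor_le (by linarith)
  refine (clTor_sum ⌊X⌋₊ V M U X hX hNle hV hM hU).trans ?_
  have h1 : X ≤ X ^ ((23 : ℝ) / 18) := by
    nth_rw 1 [← Real.rpow_one X]
    exact Real.rpow_le_rpow_of_exponent_le (by linarith) (by norm_num)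
  linarith
end

section
/- (Lemke Oliver–Thorne) For each degree n ≥ 6 there exists a constant a_n such that for all real X ≥ 1, the number N_n(X) of degree-n subfields K ⊂ ℂ with D_K ≤ X satisfies N_n(X) ≤ a_n · X^{1.564·(log n)²}. -/
open NumberField
open scoped Classical

/-- The absolute value of the discriminant of a finite extension of `ℚ` realized as a
subfield of `ℂ` (junk value `0` if the extension is infinite). -/
noncomputable def absDiscC (K : IntermediateField ℚ ℂ) : ℕ :=
  if h : FiniteDimensional ℚ K then
    haveI := h
    haveI : NumberField K := ⟨⟩
    (NumberField.discr K).natAbs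
  else 0

def NumGood (n : ℕ) : Prop := ∃ r d : ℕ, 0 < r ∧ r * n ≤ (d + r - 1).choose r ∧
  ((∑ e ∈ Finset.range d, (r * n - (e + r - 1).choose r) : ℕ) : ℝ) ≤ n * (1.564 * Real.log n ^ 2)

lemma numGood_chunk (a b r d p : ℕ) {n : ℕ} (ha0 : 0 < a) (han : a ≤ n) (hnb : n ≤ b) (hr : 0 < r)
    (h1 : r * b ≤ (d + r - 1).choose r) (h2 : 2 ^ p ≤ a ^ 20)
    (h3 : (∑ e ∈ Finset.range d, (r * b - (e + r - 1).choose r)) * 40000000000000 ≤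
      b * 1564 * 6931 ^ 2 * p ^ 2) : NumGood n := by
  refine ⟨r, d, hr, (Nat.mul_le_mul_left r hnb).trans h1, ?_⟩
  have hmono : (∑ e ∈ Finset.range d, (r * n - (e + r - 1).choose r)) * b ≤
      (∑ e ∈ Finset.range d, (r * b - (e + r - 1).choose r)) * n := by
    rw [Finset.sum_mul, Finset.sum_mul]
    refine Finset.sum_le_sum fun e _ => ?_
    rw [Nat.sub_mul, Nat.sub_mul, mul_right_comm r n b]
    have := Nat.mul_le_mul_left ((e + r - 1).choose r) hnb
    omega
  have hn0 : 0 < n := by omega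
  have hb0 : 0 < b := by omega
  have hlog : (p : ℝ) * 0.6931 / 20 ≤ Real.log n := by
    have e1 : Real.log ((2 : ℝ) ^ p) ≤ Real.log ((a : ℝ) ^ 20) := by
      apply Real.log_le_log (by positivity); exact_mod_cast h2
    rw [Real.log_pow, Real.log_pow] at e1
    have e2 : Real.log a ≤ Real.log n := by
      apply Real.log_le_log (by exact_mod_cast ha0); exact_mod_cast han
    have e3 := Real.log_two_gt_d9
    have e4 : (p : ℝ) * 0.6931 ≤ p * Real.log 2 := by
      gcongr; linarith
    push_cast at e1
    linarith
  have hsq : ((p : ℝ) * 0.6931 / 20) ^ 2 ≤ Real.log n ^ 2 := by gcongr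
  set S := ∑ e ∈ Finset.range d, (r * n - (e + r - 1).choose r)
  set T := ∑ e ∈ Finset.range d, (r * b - (e + r - 1).choose r)
  have hmono' : (S : ℝ) * b ≤ T * n := by exact_mod_cast hmono
  have h3' : (T : ℝ) * 40000000000000 ≤ b * 1564 * 6931 ^ 2 * p ^ 2 := by exact_mod_cast h3
  have hbR : (0 : ℝ) < b := by exact_mod_cast hb0
  have hnR : (0 : ℝ) < n := by exact_mod_cast hn0
  have h4 : (T : ℝ) ≤ b * (1.564 * Real.log n ^ 2) := by
    have : (b : ℝ) * (1.564 * ((p : ℝ) * 0.6931 / 20) ^ 2) ≤ b * (1.564 * Real.log n ^ 2) := by gcongr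
    nlinarith
  refine le_of_mul_le_mul_right ?_ hbR
  calc (S : ℝ) * b ≤ T * n := hmono'
    _ ≤ (b * (1.564 * Real.log n ^ 2)) * n := by gcongr
    _ = _ := by ring

lemma numGood_large {n : ℕ} (hn : 699956 ≤ n) : NumGood n := by
  have hex : ∃ r : ℕ, 0 < r ∧ r * n ≤ r.centralBinom := by
    refine ⟨2 * n, by omega, ?_⟩
    have h1 := Nat.four_pow_lt_mul_centralBinom (2 * n) (by omega)
    have h2 : n ≤ 2 ^ n := Nat.lt_two_pow_self.le
    have h3 : (4 : ℕ) ^ (2 * n) = 2 ^ n * 2 ^ n * 2 ^ n * 2 ^ n := by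
      rw [← mul_pow, ← mul_pow, ← mul_pow, pow_mul]; norm_num
    have h4 : (2 * n) * (2 * n * n) ≤ 4 ^ (2 * n) := by
      rw [h3]
      calc (2 * n) * (2 * n * n) = 4 * n * n * n := by ring
        _ ≤ 2 ^ n * 2 ^ n * 2 ^ n * 2 ^ n := by gcongr; omega
    exact le_of_mul_le_mul_left (h4.trans h1.le) (by omega)
  obtain ⟨hr0, hr⟩ := Nat.find_spec hex
  have hmin : ∀ m < Nat.find hex, ¬ (0 < m ∧ m * n ≤ m.centralBinom) :=
    fun m hm => Nat.find_min hex hm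
  set r := Nat.find hex with hrdef
  have hr13 : 13 ≤ r := by
    by_contra! hlt
    interval_cases r <;> simp [Nat.centralBinom, Nat.choose] at hr <;> omega
  obtain ⟨m, hm⟩ : ∃ m, r = m + 1 := ⟨r - 1, by omega⟩
  have hm12 : 12 ≤ m := by omega
  have hmn : m.centralBinom < m * n := by
    have := hmin m (by omega)
    by_contra! hcon
    exact this ⟨by omega, hcon⟩
  refine ⟨r, r + 1, hr0, ?_, ?_⟩
  · rw [show r + 1 + r - 1 = 2 * r by omega]; exact hr
  · have hS : (∑ e ∈ Finset.range (r + 1), (r * n - (e + r - 1).choose r)) ≤ (r + 1) * (r * n) := by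
      refine (Finset.sum_le_card_nsmul _ _ (r * n) (fun e _ => Nat.sub_le _ _)).trans ?_
      simp
    have hS' : ((∑ e ∈ Finset.range (r + 1), (r * n - (e + r - 1).choose r) : ℕ) : ℝ) ≤
        ((r : ℝ) + 1) * (r * n) := by exact_mod_cast hS
    refine hS'.trans ?_
    have h4 : 4 ^ m < m * (m * n) :=
      (Nat.four_pow_lt_mul_centralBinom m (by omega)).trans (Nat.mul_lt_mul_of_pos_left hmn (by omega))
    have hmR : (12 : ℝ) ≤ m := by exact_mod_cast hm12
    have hnR : (0 : ℝ) < n := by have : 0 < n := by omega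
                                 exact_mod_cast this
    have h5 : (m : ℝ) * Real.log 4 ≤ Real.log m + (Real.log m + Real.log n) := by
      rw [← Real.log_mul (by positivity) (by positivity), ← Real.log_mul (by positivity) (by positivity),
        ← Real.log_pow]
      apply Real.log_le_log (by positivity)
      exact_mod_cast h4.le
    have h6 : Real.log 4 = 2 * Real.log 2 := by
      rw [show (4 : ℝ) = 2 ^ 2 by norm_num, Real.log_pow]; norm_num
    have h7 : Real.log m ≤ 4 * Real.log 2 + m / 16 - 1 := by
      have e1 := Real.log_le_sub_one_of_pos (show (0 : ℝ) < m / 16 by positivity)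
      rw [Real.log_div (by positivity) (by norm_num), show (16 : ℝ) = 2 ^ 4 by norm_num, Real.log_pow] at e1
      push_cast at e1
      linarith
    have g1 := Real.log_two_gt_d9
    have g2 := Real.log_two_lt_d9
    have h8 : 1.26 * (m : ℝ) - 3.546 ≤ Real.log n := by
      rw [h6] at h5
      nlinarith
    have h9 : (1.26 * (m : ℝ) - 3.546) ^ 2 ≤ Real.log n ^ 2 := by
      apply pow_le_pow_left₀ (by linarith) h8
    have h10 : ((m : ℝ) + 1 + 1) * (m + 1) ≤ 1.564 * Real.log n ^ 2 := by
      nlinarith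
    rw [hm]; push_cast
    nlinarith

set_option exponentiation.threshold 1000 in
theorem numGood (n : ℕ) (hn : 6 ≤ n) : NumGood n := by
  by_cases h : 699956 ≤ n
  · exact numGood_large h
  by_cases h8 : n ≤ 8
  · exact numGood_chunk 6 8 1 8 51 (by norm_num) (by omega) h8 (by norm_num)
      (by norm_num [Nat.choose]) (by norm_num1) (by norm_num [Finset.sum_range_succ, Nat.choose])
  by_cases h13 : n ≤ 13
  · exact numGood_chunk 9 13 1 13 63 (by norm_num) (by omega) h13 (by norm_num)
      (by norm_num [Nat.choose]) (by norm_num1) (by norm_num [Finset.sum_range_succ, Nat.choose])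
  by_cases h20 : n ≤ 20
  · exact numGood_chunk 14 20 1 20 76 (by norm_num) (by omega) h20 (by norm_num)
      (by norm_num [Nat.choose]) (by norm_num1) (by norm_num [Finset.sum_range_succ, Nat.choose])
  by_cases h28 : n ≤ 28
  · exact numGood_chunk 21 28 2 11 87 (by norm_num) (by omega) h28 (by norm_num)
      (by norm_num [Nat.choose]) (by norm_num1) (by norm_num [Finset.sum_range_succ, Nat.choose])
  by_cases h43 : n ≤ 43
  · exact numGood_chunk 29 43 2 13 97 (by norm_num) (by omega) h43 (by norm_num)
      (by norm_num [Nat.choose]) (by norm_num1) (by norm_num [Finset.sum_range_succ, Nat.choose])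
  by_cases h69 : n ≤ 69
  · exact numGood_chunk 44 69 2 17 109 (by norm_num) (by omega) h69 (by norm_num)
      (by norm_num [Nat.choose]) (by norm_num1) (by norm_num [Finset.sum_range_succ, Nat.choose])
  by_cases h123 : n ≤ 123
  · exact numGood_chunk 70 123 3 13 122 (by norm_num) (by omega) h123 (by norm_num)
      (by norm_num [Nat.choose]) (by norm_num1) (by norm_num [Finset.sum_range_succ, Nat.choose])
  by_cases h261 : n ≤ 261
  · exact numGood_chunk 124 261 3 16 139 (by norm_num) (by omega) h261 (by norm_num)
      (by norm_num [Nat.choose]) (by norm_num1) (by norm_num [Finset.sum_range_succ, Nat.choose])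
  by_cases h719 : n ≤ 719
  · exact numGood_chunk 262 719 4 15 160 (by norm_num) (by omega) h719 (by norm_num)
      (by norm_num [Nat.choose]) (by norm_num1) (by norm_num [Finset.sum_range_succ, Nat.choose])
  by_cases h3003 : n ≤ 3003
  · exact numGood_chunk 720 3003 5 16 189 (by norm_num) (by omega) h3003 (by norm_num)
      (by norm_num [Nat.choose]) (by norm_num1) (by norm_num [Finset.sum_range_succ, Nat.choose])
  by_cases h26120 : n ≤ 26120
  · exact numGood_chunk 3004 26120 7 17 231 (by norm_num) (by omega) h26120 (by norm_num)
      (by norm_num [Nat.choose]) (by norm_num1) (by norm_num [Finset.sum_range_succ, Nat.choose])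
  by_cases h699955 : n ≤ 699955
  · exact numGood_chunk 26121 699955 9 20 293 (by norm_num) (by omega) h699955 (by norm_num)
      (by norm_num [Nat.choose]) (by norm_num1) (by norm_num [Finset.sum_range_succ, Nat.choose])
  omega

section MatrixReduction
open Matrix

noncomputable def qf {ι : Type} [Fintype ι] (M : Matrix ι ι ℝ) (x : ι → ℤ) : ℝ :=
  (fun i => (x i : ℝ)) ⬝ᵥ (M *ᵥ (fun i => (x i : ℝ)))

def Red (ι : Type) [Fintype ι] [DecidableEq ι] : Prop :=
  ∃ C : ℝ, 0 < C ∧ ∀ M : Matrix ι ι ℝ, M.PosDef →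
    ∃ U : Matrix ι ι ℤ, IsUnit U.det ∧ ∏ i, qf M (U i) ≤ C * M.det

lemma qf_pos {ι : Type} [Fintype ι] {M : Matrix ι ι ℝ} (hM : M.PosDef) {x : ι → ℤ}
    (hx : x ≠ 0) : 0 < qf M x := by
  have := hM.dotProduct_mulVec_pos (x := fun i => (x i : ℝ)) (by
    intro h; apply hx; ext i; have := congrFun h i; simpa using this)
  simpa [qf] using this

lemma qf_lower {ι : Type} [Fintype ι] {M : Matrix ι ι ℝ} (hM : M.PosDef) :
    ∃ c : ℝ, 0 < c ∧ ∀ x : ι → ℤ, x ≠ 0 → c ≤ qf M x := by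
  cases isEmpty_or_nonempty ι with
  | inl h => exact ⟨1, one_pos, fun x hx => (hx (Subsingleton.elim _ _)).elim⟩
  | inr h =>
  have hcomp : IsCompact (Metric.sphere (0 : ι → ℝ) 1) := isCompact_sphere _ _
  have hne : (Metric.sphere (0 : ι → ℝ) 1).Nonempty := by
    exact ⟨fun _ => 1, by simp⟩
  have hcont : Continuous (fun x : ι → ℝ => x ⬝ᵥ (M *ᵥ x)) := by
    unfold dotProduct Matrix.mulVec dotProduct; fun_prop
  obtain ⟨z, hz, hmin⟩ := hcomp.exists_isMinOn hne hcont.continuousOn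
  have hz0 : z ≠ 0 := by
    rintro rfl; simp at hz
  have hpos : 0 < z ⬝ᵥ (M *ᵥ z) := by simpa using hM.dotProduct_mulVec_pos hz0
  refine ⟨_, hpos, fun x hx => ?_⟩
  set y : ι → ℝ := fun i => (x i : ℝ) with hy
  obtain ⟨i, hi⟩ := Function.ne_iff.1 hx
  have h1 : 1 ≤ ‖y‖ := by
    refine le_trans ?_ (norm_le_pi_norm y i)
    rw [hy]; simp only [Real.norm_eq_abs]
    have : (1 : ℤ) ≤ |x i| := Int.one_le_abs hi
    exact_mod_cast this
  have h2 := hmin (a := (‖y‖⁻¹) • y) (by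
    simp [norm_smul]; field_simp)
  simp only [Set.mem_ofPred_eq, Matrix.mulVec_smul, dotProduct_smul, smul_dotProduct, smul_eq_mul] at h2
  have h3 : y ⬝ᵥ (M *ᵥ y) = ‖y‖^2 * (‖y‖⁻¹ * (‖y‖⁻¹ * y ⬝ᵥ (M *ᵥ y))) := by field_simp
  change _ ≤ y ⬝ᵥ (M *ᵥ y)
  rw [h3]
  have h4 : 1 ≤ ‖y‖ ^ 2 := by nlinarith
  refine h2.trans (le_mul_of_one_le_left (hpos.le.trans h2) h4)

lemma row_ne_zero {ι : Type} [Fintype ι] [DecidableEq ι] {U : Matrix ι ι ℤ} (hU : IsUnit U.det)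
    (i : ι) : U i ≠ 0 := by
  intro h
  have := Matrix.det_eq_zero_of_row_eq_zero i (A := U) (fun j => congrFun h j)
  rw [this] at hU; exact not_isUnit_zero hU

lemma qf_conj {ι : Type} [Fintype ι] (M : Matrix ι ι ℝ) (U : Matrix ι ι ℤ) (x : ι → ℤ) :
    qf (U.map (Int.cast : ℤ → ℝ) * M * (U.map (Int.cast : ℤ → ℝ))ᵀ) x = qf M (x ᵥ* U) := by
  have h : (fun i => (((x ᵥ* U) i : ℤ) : ℝ)) = (fun i => (x i : ℝ)) ᵥ* (U.map (Int.cast : ℤ → ℝ)) := by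
    ext i; simp [Matrix.vecMul, dotProduct]
  unfold qf
  rw [h, ← Matrix.mulVec_mulVec, ← Matrix.mulVec_mulVec, Matrix.mulVec_transpose,
    Matrix.dotProduct_mulVec]

lemma det_map_cast {ι : Type} [Fintype ι] [DecidableEq ι] (U : Matrix ι ι ℤ) :
    (U.map (Int.cast : ℤ → ℝ)).det = (U.det : ℝ) := by
  have := (Int.castRingHom ℝ).map_det U
  simpa using this.symm

lemma det_sq_one {ι : Type} [Fintype ι] [DecidableEq ι] {U : Matrix ι ι ℤ} (hU : IsUnit U.det) :
    (U.det : ℝ) * (U.det : ℝ) = 1 := by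
  rcases Int.isUnit_iff.1 hU with h | h <;> simp [h]

lemma posDef_conj {ι : Type} [Fintype ι] [DecidableEq ι] {M : Matrix ι ι ℝ} (hM : M.PosDef)
    {U : Matrix ι ι ℤ} (hU : IsUnit U.det) :
    (U.map (Int.cast : ℤ → ℝ) * M * (U.map (Int.cast : ℤ → ℝ))ᵀ).PosDef := by
  have := hM.mul_mul_conjTranspose_same (B := U.map (Int.cast : ℤ → ℝ)) (by
    apply Matrix.vecMul_injective_of_isUnit
    rw [Matrix.isUnit_iff_isUnit_det, det_map_cast]
    rcases Int.isUnit_iff.1 hU with h | h <;> simp [h])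
  rwa [Matrix.conjTranspose_eq_transpose_of_trivial] at this

lemma Red.step {ι : Type} [Fintype ι] [DecidableEq ι] (h : Red ι) : Red (Unit ⊕ ι) := by
  obtain ⟨C, hC, hR⟩ := h
  refine ⟨2 ^ Fintype.card ι * C, by positivity, fun M hM => ?_⟩
  -- near minimal vector
  let S : Set ℝ := {q | ∃ U : Matrix (Unit ⊕ ι) (Unit ⊕ ι) ℤ, IsUnit U.det ∧ q = qf M (U (Sum.inl ()))}
  obtain ⟨c, hc, hlow⟩ := qf_lower hM
  have hSne : S.Nonempty := ⟨_, 1, by simp, rfl⟩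
  have hSb : BddBelow S := ⟨c, by
    rintro _ ⟨U, hU, rfl⟩; exact hlow _ (row_ne_zero hU _)⟩
  have hSpos : 0 < sInf S := lt_of_lt_of_le hc (le_csInf hSne (by
    rintro _ ⟨U, hU, rfl⟩; exact hlow _ (row_ne_zero hU _)))
  obtain ⟨_, ⟨U1, hU1, rfl⟩, hlt⟩ := exists_lt_of_csInf_lt hSne (show sInf S < 2 * sInf S by linarith)
  set M1 := U1.map (Int.cast : ℤ → ℝ) * M * (U1.map (Int.cast : ℤ → ℝ))ᵀ with hM1
  have hM1p : M1.PosDef := posDef_conj hM hU1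
  have hdet1 : M1.det = M.det := by
    rw [hM1, Matrix.det_mul, Matrix.det_mul, Matrix.det_transpose, det_map_cast]
    linear_combination M.det * det_sq_one hU1
  set a := M1 (Sum.inl ()) (Sum.inl ()) with ha
  have haq : a = qf M (U1 (Sum.inl ())) := by
    have := qf_conj M U1 (Pi.single (Sum.inl ()) 1)
    rw [Matrix.single_one_vecMul] at this
    refine Eq.trans ?_ this
    have h2 : (fun i => (((Pi.single (Sum.inl ()) 1 : (Unit ⊕ ι) → ℤ) i : ℤ) : ℝ)) = Pi.single (Sum.inl ()) 1 := by
      ext i; simp [Pi.single_apply]; 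
    unfold qf
    rw [h2]; simp [ha, hM1]
  have hamin : ∀ U : Matrix (Unit ⊕ ι) (Unit ⊕ ι) ℤ, IsUnit U.det → ∀ i, a ≤ 2 * qf M1 (U i) := by
    intro U hU i
    have : qf M1 (U i) ∈ S := by
      refine ⟨(U * U1).submatrix (Equiv.swap i (Sum.inl ())) id, ?_, ?_⟩
      · rw [Matrix.det_permute]
        rw [Matrix.det_mul]
        refine IsUnit.mul ?_ (hU.mul hU1)
        exact Units.isUnit _
      · rw [hM1, qf_conj]
        congr 1
        ext j
        simp [Matrix.mul_apply, Matrix.vecMul, dotProduct]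
    have := csInf_le hSb this
    rw [haq]; linarith
  have hapos : 0 < a := hM1p.diag_pos
  have hsymm : ∀ i j, M1 i j = M1 j i := fun i j => by
    simpa using (hM1p.isHermitian.apply i j).symm
  let b : ι → ℝ := fun j => M1 (Sum.inl ()) (Sum.inr j)
  let Sc : Matrix ι ι ℝ := Matrix.of fun j k => M1 (Sum.inr j) (Sum.inr k) - b j * b k / a
  have hqS : ∀ y : ι → ℝ, y ⬝ᵥ (Sc *ᵥ y) = y ⬝ᵥ ((Matrix.of fun j k => M1 (Sum.inr j) (Sum.inr k)) *ᵥ y)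
      - (b ⬝ᵥ y) ^ 2 / a := by
    intro y
    have e0 : (b ⬝ᵥ y) ^ 2 / a = ∑ i, ∑ j, (b i * y i) * (b j * y j) / a := by
      simp only [dotProduct, sq, Finset.sum_mul_sum, Finset.sum_div]
    rw [e0]
    simp only [Matrix.mulVec, dotProduct, Sc, Matrix.of_apply, Finset.mul_sum,
      ← Finset.sum_sub_distrib]
    refine Finset.sum_congr rfl fun i _ => Finset.sum_congr rfl fun j _ => ?_
    ring
  have key : ∀ (t : ℝ) (y : ι → ℝ), (Sum.elim (fun _ => t) y) ⬝ᵥ (M1 *ᵥ (Sum.elim (fun _ => t) y))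
      = y ⬝ᵥ (Sc *ᵥ y) + a * (t + (b ⬝ᵥ y) / a) ^ 2 := by
    intro t y
    rw [hqS]
    have e1 : (Sum.elim (fun _ => t) y) ⬝ᵥ (M1 *ᵥ (Sum.elim (fun _ => t) y)) =
      a * t ^ 2 + 2 * t * (b ⬝ᵥ y) + y ⬝ᵥ ((Matrix.of fun j k => M1 (Sum.inr j) (Sum.inr k)) *ᵥ y) := by
      simp only [dotProduct, Matrix.mulVec, Fintype.sum_sum_type, Finset.univ_unique,
        Finset.sum_singleton, Sum.elim_inl, Sum.elim_inr, Matrix.of_apply, mul_add,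
        Finset.sum_add_distrib]
      have e2 : ∑ x, y x * (M1 (Sum.inr x) (Sum.inl default) * t) = t * ∑ x, b x * y x := by
        rw [Finset.mul_sum]
        refine Finset.sum_congr rfl fun i _ => ?_
        rw [hsymm]; simp only [b]; ring
      rw [e2]
      change t * (a * t) + t * ∑ x, b x * y x + _ = _
      ring
    rw [e1]; field_simp; ring
  have hScp : Sc.PosDef := by
    refine Matrix.PosDef.of_dotProduct_mulVec_pos ?_ ?_
    · ext i j; simp [Sc, hsymm (Sum.inr i) (Sum.inr j)]; ring
    · intro y hy
      have h1 := key (-(b ⬝ᵥ y) / a) y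
      have h2 := hM1p.dotProduct_mulVec_pos (x := Sum.elim (fun _ => -(b ⬝ᵥ y) / a) y) (by
        intro h; apply hy; ext i; exact congrFun h (Sum.inr i))
      rw [star_trivial] at h2 ⊢
      rw [h1] at h2
      have : -(b ⬝ᵥ y) / a + b ⬝ᵥ y / a = 0 := by ring
      rw [this] at h2; simpa using h2
  have hdetS : M1.det = a * Sc.det := by
    let A : Matrix Unit Unit ℝ := Matrix.of fun _ _ => a
    have hA : A.det = a := by simp [A]
    have hAi : Invertible A := Matrix.invertibleOfIsUnitDet _ (by rw [hA]; exact hapos.ne'.isUnit)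
    have hB : M1 = Matrix.fromBlocks A (Matrix.of fun _ j => b j) (Matrix.of fun j _ => b j)
        (Matrix.of fun j k => M1 (Sum.inr j) (Sum.inr k)) := by
      ext i j
      rcases i with i | i <;> rcases j with j | j <;> simp [A, b, ha]
      exact hsymm _ _
    have hAinv : ⅟A = Matrix.of fun _ _ => a⁻¹ := by
      apply invOf_eq_right_inv
      ext i j; simp [A, Matrix.mul_apply, hapos.ne']
    rw [hB, Matrix.det_fromBlocks₁₁, hA, hAinv]
    congr 2
    ext i j
    simp [Sc, Matrix.mul_apply]
    ring
  obtain ⟨V, hV, hVp⟩ := hR Sc hScp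
  let k : ι → ℤ := fun j => - round ((b ⬝ᵥ (fun i => (V j i : ℝ))) / a)
  let U2 : Matrix (Unit ⊕ ι) (Unit ⊕ ι) ℤ := Matrix.fromBlocks 1 0 (Matrix.of fun j _ => k j) V
  have hU2 : IsUnit U2.det := by simp [U2, hV]
  have hrow0 : qf M1 (U2 (Sum.inl ())) = a := by
    have : (fun i => ((U2 (Sum.inl ()) i : ℤ) : ℝ)) = Sum.elim (fun _ => 1) 0 := by
      ext i; rcases i with i | i <;> simp [U2]
    unfold qf
    rw [this, key]; simp
  have hrow : ∀ j, qf M1 (U2 (Sum.inr j)) ≤ 2 * qf Sc (V j) := by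
    intro j
    have h0 := hamin U2 hU2 (Sum.inr j)
    have h1 : qf M1 (U2 (Sum.inr j)) ≤ qf Sc (V j) + a / 4 := by
      have : (fun i => ((U2 (Sum.inr j) i : ℤ) : ℝ)) = Sum.elim (fun _ => (k j : ℝ)) (fun i => (V j i : ℝ)) := by
        ext i; rcases i with i | i <;> simp [U2]
      unfold qf
      rw [this, key]
      have h2 := abs_sub_round ((b ⬝ᵥ (fun i => (V j i : ℝ))) / a)
      have h3 : ((k j : ℝ) + (b ⬝ᵥ (fun i => (V j i : ℝ))) / a) ^ 2 ≤ 1 / 4 := by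
        have : (k j : ℝ) + (b ⬝ᵥ (fun i => (V j i : ℝ))) / a = (b ⬝ᵥ (fun i => (V j i : ℝ))) / a - round ((b ⬝ᵥ (fun i => (V j i : ℝ))) / a) := by
          simp [k]; ring
        rw [this]
        have := abs_le.1 h2
        nlinarith
      have := mul_le_mul_of_nonneg_left h3 hapos.le
      linarith
    linarith
  refine ⟨U2 * U1, by rw [Matrix.det_mul]; exact hU2.mul hU1, ?_⟩
  have hrw : ∀ i, qf M ((U2 * U1) i) = qf M1 (U2 i) := by
    intro i; rw [hM1, qf_conj]; rfl
  simp only [hrw]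
  rw [Fintype.prod_sum_type, ← hdet1, hdetS]
  simp only [Finset.univ_unique, Finset.prod_singleton]
  calc qf M1 (U2 (Sum.inl default)) * ∏ j, qf M1 (U2 (Sum.inr j))
      ≤ a * ∏ j, (2 * qf Sc (V j)) := by
        refine mul_le_mul hrow0.le ?_ ?_ hapos.le
        · exact Finset.prod_le_prod (fun j _ => (qf_pos hM1p (row_ne_zero hU2 _)).le) fun j _ => hrow j
        · exact Finset.prod_nonneg (fun j _ => (qf_pos hM1p (row_ne_zero hU2 _)).le)
    _ = a * 2 ^ Fintype.card ι * ∏ j, qf Sc (V j) := by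
        rw [Finset.prod_mul_distrib]; simp; ring
    _ ≤ a * 2 ^ Fintype.card ι * (C * Sc.det) := by gcongr
    _ = _ := by ring

lemma Red.congr {ι κ : Type} [Fintype ι] [DecidableEq ι] [Fintype κ] [DecidableEq κ] (e : ι ≃ κ)
    (h : Red ι) : Red κ := by
  obtain ⟨C, hC, hR⟩ := h
  refine ⟨C, hC, fun M hM => ?_⟩
  obtain ⟨U, hU, hp⟩ := hR (M.submatrix e e) (hM.submatrix e.injective)
  refine ⟨U.submatrix e.symm e.symm, by rwa [Matrix.det_submatrix_equiv_self], ?_⟩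
  rw [Matrix.det_submatrix_equiv_self] at hp
  refine le_trans (le_of_eq ?_) hp
  rw [← e.prod_comp]
  refine Finset.prod_congr rfl fun i _ => ?_
  simp only [qf, dotProduct, Matrix.mulVec, Matrix.submatrix_apply, Equiv.symm_apply_apply]
  rw [← e.sum_comp]
  refine Finset.sum_congr rfl fun j _ => ?_
  rw [← e.sum_comp]
  simp

lemma red_fin (n : ℕ) : Red (Fin n) := by
  induction n with
  | zero => exact ⟨1, one_pos, fun M _ => ⟨1, by simp, by simp⟩⟩
  | succ n ih =>
    exact Red.congr ((Equiv.sumComm _ _).trans ((Equiv.sumCongr (Equiv.refl _)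
      (Equiv.ofUnique Unit (Fin 1))).trans finSumFinEquiv)) ih.step

end MatrixReduction

lemma span_mul_top {K : Type} [Field K] [Algebra ℚ K] [FiniteDimensional ℚ K] {n : ℕ}
    (hn : Module.finrank ℚ K = n) (c : Fin n → K) (hc : LinearIndependent ℚ c) (i : Fin n) :
    Submodule.span ℚ {z : K | ∃ k l : Fin n, k ≤ i ∧ l ≤ Fin.rev i ∧ z = c k * c l} = ⊤ := by
  by_contra hne
  obtain ⟨f, hf0, hf⟩ := Submodule.exists_le_ker_of_lt_top _ (lt_top_iff_ne_top.2 hne)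
  have hzero : ∀ k l : Fin n, k ≤ i → l ≤ Fin.rev i → f (c k * c l) = 0 := by
    intro k l hk hl
    exact hf (Submodule.subset_span ⟨k, l, hk, hl, rfl⟩)
  let U : Submodule ℚ K := Submodule.span ℚ (Set.range (fun k : {k : Fin n // k ≤ i} => c k))
  let V : Submodule ℚ K := Submodule.span ℚ (Set.range (fun k : {k : Fin n // k ≤ Fin.rev i} => c k))
  have hU : Module.finrank ℚ U = i + 1 := by
    refine (finrank_span_eq_card (hc.comp _ Subtype.val_injective)).trans ?_
    rw [Fintype.card_subtype]
    have : (Finset.univ.filter fun k : Fin n => k ≤ i) = Finset.Iic i := by ext; simp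
    rw [this]; simp
  have hV : Module.finrank ℚ V = n - i := by
    refine (finrank_span_eq_card (hc.comp _ Subtype.val_injective)).trans ?_
    rw [Fintype.card_subtype]
    have : (Finset.univ.filter fun k : Fin n => k ≤ Fin.rev i) = Finset.Iic (Fin.rev i) := by ext; simp
    rw [this]; simp; omega
  let m : K →ₗ[ℚ] Module.Dual ℚ K := (LinearMap.compRight ℚ f).comp (LinearMap.mul ℚ K)
  have hm : ∀ x y, m x y = f (x * y) := fun x y => rfl
  have hminj : Function.Injective m := by
    rw [← LinearMap.ker_eq_bot, LinearMap.ker_eq_bot']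
    intro x hx
    by_contra hx0
    apply hf0
    ext z
    have := hm x (x⁻¹ * z)
    rw [hx] at this
    rw [mul_inv_cancel_left₀ hx0] at this
    simpa using this.symm
  have hle : U.map m ≤ V.dualAnnihilator := by
    rw [Submodule.map_span, Submodule.span_le]
    rintro _ ⟨_, ⟨k, rfl⟩, rfl⟩
    simp only [SetLike.mem_coe, Submodule.mem_dualAnnihilator]
    intro w hw
    have : V ≤ LinearMap.ker (m (c k)) := by
      rw [Submodule.span_le]
      rintro _ ⟨l, rfl⟩
      exact hzero k l k.2 l.2
    exact this hw
  have h1 := Submodule.finrank_mono hle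
  rw [← (Submodule.equivMapOfInjective m hminj U).finrank_eq] at h1
  have h2 := Subspace.finrank_add_finrank_dualAnnihilator_eq V
  have := i.2
  omega

lemma gram_quad {n : ℕ} (A : Matrix (Fin n) (Fin n) ℂ) (y : Fin n → ℝ) :
    y ⬝ᵥ ((Matrix.of fun i j => (∑ k, A i k * star (A j k)).re).mulVec y) =
      ∑ k, ‖∑ i, (y i : ℂ) * A i k‖ ^ 2 := by
  have h : ∀ z : ℂ, ‖z‖ ^ 2 = (z * star z).re := by
    intro z; rw [Complex.star_def, Complex.mul_conj, Complex.normSq_eq_norm_sq]; norm_cast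
  simp only [h, dotProduct, Matrix.mulVec, Matrix.of_apply, star_sum,
    Complex.re_sum, Finset.mul_sum, Finset.sum_mul]
  rw [Finset.sum_comm' (t' := Finset.univ) (s' := fun _ => Finset.univ) (by simp)]
  conv_rhs => rw [Finset.sum_comm]; enter [2, i]; rw [Finset.sum_comm]
  rw [Finset.sum_comm]
  refine Finset.sum_congr rfl fun i _ => Finset.sum_congr rfl fun j _ => Finset.sum_congr rfl fun k _ => ?_
  simp
  ring

lemma exists_embMatrix (K : Type) [Field K] [NumberField K] {n : ℕ} (hn : Module.finrank ℚ K = n) :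
    ∃ (b : Module.Basis (Fin n) ℤ (𝓞 K)) (e : Fin n ≃ (K →ₐ[ℚ] ℂ)) (A : Matrix (Fin n) (Fin n) ℂ),
      (∀ i k, A i k = e k (b i : K)) ∧ (discr K : ℂ) = A.det ^ 2 := by
  have hcard : Fintype.card (Module.Free.ChooseBasisIndex ℤ (𝓞 K)) = n := by
    rw [← Module.finrank_eq_card_chooseBasisIndex, RingOfIntegers.rank, hn]
  have hcard2 : Fintype.card (K →ₐ[ℚ] ℂ) = n := by
    rw [AlgHom.card, hn]
  let b : Module.Basis (Fin n) ℤ (𝓞 K) :=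
    (RingOfIntegers.basis K).reindex (Fintype.equivFinOfCardEq hcard)
  let e : Fin n ≃ (K →ₐ[ℚ] ℂ) := (Fintype.equivFinOfCardEq hcard2).symm
  refine ⟨b, e, Algebra.embeddingsMatrixReindex ℚ ℂ (fun i => (b i : K)) e, fun i k => rfl, ?_⟩
  rw [← Algebra.discr_eq_det_embeddingsMatrixReindex_pow_two]
  have h1 : Algebra.discr ℚ (fun i => (b i : K)) = (discr K : ℚ) := by
    rw [← discr_eq_discr K b]
    have h := Algebra.discr_localizationLocalization ℤ (nonZeroDivisors ℤ) (Rₘ := ℚ) K b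
    have h2 : (fun i => (b i : K)) = b.localizationLocalization ℚ (nonZeroDivisors ℤ) K := by
      ext i; rw [Module.Basis.localizationLocalization_apply]
    rw [h2, h]; rfl
  rw [h1]; simp

lemma exists_gram (K : Type) [Field K] [NumberField K] {n : ℕ} (hn : Module.finrank ℚ K = n) :
    ∃ (b : Module.Basis (Fin n) ℤ (𝓞 K)) (M : Matrix (Fin n) (Fin n) ℝ), M.PosDef ∧
      M.det = |(discr K : ℝ)| ∧ ∀ (x : Fin n → ℤ),
      (fun i => (x i : ℝ)) ⬝ᵥ (M.mulVec (fun i => (x i : ℝ))) =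
        ∑ φ : K →+* ℂ, ‖φ ((∑ i, x i • b i : 𝓞 K) : K)‖ ^ 2 := by
  obtain ⟨b, e, A, hA, hdisc⟩ := exists_embMatrix K hn
  have hdet0 : A.det ≠ 0 := by
    intro h
    rw [h] at hdisc
    exact discr_ne_zero K (by exact_mod_cast (by simpa using hdisc : (discr K : ℂ) = 0))
  let M : Matrix (Fin n) (Fin n) ℝ := Matrix.of fun i j => (∑ k, A i k * star (A j k)).re
  have hMA : M.map (Complex.ofRealHom) = A * A.conjTranspose := by
    ext i j
    simp only [Matrix.map_apply, M, Matrix.of_apply, Matrix.mul_apply, Matrix.conjTranspose_apply]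
    change (((∑ k, A i k * star (A j k)).re : ℝ) : ℂ) = _
    rw [Complex.star_def] 
    refine Complex.conj_eq_iff_re.1 ?_
    simp only [hA, map_sum, map_mul, Complex.conj_conj]
    rw [Equiv.sum_comp e (fun φ => (starRingEnd ℂ) (φ (b i : K)) * φ (b j : K)),
      Equiv.sum_comp e (fun φ => φ (b i : K) * (starRingEnd ℂ) (φ (b j : K)))]
    rw [← Equiv.sum_comp (RingHom.equivRatAlgHom (R := K) (S := ℂ)), ← Equiv.sum_comp (RingHom.equivRatAlgHom (R := K) (S := ℂ))]
    rw [← Equiv.sum_comp (ComplexEmbedding.involutive_conjugate K).toPerm]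
    refine Finset.sum_congr rfl fun φ _ => ?_
    simp [ComplexEmbedding.conjugate_coe_eq]
  refine ⟨b, M, ?_, ?_, ?_⟩
  · refine Matrix.PosDef.of_dotProduct_mulVec_pos ?_ ?_
    · ext i j
      simp only [M, Matrix.conjTranspose_apply, Matrix.of_apply, star_trivial, Complex.re_sum]
      refine Finset.sum_congr rfl fun k _ => ?_
      simp; ring
    · intro y hy
      rw [star_trivial, gram_quad]
      have hne : Matrix.vecMul (fun i => (y i : ℂ)) A ≠ 0 := by
        intro h
        apply hy
        have := Matrix.eq_zero_of_vecMul_eq_zero hdet0 h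
        ext i
        simpa using congrFun this i
      obtain ⟨k, hk⟩ := Function.ne_iff.1 hne
      refine Finset.sum_pos' (fun _ _ => by positivity) ⟨k, Finset.mem_univ _, ?_⟩
      have : 0 < ‖∑ i, (y i : ℂ) * A i k‖ := norm_pos_iff.2 hk
      positivity
  · have h1 : ((M.det : ℝ) : ℂ) = A.det * star A.det := by
      have := (Complex.ofRealHom).map_det M
      rw [RingHom.mapMatrix_apply, hMA, Matrix.det_mul, Matrix.det_conjTranspose] at this
      exact this
    rw [Complex.star_def, Complex.mul_conj, Complex.normSq_eq_norm_sq] at h1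
    have h2 : M.det = ‖A.det‖ ^ 2 := by exact_mod_cast h1
    rw [h2, ← norm_pow, ← hdisc]
    simp
  · intro x
    rw [gram_quad, ← Equiv.sum_comp (RingHom.equivRatAlgHom (R := K) (S := ℂ)).symm, ← Equiv.sum_comp e]
    refine Finset.sum_congr rfl fun k _ => ?_
    congr 2
    simp [hA]

lemma exists_small_basis (n : ℕ) (hn0 : 0 < n) : ∃ C : ℝ, 0 < C ∧ ∀ (K : Type) [Field K] [NumberField K],
    Module.finrank ℚ K = n → ∃ v : Fin n → 𝓞 K, LinearIndependent ℚ (fun i => (v i : K)) ∧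
      ∀ (k : Fin n) (φ : K →+* ℂ), ‖φ (v k : K)‖ ≤ C * |(discr K : ℝ)| ^ ((1 : ℝ) / n) := by
  obtain ⟨C, hC, hR⟩ := red_fin n
  refine ⟨C ^ ((1 : ℝ) / n), by positivity, fun K _ _ hn => ?_⟩
  obtain ⟨b0, M, hM, hdet, hq⟩ := exists_gram K hn
  obtain ⟨U, hU, hprod⟩ := hR M hM
  let b : Fin n → 𝓞 K := fun i => ∑ j, U i j • b0 j
  have hbq : ∀ i, qf M (U i) = ∑ φ : K →+* ℂ, ‖φ (b i : K)‖ ^ 2 := fun i => hq (U i)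
  have hbli : LinearIndependent ℤ b := by
    rw [Fintype.linearIndependent_iff]
    intro g hg
    have h1 : ∑ j, (∑ i, g i * U i j) • b0 j = 0 := by
      rw [← hg]
      simp only [b, Finset.smul_sum, Finset.sum_smul, mul_smul]
      rw [Finset.sum_comm]
    have h2 := Fintype.linearIndependent_iff.1 b0.linearIndependent _ h1
    have h3 : Matrix.vecMul g U = 0 := by
      ext j; exact h2 j
    have h4 := Matrix.eq_zero_of_vecMul_eq_zero hU.ne_zero h3
    exact fun i => congrFun h4 i
  have hbK : LinearIndependent ℚ (fun i => (b i : K)) := by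
    have h1 : LinearIndependent ℤ (fun i => (b i : K)) :=
      hbli.map' ((algebraMap (𝓞 K) K).toIntAlgHom.toLinearMap) (by
        rw [LinearMap.ker_eq_bot]; exact RingOfIntegers.coe_injective)
    exact (LinearIndependent.iff_fractionRing ℤ ℚ).1 h1
  -- sort
  let q : Fin n → ℝ := fun i => qf M (U i)
  have hqpos : ∀ i, 0 < q i := fun i => qf_pos hM (row_ne_zero hU i)
  let σ := Tuple.sort q
  have hmono : Monotone (q ∘ σ) := Tuple.monotone_sort q
  let Q : Fin n → ℝ := q ∘ σ
  have hQpos : ∀ i, 0 < Q i := fun i => hqpos _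
  have hQprod : ∏ i, Q i ≤ C * |(discr K : ℝ)| := by
    rw [← hdet]
    refine le_trans (le_of_eq ?_) hprod
    exact Equiv.prod_comp σ q
  have hD : 0 < |(discr K : ℝ)| := by
    rw [abs_pos]; exact_mod_cast discr_ne_zero K
  obtain ⟨i, hi⟩ : ∃ i, (Q i * Q (Fin.rev i)) ^ n ≤ (C * |(discr K : ℝ)|) ^ 2 := by
    by_contra! hcon
    have hne : (Finset.univ : Finset (Fin n)).Nonempty := ⟨⟨0, hn0⟩, Finset.mem_univ _⟩
    have h1 : ∏ i : Fin n, (C * |(discr K : ℝ)|) ^ 2 < ∏ i : Fin n, (Q i * Q (Fin.rev i)) ^ n :=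
      Finset.prod_lt_prod_of_nonempty (fun _ _ => by positivity) (fun i _ => hcon i) hne
    rw [Finset.prod_pow Finset.univ n, Finset.prod_mul_distrib (f := Q),
      show ∏ i : Fin n, Q (Fin.rev i) = ∏ i, Q i from Equiv.prod_comp Fin.revPerm Q] at h1
    simp only [Finset.prod_const, Finset.card_univ, Fintype.card_fin] at h1
    have h2 : (∏ i, Q i) * (∏ i, Q i) ≤ (C * |(discr K : ℝ)|) ^ 2 := by
      rw [sq]
      have : 0 ≤ ∏ i, Q i := Finset.prod_nonneg fun i _ => (hQpos i).le
      gcongr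
    have h3 : 0 ≤ (∏ i, Q i) * (∏ i, Q i) := mul_self_nonneg _
    have := pow_le_pow_left₀ h3 h2 n
    linarith
  let c : Fin n → K := fun k => (b (σ k) : K)
  have hc : LinearIndependent ℚ c := hbK.comp σ σ.injective
  have hspan := span_mul_top hn c hc i
  obtain ⟨f, hf, hfs, hfl⟩ := Submodule.exists_fun_fin_finrank_span_eq ℚ
    {z : K | ∃ k l : Fin n, k ≤ i ∧ l ≤ Fin.rev i ∧ z = c k * c l}
  have hfr : n = Module.finrank ℚ (Submodule.span ℚ
      {z : K | ∃ k l : Fin n, k ≤ i ∧ l ≤ Fin.rev i ∧ z = c k * c l}) := by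
    rw [hspan, finrank_top, hn]
  choose kk ll hkk hll hkl using hf
  let v : Fin n → 𝓞 K := fun j => b (σ (kk (Fin.cast hfr j))) * b (σ (ll (Fin.cast hfr j)))
  have hv : ∀ j, (v j : K) = f (Fin.cast hfr j) := by
    intro j; rw [hkl]; simp [v, c]
  refine ⟨v, ?_, ?_⟩
  · have : (fun j => (v j : K)) = f ∘ Fin.cast hfr := by ext j; exact hv j
    rw [this]
    exact hfl.comp _ (Fin.cast_injective hfr)
  · intro j φ
    have hle : ∀ (m : Fin n), ‖φ (b (σ m) : K)‖ ^ 2 ≤ Q m := by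
      intro m
      change _ ≤ qf M (U (σ m))
      rw [hbq]
      exact Finset.single_le_sum (f := fun φ : K →+* ℂ => ‖φ (b (σ m) : K)‖ ^ 2)
        (fun _ _ => by positivity) (Finset.mem_univ φ)
    set x := ‖φ (v j : K)‖ with hx
    have hx2 : x ^ 2 ≤ Q i * Q (Fin.rev i) := by
      have : x = ‖φ (b (σ (kk (Fin.cast hfr j))) : K)‖ * ‖φ (b (σ (ll (Fin.cast hfr j))) : K)‖ := by
        rw [hx]; simp [v]
      rw [this, mul_pow]
      exact mul_le_mul ((hle _).trans (hmono (hkk _))) ((hle _).trans (hmono (hll _)))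
        (by positivity) (hQpos _).le
    have hxn : x ^ n ≤ C * |(discr K : ℝ)| := by
      have h1 : (x ^ n) ^ 2 ≤ (C * |(discr K : ℝ)|) ^ 2 := by
        refine le_trans ?_ hi
        rw [← pow_mul, mul_comm n 2, pow_mul]
        exact pow_le_pow_left₀ (by positivity) hx2 n
      exact (pow_le_pow_iff_left₀ (by positivity) (by positivity) (by norm_num)).1 h1
    rw [← Real.mul_rpow hC.le hD.le]
    rw [one_div]
    rw [Real.le_rpow_inv_iff_of_pos (by positivity) (by positivity) (by exact_mod_cast hn0)]
    simpa using hxn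

section Combin
open MvPolynomial

/-- exponents of total degree at most `e` -/
noncomputable def expSet (σ : Type) [Fintype σ] (e : ℕ) : Finset (σ →₀ ℕ) :=
  (Finset.range (e + 1)).biUnion (fun k => Finset.finsuppAntidiag Finset.univ k)

lemma mem_expSet {σ : Type} [Fintype σ] (e : ℕ) (a : σ →₀ ℕ) :
    a ∈ expSet σ e ↔ ∑ i, a i ≤ e := by
  simp [expSet, Finset.mem_finsuppAntidiag]

lemma sum_multichoose (s e : ℕ) :
    ∑ k ∈ Finset.range (e + 1), Nat.multichoose s k = Nat.multichoose (s + 1) e := by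
  induction e with
  | zero => simp
  | succ e ih => rw [Finset.sum_range_succ, ih, Nat.multichoose_succ_succ, add_comm]

lemma card_expSet (σ : Type) [Fintype σ] (e : ℕ) :
    (expSet σ e).card = (e + Fintype.card σ).choose (Fintype.card σ) := by
  rw [expSet, Finset.card_biUnion]
  · simp only [Finset.card_finsuppAntidiag_nat_eq_multichoose, Finset.card_univ]
    rw [sum_multichoose, Nat.multichoose_eq]
    have h1 : Fintype.card σ + 1 + e - 1 = e + Fintype.card σ := by omega
    rw [h1]
    conv_rhs => rw [← Nat.choose_symm_add]
  · intro x _ y _ hxy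
    rw [Function.onFun, Finset.disjoint_left]
    intro a ha hb
    simp only [Finset.mem_finsuppAntidiag] at ha hb
    exact hxy (ha.1.symm.trans hb.1)

lemma mem_restrict_iff {σ : Type} [Fintype σ] (e : ℕ) :
    restrictTotalDegree σ ℂ e = restrictSupport ℂ (expSet σ e : Set (σ →₀ ℕ)) := by
  unfold restrictTotalDegree
  congr 1
  ext a
  simp only [Set.mem_ofPred_eq, Finset.mem_coe, mem_expSet]
  rw [Finsupp.sum_fintype _ _ (fun _ => rfl)]

lemma finrank_restrict {σ : Type} [Fintype σ] (e : ℕ) :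
    Module.finrank ℂ (restrictTotalDegree σ ℂ e)
      = (e + Fintype.card σ).choose (Fintype.card σ) := by
  rw [mem_restrict_iff, Module.finrank_eq_card_basis (basisRestrictSupport ℂ _), ← card_expSet]
  simp

lemma coeff_prod_of_degree_le {σ ι : Type} (m : MonomialOrder σ) (s : Finset ι)
    (g : ι → MvPolynomial σ ℂ) (a : ι → (σ →₀ ℕ)) (h : ∀ i, m.toSyn (m.degree (g i)) ≤ m.toSyn (a i)) :
    m.toSyn (m.degree (∏ i ∈ s, g i)) ≤ m.toSyn (∑ i ∈ s, a i) ∧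
    (∏ i ∈ s, g i).coeff (∑ i ∈ s, a i) = ∏ i ∈ s, (g i).coeff (a i) := by
  induction s using Finset.induction_on with
  | empty => simp [MvPolynomial.coeff_one]
  | insert i s hi ih =>
    rw [Finset.prod_insert hi, Finset.sum_insert hi, Finset.prod_insert hi]
    constructor
    · refine le_trans m.degree_mul_le ?_
      rw [map_add, map_add]
      exact add_le_add (h i) ih.1
    · rw [m.coeff_mul_of_add_of_degree_le (h i) ih.1, ih.2]

lemma coeff_X_mul_pderiv {σ : Type} (f : MvPolynomial σ ℂ) (l : σ) (b : σ →₀ ℕ) :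
    (X l * pderiv l f).coeff b = b l * f.coeff b := by
  induction f using MvPolynomial.induction_on' with
  | add p q hp hq => simp [mul_add, hp, hq]
  | monomial n a =>
    rw [X_mul_pderiv_monomial, coeff_smul, coeff_monomial]
    split_ifs with h
    · subst h; simp
    · simp

lemma jac_ne_zero_of_lead {r : ℕ} (m : MonomialOrder (Fin r)) (f : Fin r → MvPolynomial (Fin r) ℂ)
    (hf : ∀ j, f j ≠ 0)
    (hdet : (Matrix.of fun j l => ((m.degree (f j) l : ℕ) : ℂ)).det ≠ 0) :
    (Matrix.of fun j l => pderiv l (f j)).det ≠ 0 := by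
  intro h0
  have h1 : (Matrix.of fun j l => X l * pderiv l (f j)).det = 0 := by
    have := Matrix.det_mul_row (fun l => (X l : MvPolynomial (Fin r) ℂ))
      (Matrix.of fun j l => pderiv l (f j))
    rw [h0, mul_zero] at this
    exact this
  have hle : ∀ j l, m.toSyn (m.degree (X l * pderiv l (f j))) ≤ m.toSyn (m.degree (f j)) := by
    intro j l
    rw [MonomialOrder.degree_le_iff]
    intro b hb
    rw [mem_support_iff, coeff_X_mul_pderiv] at hb
    exact m.le_degree (mem_support_iff.2 (right_ne_zero_of_mul hb))
  apply hdet
  have h2 : (Matrix.of fun j l => X l * pderiv l (f j)).det.coeff (∑ j, m.degree (f j)) = 0 := by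
    rw [h1]; simp
  rw [← Matrix.det_transpose, Matrix.det_apply', coeff_sum] at h2
  have h3 : ∀ s : Equiv.Perm (Fin r),
      ((Equiv.Perm.sign s : ℤ) * ∏ i, (Matrix.of fun j l => X l * pderiv l (f j)).transpose (s i) i : MvPolynomial (Fin r) ℂ).coeff
        (∑ j, m.degree (f j)) = (∏ j, m.leadingCoeff (f j)) *
          ((Equiv.Perm.sign s : ℤ) * ∏ i, (Matrix.of fun j l => ((m.degree (f j) l : ℕ) : ℂ)).transpose (s i) i) := by
    intro s
    have hc : (((Equiv.Perm.sign s : ℤ)) : MvPolynomial (Fin r) ℂ) = C ((Equiv.Perm.sign s : ℤ) : ℂ) := by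
      simp
    rw [hc, coeff_C_mul]
    simp only [Matrix.transpose_apply, Matrix.of_apply]
    rw [(coeff_prod_of_degree_le m Finset.univ (fun i => X (s i) * pderiv (s i) (f i)) _
      (fun i => hle i (s i))).2]
    simp only [coeff_X_mul_pderiv]
    rw [Finset.prod_mul_distrib]
    simp only [MonomialOrder.leadingCoeff]
    ring
  rw [Finset.sum_congr rfl (fun s _ => h3 s), ← Finset.mul_sum, ← Matrix.det_apply',
    Matrix.det_transpose] at h2
  rcases mul_eq_zero.1 h2 with h | h
  · exfalso
    rw [Finset.prod_eq_zero_iff] at h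
    obtain ⟨j, _, hj⟩ := h
    exact hf j (m.leadingCoeff_eq_zero_iff.1 hj)
  · exact h

lemma finrank_le_card_lead {σ : Type} [Fintype σ] (m : MonomialOrder σ) (e : ℕ)
    (W : Submodule ℂ (MvPolynomial σ ℂ)) (hW : W ≤ restrictTotalDegree σ ℂ e) :
    Module.finrank ℂ W ≤
      ((expSet σ e).filter (fun a => ∃ f ∈ W, f ≠ 0 ∧ m.degree f = a)).card := by
  set L := (expSet σ e).filter (fun a => ∃ f ∈ W, f ≠ 0 ∧ m.degree f = a) with hL
  let φ : W →ₗ[ℂ] (L → ℂ) := LinearMap.pi (fun a => (lcoeff ℂ a.1).comp W.subtype)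
  have hφ : Function.Injective φ := by
    rw [← LinearMap.ker_eq_bot, LinearMap.ker_eq_bot']
    intro f hf
    by_contra hne
    have hne' : (f : MvPolynomial σ ℂ) ≠ 0 := fun h => hne (Subtype.ext h)
    have hs := m.degree_mem_support hne'
    have hmem : m.degree (f : MvPolynomial σ ℂ) ∈ L := by
      rw [hL, Finset.mem_filter]
      refine ⟨?_, f, f.2, hne', rfl⟩
      have := hW f.2
      rw [mem_restrict_iff, mem_restrictSupport_iff] at this
      exact this hs
    have := congrFun hf ⟨_, hmem⟩
    rw [mem_support_iff] at hs
    exact hs this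
  have := LinearMap.finrank_le_finrank_of_injective hφ
  simpa using this

lemma exists_jac {r : ℕ} (e : ℕ) (W : Submodule ℂ (MvPolynomial (Fin r) ℂ))
    (hW : W ≤ restrictTotalDegree (Fin r) ℂ e)
    (hdim : (e + (r - 1)).choose (r - 1) < Module.finrank ℂ W) :
    ∃ f : Fin r → MvPolynomial (Fin r) ℂ, (∀ j, f j ∈ W) ∧
      (Matrix.of fun j l => pderiv l (f j)).det ≠ 0 := by
  let m : MonomialOrder (Fin r) := MonomialOrder.lex
  have hcard := finrank_le_card_lead m e W hW
  set L := (expSet (Fin r) e).filter (fun a => ∃ f ∈ W, f ≠ 0 ∧ m.degree f = a) with hL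
  let u : (Fin r →₀ ℕ) → (Fin r → ℂ) := fun a l => (a l : ℂ)
  by_cases hspan : Submodule.span ℂ (u '' (L : Set (Fin r →₀ ℕ))) = ⊤
  · obtain ⟨g, hg, -, hli⟩ := Submodule.exists_fun_fin_finrank_span_eq ℂ (u '' (L : Set (Fin r →₀ ℕ)))
    have hfr : Module.finrank ℂ (Submodule.span ℂ (u '' (L : Set (Fin r →₀ ℕ)))) = r := by
      rw [hspan]; simp
    let g' : Fin r → (Fin r → ℂ) := fun j => g (Fin.cast hfr.symm j)
    have hli' : LinearIndependent ℂ g' := hli.comp _ (Fin.cast_injective _)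
    have hg' : ∀ j, ∃ f ∈ W, f ≠ 0 ∧ u (m.degree f) = g' j := by
      intro j
      obtain ⟨a, ha, hag⟩ := hg (Fin.cast hfr.symm j)
      rw [Finset.mem_coe, hL, Finset.mem_filter] at ha
      obtain ⟨_, f, hfW, hf0, hfa⟩ := ha
      exact ⟨f, hfW, hf0, by rw [hfa]; exact hag⟩
    choose f hfW hf0 hfu using hg'
    refine ⟨f, hfW, jac_ne_zero_of_lead m f hf0 ?_⟩
    have : (Matrix.of fun j l => ((m.degree (f j) l : ℕ) : ℂ)) = Matrix.of g' := by
      ext j l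
      exact congrFun (hfu j) l
    rw [this]
    have hu : IsUnit (Matrix.of g') := Matrix.linearIndependent_rows_iff_isUnit.1 hli'
    rw [Matrix.isUnit_iff_isUnit_det] at hu
    exact hu.ne_zero
  · exfalso
    obtain ⟨c, hc0, hc⟩ := Submodule.exists_le_ker_of_lt_top _ (lt_top_iff_ne_top.2 hspan)
    have hcx : ∀ x : Fin r → ℂ, c x = ∑ j, x j * c (Pi.single j 1) := by
      intro x
      conv_lhs => rw [pi_eq_sum_univ' x, map_sum]
      simp
    have hj : ∃ j, c (Pi.single j 1) ≠ 0 := by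
      by_contra hcon
      push Not at hcon
      apply hc0
      refine LinearMap.ext fun x => ?_
      rw [hcx x]
      simp [hcon]
    obtain ⟨j, hj⟩ := hj
    have hinj : Set.InjOn (fun a : Fin r →₀ ℕ => a.subtypeDomain (fun l => l ≠ j)) L := by
      intro a ha b hb hab
      have hoff : ∀ l, l ≠ j → a l = b l := by
        intro l hl
        have := DFunLike.congr_fun hab ⟨l, hl⟩
        simpa using this
      have hza : c (u a) = 0 := hc (Submodule.subset_span ⟨a, ha, rfl⟩)
      have hzb : c (u b) = 0 := hc (Submodule.subset_span ⟨b, hb, rfl⟩)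
      have hz : c (u a - u b) = 0 := by rw [map_sub, hza, hzb, sub_zero]
      rw [hcx, Finset.sum_eq_single j] at hz
      · have h1 := (mul_eq_zero.1 hz).resolve_right hj
        have h2 : (a j : ℂ) = b j := sub_eq_zero.1 h1
        ext l
        by_cases hl : l = j
        · subst hl; exact_mod_cast h2
        · exact hoff l hl
      · intro l _ hl
        simp [u, hoff l hl]
      · simp
    have hmaps : ∀ a ∈ L, a.subtypeDomain (fun l => l ≠ j) ∈ expSet {l : Fin r // l ≠ j} e := by
      intro a ha
      rw [hL, Finset.mem_filter, mem_expSet] at ha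
      rw [mem_expSet]
      refine le_trans ?_ ha.1
      simp only [Finsupp.subtypeDomain_apply]
      rw [← Finset.sum_subtype (Finset.univ.filter (fun l => l ≠ j)) (by simp) (fun l => a l)]
      exact Finset.sum_le_sum_of_subset (Finset.filter_subset _ _)
    have hle := Finset.card_le_card_of_injOn _ hmaps hinj
    rw [card_expSet] at hle
    have hcj : Fintype.card {l : Fin r // l ≠ j} = r - 1 := by
      rw [Fintype.card_subtype_compl]; simp
    rw [hcj] at hle
    omega

noncomputable def gradAt {r : ℕ} (x : Fin r → ℂ) : MvPolynomial (Fin r) ℂ →ₗ[ℂ] (Fin r → ℂ) :=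
  LinearMap.pi fun j => (aeval x).toLinearMap ∘ₗ (pderiv j : Derivation ℂ _ _).toLinearMap

lemma gradAt_apply {r : ℕ} (x : Fin r → ℂ) (f : MvPolynomial (Fin r) ℂ) (j : Fin r) :
    gradAt x f j = eval x (pderiv j f) := by
  simp [gradAt, MvPolynomial.aeval_eq_eval]

lemma finrank_inf_ker {r : ℕ} (W : Submodule ℂ (MvPolynomial (Fin r) ℂ)) [FiniteDimensional ℂ W]
    (x : Fin r → ℂ) (f : Fin r → MvPolynomial (Fin r) ℂ) (hf : ∀ j, f j ∈ W)
    (hx : eval x (Matrix.of fun j l => pderiv l (f j)).det ≠ 0) :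
    Module.finrank ℂ (W ⊓ LinearMap.ker (gradAt x) : Submodule ℂ (MvPolynomial (Fin r) ℂ)) + r
      ≤ Module.finrank ℂ W := by
  let φ := (gradAt x).domRestrict W
  have h1 := LinearMap.finrank_range_add_finrank_ker φ
  have hker : Module.finrank ℂ (LinearMap.ker φ) =
      Module.finrank ℂ (W ⊓ LinearMap.ker (gradAt x) : Submodule ℂ (MvPolynomial (Fin r) ℂ)) := by
    rw [← Submodule.map_comap_subtype, Submodule.finrank_map_subtype_eq]
    rfl
  have hrange : LinearMap.range φ = ⊤ := by
    have hdet : IsUnit (Matrix.of fun j l => eval x (pderiv l (f j))).det := by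
      rw [isUnit_iff_ne_zero]
      rw [RingHom.map_det] at hx
      exact hx
    have hli := Matrix.linearIndependent_rows_iff_isUnit.2
      ((Matrix.isUnit_iff_isUnit_det _).2 hdet)
    rw [eq_top_iff, ← hli.span_eq_top_of_card_eq_finrank' (by simp), Submodule.span_le]
    rintro _ ⟨j, rfl⟩
    refine ⟨⟨f j, hf j⟩, ?_⟩
    ext l
    exact gradAt_apply x (f j) l
  rw [hrange, finrank_top, hker] at h1
  simp at h1
  omega

noncomputable def vanSub {r n : ℕ} (p : Fin n → Fin r → ℂ) (e : ℕ) :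
    Submodule ℂ (MvPolynomial (Fin r) ℂ) :=
  restrictTotalDegree (Fin r) ℂ e ⊓ ⨅ i, LinearMap.ker (gradAt (p i))

instance {r n : ℕ} (p : Fin n → Fin r → ℂ) (e : ℕ) : FiniteDimensional ℂ (vanSub p e) :=
  Submodule.finiteDimensional_inf_left _ _

lemma exists_points {r : ℕ} (hr : 0 < r) (d n : ℕ) : ∃ p : Fin n → Fin r → ℂ, ∀ e ≤ d,
    Module.finrank ℂ (vanSub p e) + min (r * n) ((e + r - 1).choose r) ≤ (e + r).choose r := by
  have pascal : ∀ e, (e + r).choose r = (e + (r - 1)).choose (r - 1) + (e + r - 1).choose r := by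
    intro e
    obtain ⟨s, rfl⟩ : ∃ s, r = s + 1 := ⟨r - 1, by omega⟩
    rw [← add_assoc, Nat.choose_succ_succ]
    simp
  induction n with
  | zero =>
    refine ⟨Fin.elim0, fun e _ => ?_⟩
    have : Module.finrank ℂ (vanSub (Fin.elim0 : Fin 0 → Fin r → ℂ) e) ≤
        Module.finrank ℂ (restrictTotalDegree (Fin r) ℂ e) :=
      Submodule.finrank_mono inf_le_left
    rw [finrank_restrict] at this
    simpa using this
  | succ n ih =>
    obtain ⟨p, hp⟩ := ih
    have hJ : ∀ e, ∃ J : MvPolynomial (Fin r) ℂ, J ≠ 0 ∧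
        ((e + (r - 1)).choose (r - 1) < Module.finrank ℂ (vanSub p e) →
          ∀ x, eval x J ≠ 0 →
          Module.finrank ℂ (vanSub p e ⊓ LinearMap.ker (gradAt x) : Submodule ℂ (MvPolynomial (Fin r) ℂ)) + r
            ≤ Module.finrank ℂ (vanSub p e)) := by
      intro e
      by_cases hlt : (e + (r - 1)).choose (r - 1) < Module.finrank ℂ (vanSub p e)
      · obtain ⟨f, hf, hdet⟩ := exists_jac e (vanSub p e) inf_le_left hlt
        exact ⟨_, hdet, fun _ x hx => finrank_inf_ker _ x f hf hx⟩
      · exact ⟨1, one_ne_zero, fun h => absurd h hlt⟩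
    choose J hJ0 hJ using hJ
    have hprod : ∏ e ∈ Finset.range (d + 1), J e ≠ 0 :=
      Finset.prod_ne_zero_iff.2 fun e _ => hJ0 e
    obtain ⟨x, hx⟩ : ∃ x, eval x (∏ e ∈ Finset.range (d + 1), J e) ≠ 0 := by
      by_contra hcon
      push Not at hcon
      exact hprod (MvPolynomial.funext fun x => by rw [hcon x, map_zero])
    rw [map_prod, Finset.prod_ne_zero_iff] at hx
    refine ⟨Fin.cons x p, fun e he => ?_⟩
    have heq : vanSub (Fin.cons x p : Fin (n + 1) → Fin r → ℂ) e
        = vanSub p e ⊓ LinearMap.ker (gradAt x) := by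
      unfold vanSub
      ext f
      simp only [Submodule.mem_inf, Submodule.mem_iInf, Fin.forall_fin_succ, Fin.cons_zero, Fin.cons_succ]
      tauto
    have hpe := hp e he
    have hpas := pascal e
    rw [heq]
    by_cases hlt : (e + (r - 1)).choose (r - 1) < Module.finrank ℂ (vanSub p e)
    · have := hJ e hlt x (hx e (by simp; omega))
      rw [mul_add]
      omega
    · have : Module.finrank ℂ (vanSub p e ⊓ LinearMap.ker (gradAt x) : Submodule ℂ (MvPolynomial (Fin r) ℂ)) ≤ Module.finrank ℂ (vanSub p e) :=
        Submodule.finrank_mono inf_le_left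
      omega

lemma nested_basis {ι V : Type} [AddCommGroup V] [Module ℂ V] (v : ι → V) (S : ℕ → Finset ι)
    (hS : Monotone S) (d : ℕ) : ∃ A : Finset ι, A ⊆ S d ∧ LinearIndepOn ℂ v (A : Set ι) ∧
      ∀ e ≤ d, Module.finrank ℂ (Submodule.span ℂ (v '' (S e : Set ι))) ≤ (A ∩ S e).card := by
  have ext : ∀ (B : Finset ι) (T : Finset ι), B ⊆ T → LinearIndepOn ℂ v (B : Set ι) →
      ∃ A : Finset ι, A ⊆ T ∧ B ⊆ A ∧ LinearIndepOn ℂ v (A : Set ι) ∧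
      Module.finrank ℂ (Submodule.span ℂ (v '' (T : Set ι))) ≤ (A ∩ T).card := by
    intro B T hBT hB
    obtain ⟨b, hbT, hBb, hspan, hb⟩ := exists_linearIndepOn_extension hB (Finset.coe_subset.2 hBT)
    have hfin : b.Finite := T.finite_toSet.subset hbT
    refine ⟨hfin.toFinset, by simpa using hbT, ?_, by simpa using hb, ?_⟩
    · intro x hx
      rw [Set.Finite.mem_toFinset]
      exact hBb hx
    · have h1 : hfin.toFinset ∩ T = hfin.toFinset := by
        rw [Finset.inter_eq_left]
        simpa using hbT
      rw [h1]
      have h2 : Submodule.span ℂ (v '' (T : Set ι)) ≤ Submodule.span ℂ ((hfin.toFinset.image v : Finset V) : Set V) := by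
        rw [Submodule.span_le]
        simpa using hspan
      calc _ ≤ _ := Submodule.finrank_mono h2
        _ ≤ _ := finrank_span_finset_le_card _
        _ ≤ _ := Finset.card_image_le
  induction d with
  | zero =>
    obtain ⟨A, h1, -, h2, h3⟩ := ext ∅ (S 0) (by simp) (by simp)
    refine ⟨A, h1, h2, fun e he => ?_⟩
    obtain rfl : e = 0 := by omega
    exact h3
  | succ d ih =>
    obtain ⟨B, hB1, hB2, hB3⟩ := ih
    obtain ⟨A, h1, hBA, h2, h3⟩ := ext B (S (d + 1)) (hB1.trans (hS (Nat.le_succ d))) hB2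
    refine ⟨A, h1, h2, fun e he => ?_⟩
    rcases Nat.lt_or_ge d e with h | h
    · obtain rfl : e = d + 1 := by omega
      exact h3
    · exact (hB3 e h).trans (Finset.card_le_card (Finset.inter_subset_inter_right hBA))

lemma exists_exponents {r : ℕ} (hr : 0 < r) (n d : ℕ) (hd : r * n ≤ (d + r - 1).choose r) :
    ∃ (p : Fin n → Fin r → ℂ) (A : Finset (Fin r →₀ ℕ)), A.card = r * n ∧
      ∑ a ∈ A, ∑ j, a j ≤ ∑ e ∈ Finset.range d, (r * n - (e + r - 1).choose r) ∧
      LinearIndependent ℂ (fun (a : A) (ij : Fin n × Fin r) =>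
        eval (p ij.1) (pderiv ij.2 (monomial a.1 (1 : ℂ)))) := by
  obtain ⟨p, hp⟩ := exists_points hr d n
  let G : MvPolynomial (Fin r) ℂ →ₗ[ℂ] (Fin n × Fin r → ℂ) :=
    LinearMap.pi fun ij => (LinearMap.proj ij.2).comp (gradAt (p ij.1))
  have hG : ∀ f ij, G f ij = eval (p ij.1) (pderiv ij.2 f) := fun f ij => gradAt_apply _ _ _
  let v : (Fin r →₀ ℕ) → (Fin n × Fin r → ℂ) := fun a => G (monomial a 1)
  have hmono : Monotone (expSet (Fin r)) := by
    intro e e' h a ha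
    rw [mem_expSet] at *
    omega
  obtain ⟨A, hA1, hA2, hA3⟩ := nested_basis v (expSet (Fin r)) hmono d
  replace hA3 : ∀ e ≤ d, Module.finrank ℂ (Submodule.span ℂ
      (v '' (expSet (Fin r) e : Set (Fin r →₀ ℕ)))) ≤ (A ∩ expSet (Fin r) e).card := by
    intro e he
    convert hA3 e he
  have hrank : ∀ e ≤ d, min (r * n) ((e + r - 1).choose r) ≤
      Module.finrank ℂ (Submodule.span ℂ (v '' (expSet (Fin r) e : Set (Fin r →₀ ℕ)))) := by
    intro e he
    have h1 := LinearMap.finrank_range_add_finrank_ker (G.domRestrict (restrictTotalDegree (Fin r) ℂ e))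
    have h2 : LinearMap.range (G.domRestrict (restrictTotalDegree (Fin r) ℂ e)) =
        Submodule.span ℂ (v '' (expSet (Fin r) e : Set (Fin r →₀ ℕ))) := by
      rw [LinearMap.range_domRestrict, mem_restrict_iff, restrictSupport_eq_span,
        Submodule.map_span, Set.image_image]
    have h3 : Module.finrank ℂ (LinearMap.ker (G.domRestrict (restrictTotalDegree (Fin r) ℂ e)))
        = Module.finrank ℂ (vanSub p e) := by
      have : vanSub p e = restrictTotalDegree (Fin r) ℂ e ⊓ LinearMap.ker G := by
        unfold vanSub
        congr 1
        ext f
        simp only [Submodule.mem_iInf, LinearMap.mem_ker]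
        constructor
        · intro h
          ext ij
          rw [hG, ← gradAt_apply, h]; rfl
        · intro h i
          ext j
          rw [gradAt_apply, ← hG f (i, j), h]; rfl
      rw [this, ← Submodule.map_comap_subtype, Submodule.finrank_map_subtype_eq]
      rfl
    rw [h2, h3, finrank_restrict, Fintype.card_fin] at h1
    have := hp e he
    omega
  have hcard : A.card = r * n := by
    apply le_antisymm
    · have := LinearIndependent.fintype_card_le_finrank hA2
      simp at this
      rw [mul_comm]
      exact this
    · have h1 := (hrank d le_rfl).trans (hA3 d le_rfl)
      rw [min_eq_left hd, Finset.inter_eq_left.2 hA1] at h1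
      exact h1
  refine ⟨p, A, hcard, ?_, ?_⟩
  · have h1 : ∀ a ∈ A, ∑ j, a j = ∑ e ∈ Finset.range d, if e < ∑ j, a j then 1 else 0 := by
      intro a ha
      have := (mem_expSet _ _).1 (hA1 ha)
      rw [← Finset.sum_filter, ← Finset.card_eq_sum_ones]
      have : (Finset.range d).filter (fun e => e < ∑ j, a j) = Finset.range (∑ j, a j) := by
        ext e
        simp only [Finset.mem_filter, Finset.mem_range]
        omega
      rw [this, Finset.card_range]
    rw [Finset.sum_congr rfl h1, Finset.sum_comm]
    apply Finset.sum_le_sum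
    intro e he
    rw [Finset.mem_range] at he
    rw [← Finset.sum_filter, ← Finset.card_eq_sum_ones]
    have h2 := (hrank e he.le).trans (hA3 e he.le)
    have h3 : (A.filter (fun a => e < ∑ j, a j)) = A \ (A ∩ expSet (Fin r) e) := by
      ext a
      simp only [Finset.mem_filter, Finset.mem_sdiff, Finset.mem_inter, mem_expSet]
      constructor
      · rintro ⟨h, h'⟩; exact ⟨h, fun h'' => by omega⟩
      · rintro ⟨h, h'⟩; exact ⟨h, by by_contra hc; exact h' ⟨h, by omega⟩⟩
    rw [h3, Finset.card_sdiff_of_subset Finset.inter_subset_left, hcard]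
    omega
  · have : (fun (a : A) (ij : Fin n × Fin r) =>
        eval (p ij.1) (pderiv ij.2 (monomial a.1 (1 : ℂ)))) = fun a : A => v a.1 := by
      ext a ij
      exact (hG _ _).symm
    rw [this]
    exact hA2


end Combin


section GenFin
open MvPolynomial

lemma chain_rule {κ : Type} [Fintype κ] (T : κ → MvPolynomial κ ℂ) (P : MvPolynomial κ ℂ) (k : κ) :
    pderiv k (aeval T P) = ∑ a, aeval T (pderiv a P) * pderiv k (T a) := by
  induction P using MvPolynomial.induction_on with
  | C c => simp
  | add p q hp hq => simp only [map_add, hp, hq, add_mul, Finset.sum_add_distrib]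
  | mul_X p i hp =>
    rw [map_mul, pderiv_mul, hp, aeval_X, Finset.sum_mul]
    have h1 : ∀ a, aeval T (pderiv a (p * X i)) * pderiv k (T a)
        = aeval T (pderiv a p) * pderiv k (T a) * T i
          + aeval T p * (aeval T (pderiv a (X i : MvPolynomial κ ℂ)) * pderiv k (T a)) := by
      intro a
      rw [pderiv_mul, map_add, map_mul, map_mul, aeval_X]
      ring
    rw [Finset.sum_congr rfl (fun a _ => h1 a), Finset.sum_add_distrib, ← Finset.mul_sum]
    congr 2
    rw [Finset.sum_eq_single i]
    · rw [pderiv_X_self, map_one, one_mul]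
    · intro b _ hb
      rw [pderiv_X_of_ne hb.symm, map_zero, zero_mul]
    · simp

lemma eq_C_of_pderiv_zero {κ : Type} (P : MvPolynomial κ ℂ) (h : ∀ a, pderiv a P = 0) :
    P = C (P.coeff 0) := by
  ext b
  rw [coeff_C]
  split_ifs with hb
  · rw [hb]
  · obtain ⟨i, hi⟩ : ∃ i, b i ≠ 0 := by
      by_contra hcon
      push Not at hcon
      exact hb (Finsupp.ext fun i => (hcon i).symm)
    have h1 := coeff_pderiv (i := i) P (b - Finsupp.single i 1)
    rw [h i, coeff_zero, Finsupp.sub_add_single_one_cancel hi] at h1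
    refine (mul_eq_zero.1 h1.symm).resolve_right ?_
    exact Nat.cast_add_one_ne_zero _

lemma totalDegree_pderiv_le {κ : Type} (P : MvPolynomial κ ℂ) (N : ℕ) (h : P.totalDegree ≤ N + 1)
    (a : κ) : (pderiv a P).totalDegree ≤ N := by
  rw [totalDegree, Finset.sup_le_iff]
  intro b hb
  rw [mem_support_iff, coeff_pderiv] at hb
  have h1 := le_totalDegree (mem_support_iff.2 (left_ne_zero_of_mul hb))
  rw [Finsupp.sum_add_index' (by simp) (by simp), Finsupp.sum_single_index rfl] at h1
  omega

lemma algIndep_of_jac {κ : Type} [Fintype κ] [DecidableEq κ] (T : κ → MvPolynomial κ ℂ)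
    (hJ : (Matrix.of fun a k => pderiv k (T a)).det ≠ 0) : AlgebraicIndependent ℂ T := by
  rw [algebraicIndependent_iff]
  have main : ∀ N (P : MvPolynomial κ ℂ), P.totalDegree ≤ N → aeval T P = 0 → P = 0 := by
    intro N
    have fin : ∀ P : MvPolynomial κ ℂ, P = C (P.coeff 0) → aeval T P = 0 → P = 0 := by
      intro P hP h0
      rw [hP, aeval_C, MvPolynomial.algebraMap_eq, C_eq_zero] at h0
      rw [hP, h0, C_0]
    induction N with
    | zero =>
      intro P hP
      exact fin P (totalDegree_eq_zero_iff_eq_C.1 (by omega))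
    | succ N ih =>
      intro P hP h0
      refine fin P (eq_C_of_pderiv_zero P ?_) h0
      have hv : (fun a => aeval T (pderiv a P)) = 0 := by
        apply Matrix.eq_zero_of_vecMul_eq_zero hJ
        ext1 k
        have := chain_rule T P k
        rw [h0, map_zero] at this
        exact this.symm
      intro a
      exact ih _ (totalDegree_pderiv_le P N hP a) (congrFun hv a)
  exact fun P hP => main _ P le_rfl hP

lemma generic_finite {κ : Type} [Fintype κ] [DecidableEq κ] (T : κ → MvPolynomial κ ℂ)
    (hJ : (Matrix.of fun a k => pderiv k (T a)).det ≠ 0) :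
    ∃ (Q : MvPolynomial κ ℂ) (B : ℕ), Q ≠ 0 ∧ ∀ τ : κ → ℂ,
      {p : κ → ℂ | eval p Q ≠ 0 ∧ ∀ a, eval p (T a) = τ a}.encard ≤ B := by
  have hT := algIndep_of_jac T hJ
  have hTB : IsTranscendenceBasis ℂ T := hT.isTranscendenceBasis_of_trdeg_le_of_finite (by simp)
  have halg := hTB.isAlgebraic
  have hk : ∀ k : κ, ∃ P : Polynomial (Algebra.adjoin ℂ (Set.range T)), P ≠ 0 ∧
      Polynomial.aeval (X k : MvPolynomial κ ℂ) P = 0 := fun k => halg.isAlgebraic (X k)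
  choose P hP0 hP using hk
  refine ⟨∏ k, ((P k).leadingCoeff : MvPolynomial κ ℂ), ∏ k, (P k).natDegree, ?_, ?_⟩
  · rw [Finset.prod_ne_zero_iff]
    intro k _ h
    exact hP0 k (Polynomial.leadingCoeff_eq_zero.1 (Subtype.ext h))
  intro τ
  by_cases hne : {p : κ → ℂ | eval p (∏ k, ((P k).leadingCoeff : MvPolynomial κ ℂ)) ≠ 0 ∧
      ∀ a, eval p (T a) = τ a}.Nonempty
  swap
  · rw [Set.not_nonempty_iff_eq_empty] at hne
    rw [hne]; simp
  obtain ⟨q, hq, hqT⟩ := hne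
  rw [map_prod, Finset.prod_ne_zero_iff] at hq
  let ev : (κ → ℂ) → (Algebra.adjoin ℂ (Set.range T)) →+* ℂ := fun p =>
    (eval p).comp (Algebra.adjoin ℂ (Set.range T)).val.toRingHom
  have hev : ∀ p : κ → ℂ, (∀ a, eval p (T a) = τ a) → ev p = ev q := by
    intro p hp
    have hle : Algebra.adjoin ℂ (Set.range T) ≤ AlgHom.equalizer (aeval p) (aeval q) := by
      rw [Algebra.adjoin_le_iff]
      rintro _ ⟨a, rfl⟩
      change aeval p (T a) = aeval q (T a)
      rw [aeval_eq_eval, aeval_eq_eval]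
      exact (hp a).trans (hqT a).symm
    ext y
    have := hle y.2
    change aeval p y.1 = aeval q y.1 at this
    rw [aeval_eq_eval, aeval_eq_eval] at this
    exact this
  let R : κ → Polynomial ℂ := fun k => (P k).map (ev q)
  have hR0 : ∀ k, R k ≠ 0 := by
    intro k h
    have := congrArg (fun g => g.coeff (P k).natDegree) h
    simp only [R, Polynomial.coeff_map, Polynomial.coeff_zero] at this
    exact hq k (Finset.mem_univ _) this
  have hsub : {p : κ → ℂ | eval p (∏ k, ((P k).leadingCoeff : MvPolynomial κ ℂ)) ≠ 0 ∧
      ∀ a, eval p (T a) = τ a} ⊆ (Fintype.piFinset fun k => (R k).roots.toFinset : Finset (κ → ℂ)) := by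
    rintro p ⟨-, hpT⟩
    rw [Finset.mem_coe, Fintype.mem_piFinset]
    intro k
    rw [Multiset.mem_toFinset, Polynomial.mem_roots (hR0 k), Polynomial.IsRoot]
    simp only [R]
    rw [← hev p hpT, Polynomial.eval_map]
    have h1 := congrArg (eval p) (hP k)
    rw [map_zero, Polynomial.aeval_def, Polynomial.hom_eval₂, eval_X] at h1
    exact h1
  refine (Set.encard_le_encard hsub).trans ?_
  rw [Set.encard_coe_eq_coe_finsetCard, Fintype.card_piFinset]
  norm_cast
  apply Finset.prod_le_prod' 
  intro k _
  exact (Multiset.toFinset_card_le _).trans ((Polynomial.card_roots' _).trans (Polynomial.natDegree_map_le))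

end GenFin

section Combine
open MvPolynomial

lemma eval_pderiv_T {r n : ℕ} (a : Fin r →₀ ℕ) (p : Fin n × Fin r → ℂ) (ij : Fin n × Fin r) :
    eval p (pderiv ij (∑ i : Fin n, rename (fun j => (i, j)) (monomial a (1 : ℂ))))
      = eval (fun j => p (ij.1, j)) (pderiv ij.2 (monomial a (1 : ℂ))) := by
  rw [map_sum, map_sum, Finset.sum_eq_single ij.1]
  · have h := pderiv_rename (f := fun j : Fin r => (ij.1, j))
      (fun x y h => (Prod.mk.inj h).2) ij.2 (monomial a (1 : ℂ))
    rw [Prod.mk.eta] at h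
    rw [h, eval_rename]
    rfl
  · intro i _ hi
    rw [pderiv_eq_zero_of_notMem_vars, map_zero]
    intro hmem
    have := vars_rename (fun j : Fin r => (i, j)) (monomial a (1 : ℂ)) hmem
    simp only [Finset.mem_image] at this
    obtain ⟨j, _, hj⟩ := this
    exact hi (by rw [← hj])
  · simp

lemma exists_AQ {r : ℕ} (hr : 0 < r) (n d : ℕ) (hd : r * n ≤ (d + r - 1).choose r) :
    ∃ (A : Finset (Fin r →₀ ℕ)) (Q : MvPolynomial (Fin n × Fin r) ℂ) (B : ℕ),
      ∑ a ∈ A, ∑ j, a j ≤ ∑ e ∈ Finset.range d, (r * n - (e + r - 1).choose r) ∧ Q ≠ 0 ∧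
      ∀ τ : A → ℂ, {p : Fin n × Fin r → ℂ | eval p Q ≠ 0 ∧
        ∀ a : A, ∑ i, ∏ j, p (i, j) ^ (a.1 j) = τ a}.encard ≤ B := by
  obtain ⟨p, A, hcard, hsum, hli⟩ := exists_exponents hr n d hd
  have hc : Fintype.card (Fin n × Fin r) = Fintype.card A := by
    simp [hcard, mul_comm]
  let e : Fin n × Fin r ≃ A := Fintype.equivOfCardEq hc
  let T : Fin n × Fin r → MvPolynomial (Fin n × Fin r) ℂ := fun k =>
    ∑ i : Fin n, rename (fun j => (i, j)) (monomial (e k).1 (1 : ℂ))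
  have hJ : (Matrix.of fun a k => pderiv k (T a)).det ≠ 0 := by
    intro h
    have h1 := congrArg (eval (fun ij : Fin n × Fin r => p ij.1 ij.2)) h
    rw [RingHom.map_det, map_zero] at h1
    have h2 : (eval (fun ij : Fin n × Fin r => p ij.1 ij.2)).mapMatrix (Matrix.of fun a k => pderiv k (T a))
        = Matrix.of (fun (a : Fin n × Fin r) (ij : Fin n × Fin r) =>
          eval (p ij.1) (pderiv ij.2 (monomial (e a).1 (1 : ℂ)))) := by
      ext a k
      exact eval_pderiv_T _ _ _
    rw [h2] at h1
    have hli2 := hli.comp e e.injective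
    have hu := Matrix.linearIndependent_rows_iff_isUnit.1 (show LinearIndependent ℂ (Matrix.row (Matrix.of (fun (a : Fin n × Fin r) (ij : Fin n × Fin r) =>
          eval (p ij.1) (pderiv ij.2 (monomial (e a).1 (1 : ℂ)))))) from hli2)
    rw [Matrix.isUnit_iff_isUnit_det, h1] at hu
    exact not_isUnit_zero hu
  obtain ⟨Q, B, hQ, hB⟩ := generic_finite T hJ
  refine ⟨A, Q, B, hsum, hQ, fun τ => ?_⟩
  refine le_trans (Set.encard_le_encard ?_) (hB (fun k => τ (e k)))
  rintro q ⟨hq1, hq2⟩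
  refine ⟨hq1, fun k => ?_⟩
  rw [← hq2 (e k)]
  simp only [T, map_sum]
  refine Finset.sum_congr rfl fun i _ => ?_
  rw [eval_rename, eval_monomial, one_mul, Finsupp.prod_fintype _ _ (by simp)]
  rfl

end Combine

section Grid
open MvPolynomial

lemma totalDegree_aeval_lin {κ : Type} (L : κ → MvPolynomial κ ℂ) (hL : ∀ k, (L k).totalDegree ≤ 1)
    (Q : MvPolynomial κ ℂ) : (aeval L Q).totalDegree ≤ Q.totalDegree := by
  rw [aeval_def, eval₂_eq]
  refine totalDegree_finsetSum_le fun b hb => ?_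
  refine le_trans (totalDegree_mul _ _) ?_
  rw [MvPolynomial.algebraMap_eq, totalDegree_C, zero_add]
  refine le_trans (totalDegree_finsetProd _ _) (le_trans ?_ (le_totalDegree hb))
  refine Finset.sum_le_sum fun i _ => ?_
  refine le_trans (totalDegree_pow _ _) ?_
  calc b i * (L i).totalDegree ≤ b i * 1 := Nat.mul_le_mul_left _ (hL i)
    _ = b i := mul_one _

lemma exists_grid {n r : ℕ} (Q : MvPolynomial (Fin n × Fin r) ℂ) (hQ : Q ≠ 0)
    (M : Matrix (Fin n) (Fin n) ℂ) (hM : IsUnit M) :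
    ∃ t : Fin n × Fin r → ℕ, (∀ k, t k ≤ Q.totalDegree) ∧
      eval (fun ij => ∑ k, M ij.1 k * (t (k, ij.2) : ℂ)) Q ≠ 0 := by
  by_contra hcon
  push Not at hcon
  let L : Fin n × Fin r → MvPolynomial (Fin n × Fin r) ℂ := fun ij =>
    ∑ k, C (M ij.1 k) * X (k, ij.2)
  have hL : ∀ ij, (L ij).totalDegree ≤ 1 := by
    intro ij
    refine totalDegree_finsetSum_le fun k _ => ?_
    refine le_trans (totalDegree_mul _ _) ?_
    rw [totalDegree_C, zero_add, totalDegree_X]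
  have hev : ∀ x : Fin n × Fin r → ℂ, eval x (aeval L Q) =
      eval (fun ij => ∑ k, M ij.1 k * x (k, ij.2)) Q := by
    intro x
    have h1 : (aeval x).comp (aeval L) = (aeval (fun ij => ∑ k, M ij.1 k * x (k, ij.2)) :
        MvPolynomial (Fin n × Fin r) ℂ →ₐ[ℂ] ℂ) := by
      ext ij
      simp [L]
    have h2 := DFunLike.congr_fun h1 Q
    rw [AlgHom.comp_apply, aeval_eq_eval, aeval_eq_eval] at h2
    exact h2
  have hF : aeval L Q = 0 := by
    apply eq_zero_of_eval_zero_at_prod_finset _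
      (fun _ => (Finset.range (Q.totalDegree + 1)).image (fun m : ℕ => (m : ℂ)))
    · intro i
      rw [Finset.card_image_of_injective _ Nat.cast_injective, Finset.card_range]
      exact Nat.lt_succ_of_le ((degreeOf_le_totalDegree _ _).trans (totalDegree_aeval_lin L hL Q))
    · intro x hx
      have : ∀ i, ∃ m : ℕ, m ≤ Q.totalDegree ∧ (m : ℂ) = x i := by
        intro i
        have := hx i
        rw [Finset.mem_image] at this
        obtain ⟨m, hm, hmx⟩ := this
        exact ⟨m, Nat.lt_succ_iff.1 (Finset.mem_range.1 hm), hmx⟩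
      choose t ht htx using this
      rw [hev]
      have := hcon t ht
      simp only [htx] at this
      exact this
  apply hQ
  apply MvPolynomial.funext
  intro y
  rw [map_zero]
  have h1 := hev (fun kj => ∑ i, M⁻¹ kj.1 i * y (i, kj.2))
  rw [hF, map_zero] at h1
  rw [h1]
  congr 2
  ext ij
  have hMM : M * M⁻¹ = 1 := Matrix.mul_nonsing_inv M ((Matrix.isUnit_iff_isUnit_det _).1 hM)
  have h2 : ∑ k, M ij.1 k * ∑ i, M⁻¹ k i * y (i, ij.2) = ((M * M⁻¹).mulVec (fun i => y (i, ij.2))) ij.1 := by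
    rw [← Matrix.mulVec_mulVec]
    rfl
  simp only
  rw [h2, hMM, Matrix.one_mulVec]

end Grid

section PerField
open MvPolynomial

lemma embMatrix_isUnit {n : ℕ} (K : Type) [Field K] [NumberField K] (v : Fin n → K)
    (hn : Module.finrank ℚ K = n) (hv : LinearIndependent ℚ v) (s : Fin n ≃ (K →ₐ[ℚ] ℂ)) :
    IsUnit (Matrix.of fun i k => s i (v k) : Matrix (Fin n) (Fin n) ℂ) := by
  rw [← Matrix.linearIndependent_rows_iff_isUnit, Fintype.linearIndependent_iff]
  intro g hg
  have hspan := hv.span_eq_top_of_card_eq_finrank' (by simp [hn])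
  have hzero : ∀ x : K, ∑ i, g i * s i x = 0 := by
    intro x
    have hx : x ∈ Submodule.span ℚ (Set.range v) := by rw [hspan]; trivial
    induction hx using Submodule.span_induction with
    | mem x hx =>
      obtain ⟨k, rfl⟩ := hx
      have := congrFun hg k
      simpa [Finset.sum_apply] using this
    | zero => simp
    | add x y _ _ hx hy => simp [mul_add, Finset.sum_add_distrib, hx, hy]
    | smul c x _ hx =>
      have : ∀ i, g i * s i (c • x) = (c : ℂ) * (g i * s i x) := by
        intro i
        rw [Rat.smul_def, map_mul, map_ratCast]
        ring
      rw [Finset.sum_congr rfl (fun i _ => this i), ← Finset.mul_sum, hx, mul_zero]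
  have hli := linearIndependent_monoidHom K ℂ
  have hli2 := hli.comp (fun i : Fin n => ((s i : K →ₐ[ℚ] ℂ) : K →* ℂ)) (by
    intro i j hij
    apply s.injective
    ext x
    exact DFunLike.congr_fun hij x)
  rw [Fintype.linearIndependent_iff] at hli2
  apply hli2 g
  ext x
  simpa [Finset.sum_apply] using hzero x

lemma per_field_abs (n r : ℕ) (hn : 0 < n) (hr : 0 < r) (Q : MvPolynomial (Fin n × Fin r) ℂ)
    (hQ : Q ≠ 0) : ∃ C : ℝ, 1 ≤ C ∧ ∀ (K : Type) [Field K] [NumberField K] (ι : K →ₐ[ℚ] ℂ),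
      Module.finrank ℚ K = n →
      ∃ p : Fin n × Fin r → ℂ, eval p Q ≠ 0 ∧
        (∃ α : K, ι α = p (⟨0, hn⟩, ⟨0, hr⟩) ∧ IntermediateField.adjoin ℚ {α} = ⊤) ∧
        ∀ a : Fin r →₀ ℕ, ∃ z : ℤ, ∑ i, ∏ j, p (i, j) ^ (a j) = (z : ℂ) ∧
          |(z : ℝ)| ≤ n * (C * |(discr K : ℝ)| ^ ((1 : ℝ) / n)) ^ (∑ j, a j) := by
  obtain ⟨C, hC0, hC⟩ := exists_small_basis n hn
  set i0 : Fin n := ⟨0, hn⟩ with hi0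
  set j0 : Fin r := ⟨0, hr⟩ with hj0
  let Q2 : MvPolynomial (Fin n × Fin r) ℂ :=
    Q * ∏ i ∈ Finset.univ.erase i0, (X (i0, j0) - X (i, j0))
  have hQ2 : Q2 ≠ 0 := by
    refine mul_ne_zero hQ (Finset.prod_ne_zero_iff.2 fun i hi h => ?_)
    have h1 := sub_eq_zero.1 h
    have h2 := X_injective h1
    exact (Finset.mem_erase.1 hi).1 (Prod.mk.inj h2).1.symm
  refine ⟨n * (Q2.totalDegree * C) + 1, ?_, ?_⟩
  · have : 0 ≤ n * (Q2.totalDegree * C) := by positivity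
    linarith
  intro K _ _ ι hK
  obtain ⟨v, hvli, hvb⟩ := hC K hK
  have hcard : Fintype.card (Fin n) = Fintype.card (K →ₐ[ℚ] ℂ) := by
    rw [AlgHom.card, hK, Fintype.card_fin]
  let s0 : Fin n ≃ (K →ₐ[ℚ] ℂ) := Fintype.equivOfCardEq hcard
  let s : Fin n ≃ (K →ₐ[ℚ] ℂ) := (Equiv.swap i0 (s0.symm ι)).trans s0
  have hs0 : s i0 = ι := by simp [s]
  obtain ⟨t, htN, ht⟩ := exists_grid Q2 hQ2 _ (embMatrix_isUnit K (fun k => (v k : K)) hK hvli s)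
  let α : Fin r → 𝓞 K := fun j => ∑ k, (t (k, j) : 𝓞 K) * v k
  let p : Fin n × Fin r → ℂ := fun ij => s ij.1 (α ij.2 : K)
  have hp : (fun ij : Fin n × Fin r => ∑ k, (Matrix.of fun i k => s i (v k : K)) ij.1 k * (t (k, ij.2) : ℂ)) = p := by
    ext ij
    simp only [p, α, Matrix.of_apply]
    have h1 : ((∑ k, (t (k, ij.2) : 𝓞 K) * v k : 𝓞 K) : K) = ∑ k, (t (k, ij.2) : K) * (v k : K) := by
      simp
    rw [h1, map_sum]
    refine Finset.sum_congr rfl fun k _ => ?_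
    rw [map_mul, map_natCast, mul_comm]
  rw [hp] at ht
  simp only [Q2, map_mul, map_prod] at ht
  have ht1 := left_ne_zero_of_mul ht
  have ht2 := right_ne_zero_of_mul ht
  rw [Finset.prod_ne_zero_iff] at ht2
  refine ⟨p, ht1, ?_, ?_⟩
  · have hprim : IntermediateField.adjoin ℚ {(α j0 : K)} = ⊤ := by
      rw [Field.primitive_element_iff_algHom_eq_of_eval ℚ ℂ (fun x => IsAlgClosed.splits _) _ ι]
      intro ψ hψ
      by_contra hne
      have hi : s.symm ψ ≠ i0 := by
        intro h
        apply hne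
        rw [← hs0, ← h, Equiv.apply_symm_apply]
      apply ht2 (s.symm ψ) (Finset.mem_erase.2 ⟨hi, Finset.mem_univ _⟩)
      rw [map_sub, eval_X, eval_X]
      simp only [p, hs0, Equiv.apply_symm_apply]
      rw [hψ, sub_self]
    exact ⟨α j0, by simp only [p, hs0], hprim⟩
  · intro a
    have hpb : ∀ ij, ‖p ij‖ ≤ (n * (Q2.totalDegree * C) + 1) * |(discr K : ℝ)| ^ ((1 : ℝ) / n) := by
      intro ij
      have h0 : 0 ≤ |(discr K : ℝ)| ^ ((1 : ℝ) / n) := by positivity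
      have h1 : ‖p ij‖ ≤ ∑ k : Fin n, Q2.totalDegree * (C * |(discr K : ℝ)| ^ ((1 : ℝ) / n)) := by
        rw [← hp]
        refine (norm_sum_le _ _).trans (Finset.sum_le_sum fun k _ => ?_)
        rw [norm_mul, mul_comm, Complex.norm_natCast]
        refine mul_le_mul (by exact_mod_cast htN _) ?_ (norm_nonneg _) (by positivity)
        exact hvb k (s ij.1 : K →+* ℂ)
      rw [Finset.sum_const, Finset.card_univ, Fintype.card_fin, nsmul_eq_mul] at h1
      nlinarith
    refine ⟨Algebra.trace ℤ (𝓞 K) (∏ j, α j ^ a j), ?_⟩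
    have heq : ∑ i, ∏ j, p (i, j) ^ (a j) = ((Algebra.trace ℤ (𝓞 K) (∏ j, α j ^ a j) : ℤ) : ℂ) := by
      have h1 := trace_eq_sum_embeddings (K := ℚ) (L := K) ℂ (x := ((∏ j, α j ^ a j : 𝓞 K) : K))
      rw [← Algebra.coe_trace_int] at h1
      rw [← s.sum_comp] at h1
      have h2 : (algebraMap ℚ ℂ) ((Algebra.trace ℤ (𝓞 K) (∏ j, α j ^ a j) : ℤ) : ℚ) = ((Algebra.trace ℤ (𝓞 K) (∏ j, α j ^ a j) : ℤ) : ℂ) := by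
        simp
      rw [← h2, h1]
      refine Finset.sum_congr rfl fun i _ => ?_
      simp only [p, map_prod, map_pow]
    refine ⟨heq, ?_⟩
    rw [← Complex.norm_intCast, ← heq]
    refine (norm_sum_le _ _).trans ?_
    have : ∀ i ∈ (Finset.univ : Finset (Fin n)), ‖∏ j, p (i, j) ^ (a j)‖ ≤
        ((n * (Q2.totalDegree * C) + 1) * |(discr K : ℝ)| ^ ((1 : ℝ) / n)) ^ (∑ j, a j) := by
      intro i _
      rw [norm_prod, ← Finset.prod_pow_eq_pow_sum]
      refine Finset.prod_le_prod (fun _ _ => norm_nonneg _) fun j _ => ?_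
      rw [norm_pow]
      exact pow_le_pow_left₀ (norm_nonneg _) (hpb _) _
    refine (Finset.sum_le_sum this).trans ?_
    rw [Finset.sum_const, Finset.card_univ, Fintype.card_fin, nsmul_eq_mul]

end PerField

section Final
open MvPolynomial

lemma per_field (n r : ℕ) (hn : 0 < n) (hr : 0 < r) (Q : MvPolynomial (Fin n × Fin r) ℂ)
    (hQ : Q ≠ 0) : ∃ C : ℝ, 1 ≤ C ∧ ∀ K : IntermediateField ℚ ℂ, Module.finrank ℚ K = n →
      ∃ p : Fin n × Fin r → ℂ, eval p Q ≠ 0 ∧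
        K = IntermediateField.adjoin ℚ {p (⟨0, hn⟩, ⟨0, hr⟩)} ∧
        ∀ a : Fin r →₀ ℕ, ∃ z : ℤ, ∑ i, ∏ j, p (i, j) ^ (a j) = (z : ℂ) ∧
          |(z : ℝ)| ≤ n * (C * (absDiscC K : ℝ) ^ ((1 : ℝ) / n)) ^ (∑ j, a j) := by
  obtain ⟨C, hC1, hC⟩ := per_field_abs n r hn hr Q hQ
  refine ⟨C, hC1, fun K hK => ?_⟩
  have hfd : FiniteDimensional ℚ K := Module.finite_of_finrank_pos (by omega)
  have hnf : NumberField K := ⟨⟩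
  have hdisc : (absDiscC K : ℝ) = |(discr K : ℝ)| := by
    unfold absDiscC
    rw [dif_pos hfd, Nat.cast_natAbs, Int.cast_abs]
  obtain ⟨p, hp1, ⟨α, hα, hgen⟩, hp3⟩ := hC K (K.val : K →+* ℂ).toRatAlgHom hK
  refine ⟨p, hp1, ?_, by rw [hdisc]; exact hp3⟩
  rw [← hα]
  change K = IntermediateField.adjoin ℚ {(α : ℂ)}
  apply le_antisymm
  · intro x hx
    let F : Subfield K := (IntermediateField.adjoin ℚ {(α : ℂ)}).toSubfield.comap (K.val : K →+* ℂ)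
    let F2 := Subfield.toIntermediateField (K := ℚ) F (fun q => by
      rw [eq_ratCast]; exact SubfieldClass.ratCast_mem F q)
    have hle : IntermediateField.adjoin ℚ {α} ≤ F2 := by
      rw [IntermediateField.adjoin_simple_le_iff]
      change (α : ℂ) ∈ IntermediateField.adjoin ℚ {(α : ℂ)}
      exact IntermediateField.mem_adjoin_simple_self _ _
    rw [hgen] at hle
    exact hle (x := ⟨x, hx⟩) trivial
  · rw [IntermediateField.adjoin_simple_le_iff]
    exact α.2

lemma final_count (n r : ℕ) (hn : 0 < n) (hr : 0 < r) (d : ℕ) (hd : r * n ≤ (d + r - 1).choose r)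
    (E : ℝ) (hE : ((∑ e ∈ Finset.range d, (r*n - (e+r-1).choose r) : ℕ) : ℝ) ≤ n * E) :
    ∃ a : ℝ, ∀ X : ℝ, 1 ≤ X →
      (Nat.card {K : IntermediateField ℚ ℂ //
          Module.finrank ℚ K = n ∧ (absDiscC K : ℝ) ≤ X} : ℝ) ≤ a * X ^ E := by
  obtain ⟨A, Q, B, hA, hQ, hB⟩ := exists_AQ hr n d hd
  obtain ⟨C, hC1, hC⟩ := per_field n r hn hr Q hQ
  have hn1 : (1 : ℝ) ≤ n := by exact_mod_cast hn
  refine ⟨B * ∏ a ∈ A, (3 * (n * C ^ (∑ j, a j))), fun X hX => ?_⟩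
  have hnonneg : 0 ≤ (B * ∏ a ∈ A, (3 * (n * C ^ (∑ j, a j))) : ℝ) * X ^ E := by positivity
  rcases finite_or_infinite {K : IntermediateField ℚ ℂ //
          Module.finrank ℚ K = n ∧ (absDiscC K : ℝ) ≤ X} with hfin | hinf
  swap
  · rw [Nat.card_eq_zero_of_infinite]; simpa using hnonneg
  have hft := Fintype.ofFinite {K : IntermediateField ℚ ℂ //
          Module.finrank ℚ K = n ∧ (absDiscC K : ℝ) ≤ X}
  rw [Nat.card_eq_fintype_card]
  choose p hp1 hp2 hp3 using fun K : {K : IntermediateField ℚ ℂ //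
          Module.finrank ℚ K = n ∧ (absDiscC K : ℝ) ≤ X} => hC K.1 K.2.1
  choose z hz1 hz2 using hp3
  let Y : A → ℝ := fun a => n * (C * X ^ ((1 : ℝ) / n)) ^ (∑ j, a.1 j)
  have hX1 : 1 ≤ X ^ ((1 : ℝ) / n) := Real.one_le_rpow hX (by positivity)
  have hY1 : ∀ a, 1 ≤ Y a := by
    intro a
    have h1 : 1 ≤ C * X ^ ((1 : ℝ) / n) := one_le_mul_of_one_le_of_one_le hC1 hX1
    exact one_le_mul_of_one_le_of_one_le hn1 (one_le_pow₀ h1)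
  have hzY : ∀ K (a : A), |(z K a.1 : ℝ)| ≤ Y a := by
    intro K a
    refine (hz2 K a.1).trans ?_
    have : (absDiscC K.1 : ℝ) ^ ((1 : ℝ) / n) ≤ X ^ ((1 : ℝ) / n) :=
      Real.rpow_le_rpow (by positivity) K.2.2 (by positivity)
    simp only [Y]
    gcongr
  let t : Finset (A → ℤ) := Fintype.piFinset fun a => Finset.Icc (-⌊Y a⌋) ⌊Y a⌋
  have hmaps : ∀ K ∈ (Finset.univ : Finset {K : IntermediateField ℚ ℂ //
          Module.finrank ℚ K = n ∧ (absDiscC K : ℝ) ≤ X}), (fun a : A => z K a.1) ∈ t := by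
    intro K _
    rw [Fintype.mem_piFinset]
    intro a
    have h := abs_le.1 (hzY K a)
    rw [Finset.mem_Icc]
    constructor
    · rw [neg_le, Int.le_floor]
      push_cast
      linarith [h.1]
    · rw [Int.le_floor]
      exact h.2
  have hpinj : Function.Injective p := by
    intro K K' h
    apply Subtype.ext
    rw [hp2 K, hp2 K', h]
  have hfib : ∀ b ∈ t, (Finset.univ.filter (fun K => (fun a : A => z K a.1) = b)).card ≤ B := by
    intro b _
    have h1 := hB (fun a => (b a : ℂ))
    have h2 : (((Finset.univ.filter (fun K => (fun a : A => z K a.1) = b)).image p : Finset (Fin n × Fin r → ℂ)) : Set (Fin n × Fin r → ℂ))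
        ⊆ {p : Fin n × Fin r → ℂ | eval p Q ≠ 0 ∧
        ∀ a : A, ∑ i, ∏ j, p (i, j) ^ (a.1 j) = (b a : ℂ)} := by
      intro q hq
      rw [Finset.mem_coe, Finset.mem_image] at hq
      obtain ⟨K, hK, rfl⟩ := hq
      rw [Finset.mem_filter] at hK
      refine ⟨hp1 K, fun a => ?_⟩
      rw [hz1 K a.1, ← hK.2]
    have h3 := (Set.encard_le_encard h2).trans h1
    rw [Set.encard_coe_eq_coe_finsetCard, Finset.card_image_of_injective _ hpinj] at h3
    exact_mod_cast h3
  have hcount := Finset.card_le_mul_card_image_of_maps_to hmaps B hfib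
  rw [Finset.card_univ] at hcount
  have hcount2 : (Fintype.card {K : IntermediateField ℚ ℂ //
          Module.finrank ℚ K = n ∧ (absDiscC K : ℝ) ≤ X} : ℝ) ≤ B * t.card := by exact_mod_cast hcount
  refine hcount2.trans ?_
  rw [mul_assoc]
  refine mul_le_mul_of_nonneg_left ?_ (Nat.cast_nonneg _)
  have ht : (t.card : ℝ) ≤ ∏ a : A, (3 * Y a) := by
    rw [Fintype.card_piFinset, Nat.cast_prod]
    refine Finset.prod_le_prod (fun _ _ => Nat.cast_nonneg _) fun a _ => ?_
    rw [Int.card_Icc]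
    have h0 : 0 ≤ ⌊Y a⌋ := Int.floor_nonneg.2 (by linarith [hY1 a])
    have h1 : (((⌊Y a⌋ + 1 - -⌊Y a⌋).toNat : ℕ) : ℝ) = ((⌊Y a⌋ + 1 - -⌊Y a⌋ : ℤ) : ℝ) := by
      have : (((⌊Y a⌋ + 1 - -⌊Y a⌋).toNat : ℕ) : ℤ) = (⌊Y a⌋ + 1 - -⌊Y a⌋ : ℤ) :=
        Int.toNat_of_nonneg (by omega)
      exact_mod_cast this
    rw [h1]
    push_cast
    linarith [hY1 a, Int.floor_le (Y a)]
  refine ht.trans ?_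
  have hXpos : 0 < X := by linarith
  have hYeq : ∀ a : A, 3 * Y a = (3 * (n * C ^ (∑ j, a.1 j))) * X ^ (((∑ j, a.1 j : ℕ) : ℝ) / n) := by
    intro a
    simp only [Y]
    rw [mul_pow, ← Real.rpow_natCast (X ^ ((1 : ℝ) / n)), ← Real.rpow_mul hXpos.le,
      one_div_mul_eq_div]
    ring
  rw [Finset.prod_congr rfl (fun a _ => hYeq a), Finset.prod_mul_distrib,
    ← Real.rpow_sum_of_pos hXpos,
    Finset.prod_coe_sort A (fun a => (3 * (n * C ^ (∑ j, a j)) : ℝ)),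
    Finset.sum_coe_sort A (fun a => (((∑ j, a j : ℕ) : ℝ) / n)), ← Finset.sum_div]
  refine mul_le_mul_of_nonneg_left ?_ (by positivity)
  apply Real.rpow_le_rpow_of_exponent_le hX
  rw [div_le_iff₀ (by linarith), mul_comm]
  refine le_trans ?_ hE
  exact_mod_cast hA

end Final

theorem count_degree_n_fields_upper (n : ℕ) (hn : 6 ≤ n) :
    ∃ a : ℝ, ∀ X : ℝ, 1 ≤ X →
      (Nat.card {K : IntermediateField ℚ ℂ //
          Module.finrank ℚ K = n ∧ (absDiscC K : ℝ) ≤ X} : ℝ)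
        ≤ a * X ^ (1.564 * Real.log n ^ 2) := by
  obtain ⟨r, d, hr, hd, hE⟩ := numGood n hn
  exact final_count n r (by omega) hr d hd _ hE
end
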